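/- arXiv:1108.5538 — 2 statements merged into one kernel-verified Lean document; each statement's English description precedes it below -/
import Mathlib

section
/- Let K be a Hilbert space, let K₀ : K → L²(ℝⁿ) be a bounded everywhere defined operator with ran K₀ ⊂ H^{3/2}(ℝⁿ), and let α ∈ L^∞(ℝⁿ) satisfy μ({x ∈ ℝⁿ : |α(x)| ≥ ε}) < ∞ for every ε > 0, where μ is the Lebesgue measure on ℝⁿ. Then the operator α K₀ (composition of K₀ with multiplication by α) is compact from K to L²(ℝⁿ). -/
open MeasureTheory Filter Topology

noncomputable section

namespace RobinHS

/-- The boundary `ℝⁿ`, modelled as Euclidean space. -/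
abbrev Bdy (n : ℕ) := EuclideanSpace ℝ (Fin n)

/-- The ambient space `ℝⁿ × ℝ ≅ ℝ^{n+1}`. -/
abbrev Amb (n : ℕ) := Bdy n × ℝ

/-- The open upper half-space `ℝ^{n+1}_+`. -/
def half (n : ℕ) : Set (Amb n) := {x | 0 < x.2}

/-- Lebesgue measure restricted to the half-space. -/
abbrev μplus (n : ℕ) : Measure (Amb n) := volume.restrict (half n)

/-- `L²(ℝ^{n+1}_+)`. -/
abbrev Hplus (n : ℕ) := Lp ℂ 2 (μplus n)

/-- `L²(ℝⁿ)`. -/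
abbrev Hbd (n : ℕ) := Lp ℂ 2 (volume : Measure (Bdy n))

/-- The coordinate directions of `ℝ^{n+1}`. -/
def dirs (n : ℕ) (i : Fin (n + 1)) : Amb n :=
  if h : (i : ℕ) < n then (EuclideanSpace.single ⟨i, h⟩ (1 : ℝ), 0) else (0, 1)

/-- Real-valued test functions compactly supported in `U`. -/
def IsTest (n : ℕ) (U : Set (Amb n)) (φ : Amb n → ℝ) : Prop :=
  ContDiff ℝ (⊤ : ℕ∞) φ ∧ HasCompactSupport φ ∧ tsupport φ ⊆ U

/-- Complex-valued test functions compactly supported in `U`. -/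
def IsTestC (n : ℕ) (U : Set (Amb n)) (φ : Amb n → ℂ) : Prop :=
  ContDiff ℝ (⊤ : ℕ∞) φ ∧ HasCompactSupport φ ∧ tsupport φ ⊆ U

/-- `g` is the weak (distributional) derivative of `f` in direction `v` on `U`. -/
def IsWeakDeriv (n : ℕ) (U : Set (Amb n)) (v : Amb n) (f g : Amb n → ℂ) : Prop :=
  ∀ φ : Amb n → ℝ, IsTest n U φ →
    ∫ x in U, f x * ((fderiv ℝ φ x) v : ℂ) = - ∫ x in U, g x * (φ x : ℂ)

def MemL2 (n : ℕ) (U : Set (Amb n)) (f : Amb n → ℂ) : Prop :=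
  MemLp f 2 (volume.restrict U)

/-- The Sobolev space `H¹(U)`. -/
def MemH1 (n : ℕ) (U : Set (Amb n)) (f : Amb n → ℂ) : Prop :=
  MemL2 n U f ∧ ∀ i : Fin (n + 1), ∃ g, IsWeakDeriv n U (dirs n i) f g ∧ MemL2 n U g

/-- The Sobolev space `H²(U)`. -/
def MemH2 (n : ℕ) (U : Set (Amb n)) (f : Amb n → ℂ) : Prop :=
  MemL2 n U f ∧ ∀ i : Fin (n + 1), ∃ g, IsWeakDeriv n U (dirs n i) f g ∧ MemL2 n U g ∧
    ∀ j : Fin (n + 1), ∃ h, IsWeakDeriv n U (dirs n j) g h ∧ MemL2 n U h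

/-- Finiteness of the Gagliardo seminorm of order `1/2` on `U ⊆ ℝ^{n+1}`. -/
def Gag12 (n : ℕ) (U : Set (Amb n)) (g : Amb n → ℂ) : Prop :=
  Integrable (fun p : Amb n × Amb n => ‖g p.1 - g p.2‖ ^ 2 / ‖p.1 - p.2‖ ^ ((n : ℝ) + 2))
    ((volume.restrict U).prod (volume.restrict U))

/-- The fractional Sobolev space `H^{3/2}(U)` (Sobolev–Slobodeckij description). -/
def MemH32 (n : ℕ) (U : Set (Amb n)) (f : Amb n → ℂ) : Prop :=
  MemL2 n U f ∧ ∀ i : Fin (n + 1), ∃ g, IsWeakDeriv n U (dirs n i) f g ∧ MemL2 n U g ∧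
    Gag12 n U g

/-- The classical Laplacian of a test function. -/
def lapl (n : ℕ) (φ : Amb n → ℝ) (x : Amb n) : ℝ :=
  ∑ i : Fin (n + 1), fderiv ℝ (fun y => fderiv ℝ φ y (dirs n i)) x (dirs n i)

/-- `g = -Δ f` in the weak (distributional) sense on `U`. -/
def IsNegLap (n : ℕ) (U : Set (Amb n)) (f g : Amb n → ℂ) : Prop :=
  ∀ φ : Amb n → ℝ, IsTest n U φ →
    ∫ x in U, f x * (lapl n φ x : ℂ) = - ∫ x in U, g x * (φ x : ℂ)

/-- `b` is the Dirichlet boundary trace `f|_{ℝⁿ}` of `f` (as an `L²(ℝⁿ)` limit). -/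
def HasDTrace (n : ℕ) (f : Amb n → ℂ) (b : Bdy n → ℂ) : Prop :=
  Tendsto (fun t : ℝ => ∫ y : Bdy n, ‖f (y, t) - b y‖ ^ 2) (𝓝[>] (0 : ℝ)) (𝓝 (0 : ℝ))

/-- `b = ∂_ν f|_{ℝⁿ}` is the trace of the normal derivative of `f`, the normal pointing
outwards of the half-space (i.e. downwards). -/
def HasNTrace (n : ℕ) (f : Amb n → ℂ) (b : Bdy n → ℂ) : Prop :=
  ∃ f', IsWeakDeriv n (half n) ((0 : Bdy n), (1 : ℝ)) f f' ∧ HasDTrace n f' (fun y => - b y)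

/-- The Sobolev space `H²₀(ℝ^{n+1}_+)`: `H²`-functions approximable in the `H²`-norm by
smooth functions compactly supported in the open half-space. -/
def MemH20 (n : ℕ) (f : Amb n → ℂ) : Prop :=
  MemH2 n (half n) f ∧
  ∀ ε : ℝ, 0 < ε → ∃ φ : Amb n → ℂ, IsTestC n (half n) φ ∧
    (∫ x in half n, ‖f x - φ x‖ ^ 2) < ε ∧
    (∀ i : Fin (n + 1), ∀ g, IsWeakDeriv n (half n) (dirs n i) f g →
      (∫ x in half n, ‖g x - (fderiv ℝ φ x) (dirs n i)‖ ^ 2) < ε) ∧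
    (∀ i j : Fin (n + 1), ∀ g h, IsWeakDeriv n (half n) (dirs n i) f g →
      IsWeakDeriv n (half n) (dirs n j) g h →
      (∫ x in half n, ‖h x - (fderiv ℝ (fun y => (fderiv ℝ φ y) (dirs n i)) x) (dirs n j)‖ ^ 2) < ε)

/-- Membership in the domain of the Robin Laplacian `A_α`:
`f ∈ H²(ℝ^{n+1}_+)` with `∂_ν f|_{ℝⁿ} = α f|_{ℝⁿ}`. -/
def RobinDom (n : ℕ) (α : Bdy n → ℂ) (f : Amb n → ℂ) : Prop :=
  MemH2 n (half n) f ∧ ∃ b : Bdy n → ℂ, HasDTrace n f b ∧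
    HasNTrace n f (fun y => α y * b y)

/-- The graph relation of the Robin Laplacian `A_α` in `L²(ℝ^{n+1}_+)`: `w = A_α u`. -/
def RobinRel (n : ℕ) (α : Bdy n → ℂ) (u w : Hplus n) : Prop :=
  ∃ f g : Amb n → ℂ, ⇑u =ᵐ[μplus n] f ∧ ⇑w =ᵐ[μplus n] g ∧
    RobinDom n α f ∧ IsNegLap n (half n) f g

/-- The graph relation of the Neumann Laplacian `A_N` in `L²(ℝ^{n+1}_+)`. -/
def NeuRel (n : ℕ) (u w : Hplus n) : Prop :=
  ∃ f g : Amb n → ℂ, ⇑u =ᵐ[μplus n] f ∧ ⇑w =ᵐ[μplus n] g ∧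
    MemH2 n (half n) f ∧ HasNTrace n f (fun _ => 0) ∧ IsNegLap n (half n) f g

/-- Membership in `H^{3/2}_Δ(ℝ^{n+1}_+) = {f ∈ H^{3/2} : Δf ∈ L²}`. -/
def TDom (n : ℕ) (f : Amb n → ℂ) : Prop :=
  MemH32 n (half n) f ∧ ∃ L, IsNegLap n (half n) f L ∧ MemL2 n (half n) L

/-- The graph relation of the operator `T = -Δ` on `H^{3/2}_Δ(ℝ^{n+1}_+)`. -/
def TRel (n : ℕ) (u w : Hplus n) : Prop :=
  ∃ f g : Amb n → ℂ, ⇑u =ᵐ[μplus n] f ∧ ⇑w =ᵐ[μplus n] g ∧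
    TDom n f ∧ IsNegLap n (half n) f g

/-- The graph relation of `T` restricted to `ker Γ₀` (vanishing Neumann trace). -/
def TNeuRel (n : ℕ) (u w : Hplus n) : Prop :=
  ∃ f g : Amb n → ℂ, ⇑u =ᵐ[μplus n] f ∧ ⇑w =ᵐ[μplus n] g ∧
    TDom n f ∧ HasNTrace n f (fun _ => 0) ∧ IsNegLap n (half n) f g

/-- The graph relation of the minimal operator `A = -Δ` on `H²₀(ℝ^{n+1}_+)`. -/
def MinRel (n : ℕ) (u w : Hplus n) : Prop :=
  ∃ f g : Amb n → ℂ, ⇑u =ᵐ[μplus n] f ∧ ⇑w =ᵐ[μplus n] g ∧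
    MemH20 n f ∧ IsNegLap n (half n) f g

/-- `f ∈ ker (T - λ)`. -/
def EigSol (n : ℕ) (lam : ℂ) (f : Amb n → ℂ) : Prop :=
  TDom n f ∧ IsNegLap n (half n) f (fun x => lam * f x)

/-- `α ∈ W^{1,∞}(ℝⁿ)`: bounded with bounded (weak) first-order derivatives,
equivalently bounded and Lipschitz. -/
def IsW1inf (n : ℕ) (α : Bdy n → ℂ) : Prop :=
  (∃ C : ℝ, ∀ x, ‖α x‖ ≤ C) ∧ ∃ L : NNReal, LipschitzWith L α

/-- `‖α‖_∞ = sup_x |α(x)|`. -/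
def supNorm (n : ℕ) (α : Bdy n → ℂ) : ℝ := ⨆ x, ‖α x‖

/-- `γ` is the Poisson operator `γ(λ)` (the `γ`-field): it maps the Neumann trace
`∂_ν f_λ|_{ℝⁿ}` of `f_λ ∈ ker(T - λ)` to `f_λ`. -/
def IsPoissonOp (n : ℕ) (lam : ℂ) (γ : Hbd n →L[ℂ] Hplus n) : Prop :=
  ∀ (Φ : Hbd n) (a : Bdy n → ℂ) (f : Amb n → ℂ),
    ⇑Φ =ᵐ[(volume : Measure (Bdy n))] a → EigSol n lam f → HasNTrace n f a →
      ⇑(γ Φ) =ᵐ[μplus n] f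

/-- `M` is the Neumann-to-Dirichlet map `M(λ)` (the Weyl function): it maps the Neumann
trace of `f_λ ∈ ker(T - λ)` to its Dirichlet trace. -/
def IsNDMap (n : ℕ) (lam : ℂ) (M : Hbd n →L[ℂ] Hbd n) : Prop :=
  ∀ (Φ : Hbd n) (a b : Bdy n → ℂ) (f : Amb n → ℂ),
    ⇑Φ =ᵐ[(volume : Measure (Bdy n))] a → EigSol n lam f → HasNTrace n f a →
      HasDTrace n f b → ⇑(M Φ) =ᵐ[(volume : Measure (Bdy n))] b

/-- `M` is the bounded multiplication operator by `α` in `L²(ℝⁿ)`. -/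
def IsMultOp (n : ℕ) (α : Bdy n → ℂ) (M : Hbd n →L[ℂ] Hbd n) : Prop :=
  ∀ u : Hbd n, ⇑(M u) =ᵐ[(volume : Measure (Bdy n))] fun y => α y * u y

/-! Sobolev spaces on the boundary `ℝⁿ`. -/

def bdirs (n : ℕ) (i : Fin n) : Bdy n := EuclideanSpace.single i (1 : ℝ)

def IsTestB (n : ℕ) (φ : Bdy n → ℝ) : Prop := ContDiff ℝ (⊤ : ℕ∞) φ ∧ HasCompactSupport φ

def IsWeakDerivB (n : ℕ) (v : Bdy n) (f g : Bdy n → ℂ) : Prop :=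
  ∀ φ : Bdy n → ℝ, IsTestB n φ →
    ∫ y, f y * ((fderiv ℝ φ y) v : ℂ) = - ∫ y, g y * (φ y : ℂ)

/-- Finiteness of the Gagliardo seminorm of order `1/2` on `ℝⁿ`. -/
def GagB (n : ℕ) (g : Bdy n → ℂ) : Prop :=
  Integrable (fun p : Bdy n × Bdy n => ‖g p.1 - g p.2‖ ^ 2 / ‖p.1 - p.2‖ ^ ((n : ℝ) + 1))
    ((volume : Measure (Bdy n)).prod (volume : Measure (Bdy n)))

/-- The fractional Sobolev space `H^{3/2}(ℝⁿ)`. -/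
def MemH32B (n : ℕ) (f : Bdy n → ℂ) : Prop :=
  MemLp f 2 (volume : Measure (Bdy n)) ∧
  ∀ i : Fin n, ∃ g, IsWeakDerivB n (bdirs n i) f g ∧
    MemLp g 2 (volume : Measure (Bdy n)) ∧ GagB n g

/-! Abstract notions for (graph relations of) unbounded operators in Hilbert spaces,
Schatten–von Neumann classes, groups, spectra. -/

section Abstract

variable {H G : Type*} [NormedAddCommGroup H] [InnerProductSpace ℂ H] [CompleteSpace H]
  [NormedAddCommGroup G] [InnerProductSpace ℂ G] [CompleteSpace G]

/-- `R` is the (bounded, everywhere defined, two-sided) resolvent of the operator with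
graph relation `Rel` at the point `lam`. -/
def RelResolventAt (Rel : H → H → Prop) (lam : ℂ) (R : H →L[ℂ] H) : Prop :=
  (∀ u : H, Rel (R u) (u + lam • R u)) ∧
  (∀ u w : H, Rel u w → R (w - lam • u) = u)

/-- `lam` belongs to the resolvent set of the operator with graph relation `Rel`. -/
def RelInResolvent (Rel : H → H → Prop) (lam : ℂ) : Prop :=
  ∃ R : H →L[ℂ] H, RelResolventAt Rel lam R

/-- The graph relation of the adjoint operator. -/
def AdjRel (Rel : H → H → Prop) (u w : H) : Prop :=
  ∀ f g : H, Rel f g → (inner ℂ g u : ℂ) = (inner ℂ f w : ℂ)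

/-- Symmetry of the operator with graph relation `Rel`. -/
def IsSymmRel (Rel : H → H → Prop) : Prop :=
  ∀ u w f g : H, Rel u w → Rel f g → (inner ℂ w f : ℂ) = (inner ℂ u g : ℂ)

/-- Selfadjointness of the operator with graph relation `Rel`. -/
def IsSelfAdjRel (Rel : H → H → Prop) : Prop :=
  ∀ u w : H, Rel u w ↔ AdjRel Rel u w

/-- The operator with graph relation `Rel`, shifted by `lam`, is semi-Fredholm:
closed range, and finite-dimensional kernel or finite-codimensional range. -/
def SemiFredholmAt (Rel : H → H → Prop) (lam : ℂ) : Prop :=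
  IsClosed {v : H | ∃ u w, Rel u w ∧ v = w - lam • u} ∧
  ((∃ t : Finset H, {u : H | Rel u (lam • u)} ⊆ (Submodule.span ℂ (t : Set H) : Set H)) ∨
   (∃ t : Finset H,
      Submodule.span ℂ ((t : Set H) ∪ {v : H | ∃ u w, Rel u w ∧ v = w - lam • u}) = ⊤))

/-- The essential spectrum: points where the operator is not semi-Fredholm. -/
def EssSpec (Rel : H → H → Prop) : Set ℂ := {lam | ¬ SemiFredholmAt Rel lam}

/-- The `k`-th approximation number (`= (k+1)`-th singular value) of a bounded operator
between Hilbert spaces: the distance to operators of rank at most `k`. -/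
def sNum (T : H →L[ℂ] G) (k : ℕ) : ℝ :=
  ⨅ F : {F : H →L[ℂ] G // LinearMap.rank F.toLinearMap ≤ (k : Cardinal)}, ‖T - (F : H →L[ℂ] G)‖

/-- Membership in the Schatten–von Neumann ideal `S_p`: the singular values are
`p`-summable. -/
def MemSchatten (p : ℝ) (T : H →L[ℂ] G) : Prop :=
  IsCompactOperator ⇑T ∧ Summable (fun k : ℕ => sNum T k ^ p)

/-- Membership in the weak Schatten–von Neumann ideal `S_{p,∞}`:
`s_k(T) = O(k^{-1/p})`. -/
def MemWeakSchatten (p : ℝ) (T : H →L[ℂ] G) : Prop :=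
  IsCompactOperator ⇑T ∧ ∃ C : ℝ, ∀ k : ℕ, sNum T k ≤ C * ((k : ℝ) + 1) ^ (-(1 / p))

/-- `U` is the strongly continuous unitary group `t ↦ e^{-itA}` generated by the
selfadjoint operator `A` with graph relation `Rel`. -/
def IsUnitaryGroupFor (Rel : H → H → Prop) (U : ℝ → (H →L[ℂ] H)) : Prop :=
  U 0 = 1 ∧ (∀ s t : ℝ, U (s + t) = (U s).comp (U t)) ∧
  (∀ (t : ℝ) (f : H), ‖U t f‖ = ‖f‖) ∧
  (∀ f : H, Continuous fun t : ℝ => U t f) ∧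
  (∀ u w : H, Rel u w → ∀ t : ℝ, HasDerivAt (fun s : ℝ => U s u) ((-Complex.I) • (U t w)) t)

/-- `f` belongs to the absolutely continuous subspace of the selfadjoint operator
generating the unitary group `U`: its spectral measure `μ_f`, whose Fourier–Stieltjes
transform is `t ↦ ⟪f, U(t) f⟫`, has an integrable density w.r.t. Lebesgue measure. -/
def InAc (U : ℝ → (H →L[ℂ] H)) (f : H) : Prop :=
  ∃ h : ℝ → ℝ, Integrable h ∧ (∀ x, 0 ≤ h x) ∧
    ∀ t : ℝ, (inner ℂ f (U t f) : ℂ) = ∫ x : ℝ, Complex.exp ((-Complex.I) * t * x) * (h x : ℂ)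

/-- `lam` is in the resolvent set of the absolutely continuous part (the restriction to
the absolutely continuous subspace) of the operator with graph relation `Rel`. -/
def AcResolventAt (Rel : H → H → Prop) (U : ℝ → (H →L[ℂ] H)) (lam : ℂ) : Prop :=
  ∃ R : H →L[ℂ] H,
    (∀ f : H, InAc U f → InAc U (R f) ∧ Rel (R f) (f + lam • R f)) ∧
    (∀ u w : H, Rel u w → InAc U u → R (w - lam • u) = u)

/-- `W` is a complete wave operator for the pair of unitary groups `U₁`, `U₂` along the
filter `l` (`atTop` for `W₊`, `atBot` for `W₋`): the strong limits
`lim U₂(t)* U₁(t) f` exist on the absolutely continuous subspace of the first operator,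
`W` is isometric there, and its range is the absolutely continuous subspace of the
second operator. -/
def WaveProps (U₁ U₂ : ℝ → (H →L[ℂ] H)) (l : Filter ℝ) (W : H →L[ℂ] H) : Prop :=
  (∀ f : H, InAc U₁ f → Tendsto (fun t : ℝ => U₂ (-t) (U₁ t f)) l (𝓝 (W f))) ∧
  (∀ f : H, InAc U₁ f → ‖W f‖ = ‖f‖ ∧ InAc U₂ (W f)) ∧
  (∀ g : H, InAc U₂ g → ∃ f : H, InAc U₁ f ∧ W f = g)

/-- `V` implements a unitary equivalence between the absolutely continuous parts of the
operators generating `U₁` and `U₂`. -/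
def AcUnitEquiv (U₁ U₂ : ℝ → (H →L[ℂ] H)) (V : H →L[ℂ] H) : Prop :=
  (∀ f : H, InAc U₁ f → ‖V f‖ = ‖f‖ ∧ InAc U₂ (V f)) ∧
  (∀ g : H, InAc U₂ g → ∃ f : H, InAc U₁ f ∧ V f = g) ∧
  (∀ (t : ℝ) (f : H), InAc U₁ f → V (U₁ t f) = U₂ t (V f))

/-- The spectrum of the operator with graph relation `Rel`. -/
def SpecOf (Rel : H → H → Prop) : Set ℂ := {lam | ¬ RelInResolvent Rel lam}

/-- `u` is a generalized eigenvector (root vector) at `lam`: `(A - lam)^k u = 0`. -/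
def RootVec (Rel : H → H → Prop) (lam : ℂ) (u : H) : Prop :=
  ∃ (k : ℕ) (c : ℕ → H), c 0 = u ∧ c k = 0 ∧
    ∀ j, j < k → ∃ w, Rel (c j) w ∧ c (j + 1) = w - lam • c j

/-- The algebraic multiplicity of `lam`: the dimension of the space of root vectors,
expressed as the least cardinality of a finite spanning set. -/
def AlgMult (Rel : H → H → Prop) (lam : ℂ) : ℕ :=
  sInf {k : ℕ | ∃ t : Finset H, t.card = k ∧
    {u : H | RootVec Rel lam u} ⊆ (Submodule.span ℂ (t : Set H) : Set H)}

/-- The discrete spectrum: isolated eigenvalues of finite algebraic multiplicity. -/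
def DiscSpec (Rel : H → H → Prop) : Set ℂ :=
  {lam | lam ∈ SpecOf Rel ∧
    (∃ ε : ℝ, 0 < ε ∧ ∀ z ∈ SpecOf Rel, dist z lam < ε → z = lam) ∧
    (∃ u : H, u ≠ 0 ∧ Rel u (lam • u)) ∧
    ∃ t : Finset H, {u : H | RootVec Rel lam u} ⊆ (Submodule.span ℂ (t : Set H) : Set H)}

end Abstract

end RobinHS

namespace RobinHS


theorem compact_of_kernel {n : ℕ} {K : Type} [NormedAddCommGroup K]
    [InnerProductSpace ℂ K] [CompleteSpace K]
    (G : Lp (K →L[ℂ] ℂ) 2 (volume : Measure (Bdy n))) :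
    ∃ S : K →L[ℂ] Hbd n, IsCompactOperator ⇑S ∧
      ∀ u, ⇑(S u) =ᵐ[volume] fun x => G x u := by
  let B : K →L[ℂ] (K →L[ℂ] ℂ) →L[ℂ] ℂ := ContinuousLinearMap.apply ℂ ℂ
  let Φ : Lp (K →L[ℂ] ℂ) 2 (volume : Measure (Bdy n)) →L[ℂ] K →L[ℂ] Hbd n :=
    (ContinuousLinearMap.compLpL₂ 2 volume B).flip
  have hΦ : ∀ G u, ⇑(Φ G u) =ᵐ[volume] fun x => G x u := by
    intro G u
    exact (ContinuousLinearMap.coeFn_compLp' (B u) G)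
  refine ⟨Φ G, ?_, hΦ G⟩
  refine Lp.induction (by norm_num) (fun G => IsCompactOperator ⇑(Φ G)) ?_ ?_ ?_ G
  · intro c s hs hμs
    let I : ℂ →L[ℂ] Hbd n := ContinuousLinearMap.toSpanSingleton ℂ (indicatorConstLp 2 hs hμs.ne (1:ℂ))
    have h1 : Φ (Lp.simpleFunc.indicatorConst 2 hs hμs.ne c) = I ∘L c := by
      ext1 u
      apply Lp.ext
      refine (hΦ _ _).trans ?_
      rw [Lp.simpleFunc.coe_indicatorConst]
      have e : (I ∘L c) u = c u • (indicatorConstLp 2 hs hμs.ne (1:ℂ) : Hbd n) := rfl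
      rw [e]
      filter_upwards [Lp.coeFn_smul (c u) (indicatorConstLp 2 hs hμs.ne (1:ℂ) : Hbd n),
        indicatorConstLp_coeFn (p := 2) (hs := hs) (hμs := hμs.ne) (c := (1:ℂ)),
        indicatorConstLp_coeFn (p := 2) (hs := hs) (hμs := hμs.ne) (c := c)] with x a1 a2 a3
      rw [a1, a3, Pi.smul_apply, a2]
      by_cases hx : x ∈ s <;> simp [hx]
    rw [h1]
    have : IsCompactOperator ⇑I := isCompactOperator_of_locallyCompactSpace_rng I
    exact this.comp_clm c
  · intro f g hf hg _ h1 h2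
    rw [map_add]
    exact h1.add h2
  · exact isClosed_setOfPred_isCompactOperator.preimage Φ.continuous

theorem cs_bound {n : ℕ} {g : Bdy n → ℂ} {φ : Bdy n → ℝ} (hg : MemLp g 2 (volume : Measure (Bdy n)))
    (hφ : MemLp φ 2 (volume : Measure (Bdy n))) :
    ‖∫ y, g y * (φ y : ℂ)‖ ≤ (eLpNorm g 2 volume).toReal * (eLpNorm φ 2 volume).toReal := by
  rw [← ENNReal.toReal_mul, ← toReal_enorm]
  refine ENNReal.toReal_mono (ENNReal.mul_ne_top hg.2.ne hφ.2.ne) ?_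
  refine (enorm_integral_le_lintegral_enorm _).trans ?_
  rw [← eLpNorm_one_eq_lintegral_enorm]
  have h := eLpNorm_smul_le_mul_eLpNorm (p := 2) (q := 2) (r := 1) hg.1 hφ.1 (μ := volume)
  rw [mul_comm]
  refine le_trans (le_of_eq ?_) h
  congr 1
  ext y
  simp [mul_comm]

theorem norm_le_of_test {n : ℕ} (w : Hbd n) (M : ℝ) 
    (h : ∀ φ : Bdy n → ℝ, IsTestB n φ →
      ‖∫ y, w y * (φ y : ℂ)‖ ≤ M * (eLpNorm φ 2 volume).toReal) (hM : 0 ≤ M) : ‖w‖ ≤ 2 * M := by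
  have key : ∀ v : Hbd n, ‖inner ℂ v w‖ ≤ 2 * M * ‖v‖ := by
    intro v
    have hcl : IsClosed {v : Hbd n | ‖inner ℂ v w‖ ≤ 2 * M * ‖v‖} :=
      isClosed_le (by fun_prop) (by fun_prop)
    refine (Lp.dense_hasCompactSupport_contDiff (F := ℂ) (μ := (volume : Measure (Bdy n)))
      (p := 2) (by norm_num)).induction ?_ hcl v
    rintro v ⟨g, hvg, hgc, hgd⟩
    have t1 : IsTestB n (fun y => (g y).re) :=
      ⟨Complex.reCLM.contDiff.comp hgd, hgc.comp_left (g := Complex.re) rfl⟩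
    have t2 : IsTestB n (fun y => (g y).im) :=
      ⟨Complex.imCLM.contDiff.comp hgd, hgc.comp_left (g := Complex.im) rfl⟩
    have m1 : MemLp (fun y => (g y).re) 2 (volume : Measure (Bdy n)) :=
      t1.1.continuous.memLp_of_hasCompactSupport t1.2
    have m2 : MemLp (fun y => (g y).im) 2 (volume : Measure (Bdy n)) :=
      t2.1.continuous.memLp_of_hasCompactSupport t2.2
    have mg : MemLp g 2 (volume : Measure (Bdy n)) :=
      hgd.continuous.memLp_of_hasCompactSupport hgc
    have hvn : ‖v‖ = (eLpNorm g 2 volume).toReal := by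
      rw [Lp.norm_def, eLpNorm_congr_ae hvg]
    have n1 : (eLpNorm (fun y => (g y).re) 2 volume).toReal ≤ ‖v‖ := by
      rw [hvn]
      exact ENNReal.toReal_mono mg.2.ne (eLpNorm_mono fun y => by
        simpa using Complex.abs_re_le_norm (g y))
    have n2 : (eLpNorm (fun y => (g y).im) 2 volume).toReal ≤ ‖v‖ := by
      rw [hvn]
      exact ENNReal.toReal_mono mg.2.ne (eLpNorm_mono fun y => by
        simpa using Complex.abs_im_le_norm (g y))
    have i1 : Integrable (fun y => w y * (((g y).re : ℝ) : ℂ)) volume :=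
      (Lp.memLp w).integrable_mul m1.ofReal
    have i2 : Integrable (fun y => w y * (((g y).im : ℝ) : ℂ)) volume :=
      (Lp.memLp w).integrable_mul m2.ofReal
    have e : inner ℂ v w = (∫ y, w y * (((g y).re : ℝ) : ℂ)) -
        Complex.I * ∫ y, w y * (((g y).im : ℝ) : ℂ) := by
      rw [L2.inner_def, ← integral_const_mul, ← integral_sub i1 (i2.const_mul _)]
      refine integral_congr_ae ?_
      filter_upwards [hvg] with y hy
      rw [hy, RCLike.inner_apply]
      apply Complex.ext <;> simp <;> ring
    show ‖inner ℂ v w‖ ≤ _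
    rw [e]
    refine (norm_sub_le _ _).trans ?_
    rw [norm_mul, Complex.norm_I, one_mul]
    have a1 := h _ t1
    have a2 := h _ t2
    nlinarith [mul_le_mul_of_nonneg_left n1 hM, mul_le_mul_of_nonneg_left n2 hM]
  have k := key w
  rw [inner_self_eq_norm_sq_to_K] at k
  rcases (norm_nonneg w).eq_or_lt with h0 | h0
  · rw [← h0]; positivity
  · have k2 : ‖w‖ * ‖w‖ ≤ 2 * M * ‖w‖ := by
      simpa [pow_two] using k
    exact le_of_mul_le_mul_right k2 h0

theorem opnorm_dirs {n : ℕ} (D : Bdy n →L[ℝ] ℂ) (c : Fin n → ℝ)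
    (h : ∀ i, ‖D (bdirs n i)‖ ≤ c i) : ‖D‖ ≤ ∑ i, c i := by
  have hc : ∀ i, 0 ≤ c i := fun i => (norm_nonneg _).trans (h i)
  refine ContinuousLinearMap.opNorm_le_bound _ (Finset.sum_nonneg fun i _ => hc i) fun v => ?_
  have hv : v = ∑ i, v i • bdirs n i := by
    ext j
    simp [bdirs, Pi.single_apply]
  have hD : D v = ∑ i, v i • D (bdirs n i) := by
    conv_lhs => rw [hv]
    rw [map_sum]
    exact Finset.sum_congr rfl fun i _ => D.map_smul _ _
  rw [hD, Finset.sum_mul]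
  refine (norm_sum_le _ _).trans (Finset.sum_le_sum fun i _ => ?_)
  rw [norm_smul, mul_comm]
  exact mul_le_mul (h i) (PiLp.norm_apply_le v i) (norm_nonneg _) (hc i)

theorem conv_lip {n : ℕ} {f : Bdy n → ℂ} (g : Fin n → Bdy n → ℂ)
    (hf : MemLp f 2 (volume : Measure (Bdy n)))
    (hg : ∀ i, MemLp (g i) 2 (volume : Measure (Bdy n)))
    (hw : ∀ i, IsWeakDerivB n (bdirs n i) f (g i))
    {φ : Bdy n → ℝ} (hφ : IsTestB n φ) (h : Bdy n) :
    ‖(∫ y, f y * (φ (y - h) : ℂ)) - ∫ y, f y * (φ y : ℂ)‖ ≤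
      (∑ i, (eLpNorm (g i) 2 volume).toReal) * ‖h‖ * (eLpNorm φ 2 volume).toReal := by
  set N := (eLpNorm φ 2 (volume : Measure (Bdy n))).toReal with hN
  let ψ : Bdy n → ℝ := fun z => φ (-z)
  have hψd : ContDiff ℝ (⊤ : ℕ∞) ψ := hφ.1.comp contDiff_neg
  have hψc : HasCompactSupport ψ := hφ.2.comp_homeomorph (Homeomorph.neg _)
  have hfl : LocallyIntegrable f volume := hf.locallyIntegrable (by norm_num)
  let L : ℂ →L[ℝ] ℝ →L[ℝ] ℂ := (ContinuousLinearMap.lsmul ℝ ℝ).flip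
  let F : Bdy n → ℂ := convolution f ψ L volume
  have hF : ∀ x, F x = ∫ y, f y * (φ (y - x) : ℂ) := by
    intro x
    show ∫ y, L (f y) (ψ (x - y)) = _
    congr 1; ext y
    simp [L, ψ, mul_comm]
  have hD : ∀ x, HasFDerivAt F (convolution f (fderiv ℝ ψ) (L.precompR (Bdy n)) volume x) x :=
    fun x => hψc.hasFDerivAt_convolution_right L hfl (hψd.of_le (by exact_mod_cast le_top)) x
  have hψ1 : Continuous (fderiv ℝ ψ) := hψd.continuous_fderiv (by simp)
  have hdir : ∀ x i, (convolution f (fderiv ℝ ψ) (L.precompR (Bdy n)) volume x) (bdirs n i)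
      = ∫ y, g i y * (φ (y - x) : ℂ) := by
    intro x i
    rw [convolution_precompR_apply L hfl (hψc.fderiv ℝ) hψ1]
    let φx : Bdy n → ℝ := fun y => φ (y - x)
    have hφx : IsTestB n φx :=
      ⟨hφ.1.comp (contDiff_id.sub contDiff_const),
        hφ.2.comp_homeomorph (Homeomorph.subRight x)⟩
    have hww := hw i φx hφx
    rw [← neg_eq_iff_eq_neg] at hww
    rw [← hww, ← integral_neg]
    show ∫ y, L (f y) (fderiv ℝ ψ (x - y) (bdirs n i)) = _
    congr 1; ext y
    have hdφ : ∀ z, DifferentiableAt ℝ φ z := fun z => (hφ.1.differentiable (by simp)) z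
    have e1 : fderiv ℝ ψ (x - y) = - fderiv ℝ φ (y - x) := by
      have : HasFDerivAt ψ ((fderiv ℝ φ (-(x - y))).comp (-ContinuousLinearMap.id ℝ (Bdy n))) (x - y) :=
        (hdφ _).hasFDerivAt.comp (x - y) (hasFDerivAt_id (x - y)).neg
      rw [this.fderiv, neg_sub]
      ext v; simp
    have e2 : fderiv ℝ φx y = fderiv ℝ φ (y - x) := by
      have : HasFDerivAt φx ((fderiv ℝ φ (y - x)).comp (ContinuousLinearMap.id ℝ (Bdy n))) y :=
        (hdφ _).hasFDerivAt.comp y ((hasFDerivAt_id y).sub_const x)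
      rw [this.fderiv]
      ext v; simp
    rw [e1, e2]
    simp [L, mul_comm]
  have hφm : MemLp φ 2 (volume : Measure (Bdy n)) :=
    hφ.1.continuous.memLp_of_hasCompactSupport hφ.2
  have hbd : ∀ x, ‖convolution f (fderiv ℝ ψ) (L.precompR (Bdy n)) volume x‖ ≤
      (∑ i, (eLpNorm (g i) 2 volume).toReal) * N := by
    intro x
    rw [Finset.sum_mul]
    refine opnorm_dirs _ _ fun i => ?_
    have hmp := measurePreserving_sub_right (volume : Measure (Bdy n)) x
    have c := cs_bound (hg i) (hφm.comp_measurePreserving hmp)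
    rw [eLpNorm_comp_measurePreserving hφm.1 hmp] at c
    rw [hdir]
    exact c
  have := Convex.norm_image_sub_le_of_norm_hasFDerivWithin_le (s := Set.univ) (f := F)
    (fun x _ => (hD x).hasFDerivWithinAt) (fun x _ => hbd x) convex_univ
    (Set.mem_univ (0 : Bdy n)) (Set.mem_univ h)
  rw [hF, hF] at this
  simp only [sub_zero] at this
  refine this.trans (le_of_eq (by ring))

abbrev tau {n : ℕ} (h : Bdy n) : Hbd n →ₗᵢ[ℂ] Hbd n :=
  Lp.compMeasurePreservingₗᵢ ℂ (fun x => x + h) (measurePreserving_add_right volume h)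

theorem tau_coe {n : ℕ} (h : Bdy n) (f : Hbd n) : ⇑(tau h f) =ᵐ[volume] fun x => f (x + h) :=
  Lp.coeFn_compMeasurePreserving f (measurePreserving_add_right volume h)

theorem trans_bound {n : ℕ} (u : Hbd n) {f : Bdy n → ℂ} (huf : ⇑u =ᵐ[volume] f)
    (hf : MemH32B n f) : ∃ C, 0 ≤ C ∧ ∀ h : Bdy n, ‖tau h u - u‖ ≤ C * ‖h‖ := by
  obtain ⟨hf2, hd⟩ := hf
  choose g hw hg _ using hd
  refine ⟨2 * ∑ i, (eLpNorm (g i) 2 volume).toReal, by positivity, fun h => ?_⟩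
  rw [mul_assoc]
  refine norm_le_of_test _ _ (fun φ hφ => ?_) (by positivity)
  refine le_trans (le_of_eq ?_) (conv_lip g hf2 hg hw hφ h)
  congr 1
  have hφm : MemLp φ 2 (volume : Measure (Bdy n)) :=
    hφ.1.continuous.memLp_of_hasCompactSupport hφ.2
  have e1 : ∫ y, f y * (φ (y - h) : ℂ) = ∫ y, f (y + h) * (φ y : ℂ) := by
    rw [← integral_add_right_eq_self _ h]
    simp
  have hmp := measurePreserving_add_right (volume : Measure (Bdy n)) h
  have i1 : Integrable (fun y => f (y + h) * (φ y : ℂ)) volume :=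
    (hf2.comp_measurePreserving hmp).integrable_mul hφm.ofReal
  have i2 : Integrable (fun y => f y * (φ y : ℂ)) volume := hf2.integrable_mul hφm.ofReal
  rw [e1, ← integral_sub i1 i2]
  refine integral_congr_ae ?_
  filter_upwards [Lp.coeFn_sub (tau h u) u, tau_coe h u, huf,
    hmp.quasiMeasurePreserving.ae_eq_comp huf] with y a1 a2 a3 a4
  simp only [Function.comp] at a4
  rw [a1, Pi.sub_apply, a2, a3, a4]
  simp [sub_mul]

theorem sq_eLpNorm {X E : Type*} [MeasurableSpace X] [NormedAddCommGroup E] (μ : Measure X)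
    (f : X → E) : eLpNorm f 2 μ ^ 2 = ∫⁻ x, ‖f x‖ₑ ^ 2 ∂μ := by
  have h := eLpNorm_nnreal_pow_eq_lintegral (μ := μ) (f := f) (p := 2) (by norm_num)
  simpa using h

theorem exists_kernel (n : ℕ) {δ : ℝ} (hδ : 0 < δ) :
    ∃ k : Bdy n → Hbd n, Continuous k ∧ (∃ c, ∀ x, ‖k x‖ ≤ c) ∧
      ∀ (f : Hbd n) x, inner ℂ (k x) f =
        ∫ h, f (x + h) ∂(ProbabilityTheory.cond (volume : Measure (Bdy n)) (Metric.ball 0 δ)) := by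
  set B : Set (Bdy n) := Metric.ball 0 δ with hB
  have hBm : MeasurableSet B := Metric.isOpen_ball.measurableSet
  have hBt : volume B ≠ ⊤ := measure_ball_lt_top.ne
  let c : ℝ := (volume B).toReal⁻¹
  let k0 : Hbd n := indicatorConstLp 2 hBm hBt (c : ℂ)
  have hmp : ∀ x : Bdy n, MeasurePreserving (fun y => y - x) (volume : Measure (Bdy n)) volume :=
    fun x => measurePreserving_sub_right volume x
  let F : Bdy n → C(Bdy n, Bdy n) := fun x => ⟨fun y => y - x, by fun_prop⟩
  have hF : Continuous F := by
    refine ContinuousMap.continuous_of_continuous_uncurry _ ?_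
    show Continuous fun p : Bdy n × Bdy n => p.2 - p.1
    fun_prop
  refine ⟨fun x => Lp.compMeasurePreserving (fun y => y - x) (hmp x) k0, ?_, ⟨‖k0‖, fun x => ?_⟩, ?_⟩
  · exact Continuous.compMeasurePreservingLp (f := fun _ => k0) (g := F) continuous_const hF
      (fun x => hmp x) (by norm_num)
  · exact (Lp.norm_compMeasurePreserving k0 (hmp x)).le
  · intro f x
    rw [L2.inner_def, ProbabilityTheory.cond, integral_smul_measure,
      ← integral_indicator hBm, ← integral_smul,
      ← integral_sub_right_eq_self (fun z => (volume B)⁻¹.toReal •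
        B.indicator (fun y => f (x + y)) z) x]
    refine integral_congr_ae ?_
    filter_upwards [Lp.coeFn_compMeasurePreserving k0 (hmp x),
      (hmp x).quasiMeasurePreserving.ae_eq_comp
        (indicatorConstLp_coeFn (p := 2) (hs := hBm) (hμs := hBt) (c := (c : ℂ)))] with y a1 a2
    simp only [Function.comp] at a1 a2
    rw [a1, a2]
    by_cases hy : y - x ∈ B
    · simp [hy, c, mul_comm]
    · simp [hy]

theorem avg_bound {n : ℕ} {δ M : ℝ} (hδ : 0 < δ) (f : Hbd n)
    (h : ∀ h : Bdy n, ‖h‖ < δ → ‖tau h f - f‖ ≤ M) :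
    eLpNorm (fun x => f x - ∫ h, f (x + h)
      ∂(ProbabilityTheory.cond (volume : Measure (Bdy n)) (Metric.ball 0 δ))) 2 volume
      ≤ ENNReal.ofReal M := by
  set B : Set (Bdy n) := Metric.ball 0 δ with hB
  have hBm : MeasurableSet B := Metric.isOpen_ball.measurableSet
  have hBt : volume B ≠ ⊤ := measure_ball_lt_top.ne
  have hB0 : volume B ≠ 0 := (Metric.measure_ball_pos _ _ hδ).ne'
  set ν := ProbabilityTheory.cond (volume : Measure (Bdy n)) B with hν
  have : IsProbabilityMeasure ν := ProbabilityTheory.cond_isProbabilityMeasure_of_finite hB0 hBt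
  have hfm : Measurable f := (Lp.stronglyMeasurable f).measurable
  have hint : ∀ x, Integrable (fun h => f (x + h)) ν := by
    intro x
    have h1 : MemLp (fun h => f (x + h)) 2 volume :=
      (Lp.memLp f).comp_measurePreserving (measurePreserving_add_left volume x)
    have h2 : MemLp (fun h => f (x + h)) 2 ν :=
      (h1.restrict B).smul_measure (by simpa using hB0)
    exact h2.integrable (by norm_num)
  rw [← ENNReal.pow_le_pow_left_iff (n := 2) (by norm_num), sq_eLpNorm]
  calc ∫⁻ x, ‖f x - ∫ h, f (x + h) ∂ν‖ₑ ^ 2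
      ≤ ∫⁻ x, ∫⁻ h, ‖f (x + h) - f x‖ₑ ^ 2 ∂ν := by
        refine lintegral_mono fun x => ?_
        have e : ‖f x - ∫ h, f (x + h) ∂ν‖ₑ = ‖∫ h, (f (x + h) - f x) ∂ν‖ₑ := by
          rw [integral_sub (hint x) (integrable_const _), enorm_sub_rev]
          simp
        rw [e, ← sq_eLpNorm]
        gcongr
        refine (enorm_integral_le_lintegral_enorm _).trans ?_
        rw [← eLpNorm_one_eq_lintegral_enorm]
        exact eLpNorm_le_eLpNorm_of_exponent_le (by norm_num)
          ((hint x).1.sub aestronglyMeasurable_const)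
    _ = ∫⁻ h, ∫⁻ x, ‖f (x + h) - f x‖ₑ ^ 2 ∂volume ∂ν := by
        refine lintegral_lintegral_swap ?_
        apply Measurable.aemeasurable
        show Measurable fun p : Bdy n × Bdy n => ‖f (p.1 + p.2) - f p.1‖ₑ ^ 2
        fun_prop
    _ ≤ ∫⁻ h, ENNReal.ofReal M ^ 2 ∂ν := by
        refine lintegral_mono_ae ?_
        filter_upwards [ProbabilityTheory.ae_cond_mem hBm] with z hz
        rw [← sq_eLpNorm]
        gcongr
        have hz' := h z (by simpa [hB] using hz)
        have e : eLpNorm (fun x => f (x + z) - f x) 2 volume = ‖tau z f - f‖ₑ := by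
          rw [Lp.enorm_def]
          refine eLpNorm_congr_ae ?_
          filter_upwards [Lp.coeFn_sub (tau z f) f, tau_coe z f] with y a1 a2
          rw [a1, Pi.sub_apply, a2]
        rw [e, ← ofReal_norm]
        exact ENNReal.ofReal_le_ofReal hz'
    _ = ENNReal.ofReal M ^ 2 := by simp

theorem unif_bound {n : ℕ} {K : Type} [NormedAddCommGroup K]
    [InnerProductSpace ℂ K] [CompleteSpace K] (K₀ : K →L[ℂ] Hbd n)
    (hran : ∀ u : K, ∃ f : Bdy n → ℂ, ⇑(K₀ u) =ᵐ[(volume : Measure (Bdy n))] f ∧ MemH32B n f) :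
    ∃ C, 0 ≤ C ∧ ∀ (h : Bdy n) u, ‖tau h (K₀ u) - K₀ u‖ ≤ C * ‖h‖ * ‖u‖ := by
  let g : Bdy n → K →L[ℂ] Hbd n := fun h =>
    ((‖h‖⁻¹ : ℝ) : ℂ) • (((tau h).toContinuousLinearMap ∘L K₀) - K₀)
  have hgn : ∀ h u, ‖g h u‖ = ‖h‖⁻¹ * ‖tau h (K₀ u) - K₀ u‖ := by
    intro h u
    have : g h u = ((‖h‖⁻¹ : ℝ) : ℂ) • (tau h (K₀ u) - K₀ u) := rfl
    rw [this, norm_smul, Complex.norm_real, norm_inv, norm_norm]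
  have hpt : ∀ u, ∃ C, 0 ≤ C ∧ ∀ h : Bdy n, ‖tau h (K₀ u) - K₀ u‖ ≤ C * ‖h‖ := by
    intro u
    obtain ⟨f, h1, h2⟩ := hran u
    exact trans_bound _ h1 h2
  obtain ⟨C, hC⟩ := banach_steinhaus (g := g) (fun u => by
    obtain ⟨C, hC0, hC⟩ := hpt u
    refine ⟨C, fun h => ?_⟩
    rw [hgn]
    rcases eq_or_ne h 0 with rfl | hh
    · simpa using hC0
    · rw [inv_mul_le_iff₀ (norm_pos_iff.2 hh), mul_comm]
      exact hC h)
  refine ⟨C, (norm_nonneg _).trans (hC 0), fun h u => ?_⟩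
  rcases eq_or_ne h 0 with rfl | hh
  · obtain ⟨C', _, hC'⟩ := hpt u
    simpa using hC' 0
  · have h1 := (g h).le_of_opNorm_le (hC h) u
    rw [hgn, inv_mul_le_iff₀ (norm_pos_iff.2 hh)] at h1
    linarith

theorem statement4 (n : ℕ) (hn : 1 ≤ n) (K : Type) [NormedAddCommGroup K]
    [InnerProductSpace ℂ K] [CompleteSpace K] (K₀ : K →L[ℂ] Hbd n)
    (hran : ∀ u : K, ∃ f : Bdy n → ℂ, ⇑(K₀ u) =ᵐ[(volume : Measure (Bdy n))] f ∧ MemH32B n f)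
    (α : Bdy n → ℂ) (hα : MemLp α ⊤ (volume : Measure (Bdy n)))
    (hsmall : ∀ ε : ℝ, 0 < ε → volume {y : Bdy n | ε ≤ ‖α y‖} < ⊤)
    (T : K →L[ℂ] Hbd n)
    (hT : ∀ u : K, ⇑(T u) =ᵐ[(volume : Measure (Bdy n))] fun y => α y * (K₀ u) y) :
    IsCompactOperator ⇑T := by
  obtain ⟨C, hC0, hC⟩ := unif_bound K₀ hran
  obtain ⟨A, hA0, hA⟩ : ∃ A : ℝ, 0 ≤ A ∧ ∀ᵐ y ∂(volume : Measure (Bdy n)), ‖α y‖ ≤ A := by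
    refine ⟨(eLpNorm α ⊤ volume).toReal, ENNReal.toReal_nonneg, ?_⟩
    have h := ae_le_eLpNormEssSup (f := α) (μ := volume)
    rw [← eLpNorm_exponent_top] at h
    filter_upwards [h] with y hy
    rw [← toReal_enorm]
    exact ENNReal.toReal_mono hα.2.ne hy
  have hcl : IsClosed {S : K →L[ℂ] Hbd n | IsCompactOperator ⇑S} :=
    isClosed_setOfPred_isCompactOperator
  change T ∈ {S : K →L[ℂ] Hbd n | IsCompactOperator ⇑S}
  rw [← hcl.closure_eq, Metric.mem_closure_iff]
  intro ε hε
  obtain ⟨η, hη, hη'⟩ : ∃ η : ℝ, 0 < η ∧ η * ‖K₀‖ ≤ ε / 3 := by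
    refine ⟨ε / 3 / (‖K₀‖ + 1), by positivity, ?_⟩
    rw [div_mul_eq_mul_div, div_le_iff₀ (by positivity)]
    nlinarith [norm_nonneg K₀]
  obtain ⟨δ, hδ, hδ'⟩ : ∃ δ : ℝ, 0 < δ ∧ A * (C * δ) ≤ ε / 3 := by
    refine ⟨ε / 3 / (A * C + 1), by positivity, ?_⟩
    rw [← mul_assoc, mul_div_assoc', div_le_iff₀ (by positivity)]
    nlinarith [mul_nonneg hA0 hC0]
  obtain ⟨k, hkc, ⟨c, hkb⟩, hk⟩ := exists_kernel n hδ
  set s := toMeasurable (volume : Measure (Bdy n)) {y | η ≤ ‖α y‖} with hs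
  have hsm : MeasurableSet s := measurableSet_toMeasurable _ _
  have hst : volume s < ⊤ := by
    rw [hs, measure_toMeasurable]; exact hsmall η hη
  have hss : ∀ y, y ∉ s → ‖α y‖ ≤ η := by
    intro y hy
    by_contra hcon
    exact hy (subset_toMeasurable _ _ (le_of_not_ge hcon))
  let G0 : Bdy n → (K →L[ℂ] ℂ) := fun x => (innerSL ℂ (k x)) ∘L K₀
  have hG0c : Continuous G0 := by
    have h1 : Continuous fun x => innerSL ℂ (k x) := (innerSL ℂ).continuous.comp hkc
    exact h1.clm_comp continuous_const
  have hG0b : ∀ x, ‖G0 x‖ ≤ c * ‖K₀‖ := by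
    intro x
    refine (ContinuousLinearMap.opNorm_comp_le _ _).trans ?_
    rw [innerSL_apply_norm]
    exact mul_le_mul_of_nonneg_right (hkb x) (norm_nonneg _)
  have hGm : MemLp (s.indicator fun x => α x • G0 x) 2 (volume : Measure (Bdy n)) := by
    refine (memLp_indicator_iff_restrict (f := fun x => α x • G0 x) hsm).2 ?_
    have : IsFiniteMeasure (volume.restrict s) := ⟨by simpa using hst⟩
    refine MemLp.mono_exponent (q := ⊤) ?_ le_top
    refine MemLp.restrict s (memLp_top_of_bound
      (hα.1.smul hG0c.aestronglyMeasurable) (A * (c * ‖K₀‖)) ?_)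
    filter_upwards [hA] with y hy
    rw [norm_smul]
    exact mul_le_mul hy (hG0b y) (norm_nonneg _) hA0
  obtain ⟨S, hSc, hS⟩ := compact_of_kernel (hGm.toLp _)
  refine ⟨S, hSc, ?_⟩
  rw [dist_eq_norm]
  refine lt_of_le_of_lt (ContinuousLinearMap.opNorm_le_bound _ (M := 2 * (ε / 3)) (by positivity)
    fun u => ?_) (by linarith)
  set f := K₀ u with hf
  let a : Bdy n → ℂ := fun x => sᶜ.indicator α x * f x
  let b : Bdy n → ℂ := fun x => s.indicator α x * (f x - inner ℂ (k x) f)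
  have hab : ⇑((T - S) u) =ᵐ[volume] a + b := by
    filter_upwards [Lp.coeFn_sub (T u) (S u), hT u, hS u, hGm.coeFn_toLp] with x a1 a2 a3 a4
    have e : ((T - S) u : Hbd n) = T u - S u := rfl
    rw [e, a1, Pi.sub_apply, a2, a3, a4]
    by_cases hx : x ∈ s
    · simp [hx, a, b, G0, mul_sub, hf]
    · simp [hx, a, b, hf]
  have hα1 : AEStronglyMeasurable (sᶜ.indicator α) volume := hα.1.indicator hsm.compl
  have hα2 : AEStronglyMeasurable (s.indicator α) volume := hα.1.indicator hsm
  have hfm : AEStronglyMeasurable f volume := (Lp.memLp f).1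
  have ham : AEStronglyMeasurable a volume := hα1.mul hfm
  have hkm : AEStronglyMeasurable (fun x => inner ℂ (k x) f) volume :=
    (hkc.inner continuous_const).aestronglyMeasurable
  have hbm : AEStronglyMeasurable b volume := hα2.mul (hfm.sub hkm)
  have hna : eLpNorm a 2 volume ≤ ENNReal.ofReal (ε / 3 * ‖u‖) := by
    have h1 : eLpNorm a 2 volume ≤ ENNReal.ofReal η * eLpNorm f 2 volume := by
      refine eLpNorm_le_mul_eLpNorm_of_ae_le_mul (Eventually.of_forall fun x => ?_) 2
      rw [norm_mul]
      refine mul_le_mul_of_nonneg_right ?_ (norm_nonneg _)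
      by_cases hx : x ∈ s
      · simpa [hx] using hη.le
      · simpa [hx] using hss x hx
    refine h1.trans ?_
    rw [← Lp.enorm_def, ← ofReal_norm, ← ENNReal.ofReal_mul hη.le]
    refine ENNReal.ofReal_le_ofReal ?_
    calc η * ‖f‖ ≤ η * (‖K₀‖ * ‖u‖) := mul_le_mul_of_nonneg_left (K₀.le_opNorm u) hη.le
      _ = η * ‖K₀‖ * ‖u‖ := by ring
      _ ≤ _ := mul_le_mul_of_nonneg_right hη' (norm_nonneg _)
  have hnb : eLpNorm b 2 volume ≤ ENNReal.ofReal (ε / 3 * ‖u‖) := by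
    have h1 : eLpNorm b 2 volume ≤
        ENNReal.ofReal A * eLpNorm (fun x => f x - inner ℂ (k x) f) 2 volume := by
      refine eLpNorm_le_mul_eLpNorm_of_ae_le_mul ?_ 2
      filter_upwards [hA] with x hx
      rw [norm_mul]
      refine mul_le_mul_of_nonneg_right ?_ (norm_nonneg _)
      exact (norm_indicator_le_norm_self _ _).trans hx
    have h2 : eLpNorm (fun x => f x - inner ℂ (k x) f) 2 volume ≤
        ENNReal.ofReal (C * δ * ‖u‖) := by
      simp only [hk]
      refine avg_bound hδ f fun h hh => (hC h u).trans ?_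
      gcongr
    refine h1.trans ((mul_le_mul_right h2 _).trans ?_)
    rw [← ENNReal.ofReal_mul hA0]
    refine ENNReal.ofReal_le_ofReal ?_
    rw [← mul_assoc]
    exact mul_le_mul_of_nonneg_right hδ' (norm_nonneg _)
  rw [Lp.norm_def, eLpNorm_congr_ae hab]
  refine ENNReal.toReal_le_of_le_ofReal (by positivity) ?_
  refine (eLpNorm_add_le ham hbm (by norm_num)).trans ((add_le_add hna hnb).trans ?_)
  rw [← ENNReal.ofReal_add (by positivity) (by positivity)]
  exact ENNReal.ofReal_le_ofReal (by linarith)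

end RobinHS
end
end

section
/- Let K be a Hilbert space, let K₀ : K → L²(ℝⁿ) be a bounded everywhere defined operator with ran K₀ ⊂ H^{3/2}(ℝⁿ), and let α ∈ L^∞(ℝⁿ). If α has compact support, or if n > 3 and α ∈ L^{2n/3}(ℝⁿ), then α K₀ belongs to the weak Schatten–von Neumann class S_{2n/3,∞}. -/
open MeasureTheory Filter Topology

noncomputable section

namespace RobinHS

set_option linter.unusedSectionVars false
section AbstractAux
variable {H G : Type*} [NormedAddCommGroup H] [InnerProductSpace ℂ H] [CompleteSpace H]
  [NormedAddCommGroup G] [InnerProductSpace ℂ G] [CompleteSpace G]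

lemma sNum_le_aux (T F : H →L[ℂ] G) (k : ℕ)
    (hF : LinearMap.rank F.toLinearMap ≤ (k : Cardinal)) : sNum T k ≤ ‖T - F‖ := by
  unfold sNum
  exact ciInf_le ⟨0, by rintro _ ⟨F, rfl⟩; exact norm_nonneg _⟩
    (⟨F, hF⟩ : {F : H →L[ℂ] G // LinearMap.rank F.toLinearMap ≤ (k : Cardinal)})

lemma compact_of_rank (F : H →L[ℂ] G) (k : ℕ)
    (hF : LinearMap.rank F.toLinearMap ≤ (k : Cardinal)) : IsCompactOperator ⇑F := by
  have hfd : FiniteDimensional ℂ (LinearMap.range F.toLinearMap) := by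
    rw [FiniteDimensional, ← Module.rank_lt_aleph0_iff]
    exact lt_of_le_of_lt hF (Cardinal.natCast_lt_aleph0)
  have hprop : ProperSpace (LinearMap.range F.toLinearMap) := FiniteDimensional.proper ℂ _
  let F' : H →L[ℂ] (LinearMap.range F.toLinearMap) :=
    F.codRestrict _ (fun x => LinearMap.mem_range_self _ x)
  have h1 : IsCompactOperator ⇑F' := by
    refine ⟨Metric.closedBall 0 ‖F'‖, isCompact_closedBall _ _, ?_⟩
    refine Filter.mem_of_superset (Metric.closedBall_mem_nhds (0 : H) one_pos) ?_
    intro x hx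
    simp only [Set.mem_preimage, mem_closedBall_zero_iff] at hx ⊢
    calc ‖F' x‖ ≤ ‖F'‖ * ‖x‖ := F'.le_opNorm x
      _ ≤ ‖F'‖ * 1 := by gcongr
      _ = _ := mul_one _
  exact h1.clm_comp (LinearMap.range F.toLinearMap).subtypeL

lemma memWeakSchatten_of_bound (T : H →L[ℂ] G) (p : ℝ) (hp : 0 < p) (C : ℝ)
    (h : ∀ k : ℕ, sNum T k ≤ C * ((k : ℝ) + 1) ^ (-(1 / p))) : MemWeakSchatten p T := by
  refine ⟨?_, C, h⟩
  have hlim : Tendsto (fun k : ℕ => C * ((k : ℝ) + 1) ^ (-(1 / p))) atTop (𝓝 0) := by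
    have h1 : Tendsto (fun k : ℕ => ((k : ℝ) + 1)) atTop atTop :=
      tendsto_atTop_add_const_right _ _ tendsto_natCast_atTop_atTop
    have h2 := (tendsto_rpow_neg_atTop (y := 1 / p) (by positivity)).comp h1
    simpa using h2.const_mul C
  have hF : ∀ k : ℕ, ∃ F : H →L[ℂ] G, LinearMap.rank F.toLinearMap ≤ (k : Cardinal) ∧
      ‖T - F‖ < C * ((k : ℝ) + 1) ^ (-(1 / p)) + 1 / ((k : ℝ) + 1) := by
    intro k
    have : Nonempty {F : H →L[ℂ] G // LinearMap.rank F.toLinearMap ≤ (k : Cardinal)} :=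
      ⟨⟨0, by simp⟩⟩
    have hlt : sNum T k < C * ((k : ℝ) + 1) ^ (-(1 / p)) + 1 / ((k : ℝ) + 1) :=
      lt_of_le_of_lt (h k) (by linarith [show (0:ℝ) < 1 / ((k : ℝ) + 1) by positivity])
    obtain ⟨F, hF⟩ := exists_lt_of_ciInf_lt hlt
    exact ⟨F.1, F.2, hF⟩
  choose F hF1 hF2 using hF
  refine isCompactOperator_of_tendsto (l := atTop) (F := F) ?_
    (Eventually.of_forall fun k => compact_of_rank (F k) k (hF1 k))
  rw [tendsto_iff_norm_sub_tendsto_zero]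
  have hlim2 := hlim.add (tendsto_one_div_add_atTop_nhds_zero_nat (𝕜 := ℝ))
  rw [add_zero] at hlim2
  refine squeeze_zero (fun _ => norm_nonneg _) (fun k => ?_) hlim2
  rw [norm_sub_rev]
  exact (hF2 k).le

/-- greedy Hilbert--Schmidt approximation -/
lemma exists_finrank_of_HS (A : H →L[ℂ] G) (S : ℝ)
    (hA : ∀ (m : ℕ) (v : Fin m → H), Orthonormal ℂ v → ∑ j, ‖A (v j)‖ ^ 2 ≤ S) (k : ℕ) :
    ∃ F : H →L[ℂ] G, LinearMap.rank F.toLinearMap ≤ (k : Cardinal) ∧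
      ‖A - F‖ ≤ Real.sqrt (S / (k + 1)) := by
  classical
  set a := Real.sqrt (S / (k + 1)) with ha
  have hS : 0 ≤ S := by
    simpa using hA 0 (fun i => i.elim0) ⟨fun i => i.elim0, fun i => i.elim0⟩
  have ha2 : ((k : ℝ) + 1) * a ^ 2 = S := by
    rw [ha, Real.sq_sqrt (by positivity)]; field_simp
  let Pm : ℕ → Prop := fun m => ∃ v : Fin m → H, Orthonormal ℂ v ∧ ∀ j, a < ‖A (v j)‖
  have hP0 : Pm 0 := ⟨fun i => i.elim0, ⟨fun i => i.elim0, fun i => i.elim0⟩, fun i => i.elim0⟩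
  have hPle : ∀ m, Pm m → m ≤ k := by
    rintro m ⟨v, hv, hva⟩
    by_contra! hlt
    have h1 := hA m v hv
    have h0 : (0:ℕ) < m := by omega
    have h2 : ∑ j : Fin m, a ^ 2 < ∑ j, ‖A (v j)‖ ^ 2 := by
      refine Finset.sum_lt_sum_of_nonempty ⟨⟨0, h0⟩, Finset.mem_univ _⟩ fun j _ => ?_
      exact pow_lt_pow_left₀ (hva j) (Real.sqrt_nonneg _) two_ne_zero
    simp only [Finset.sum_const, Finset.card_univ, Fintype.card_fin, nsmul_eq_mul] at h2
    have h3 : ((k : ℝ) + 1) * a ^ 2 ≤ m * a ^ 2 := by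
      gcongr; exact_mod_cast hlt
    linarith
  obtain ⟨m, hm, hmax⟩ : ∃ m, Pm m ∧ ¬ Pm (m + 1) := by
    by_contra! hcon
    have : ∀ m, Pm m := fun m => Nat.rec hP0 (fun m ih => hcon m ih) m
    have := hPle (k + 1) (this _)
    omega
  obtain ⟨v, hv, hva⟩ := hm
  set V : Submodule ℂ H := Submodule.span ℂ (Set.range v) with hV
  have hVfd : FiniteDimensional ℂ V := FiniteDimensional.span_of_finite ℂ (Set.finite_range v)
  refine ⟨A.comp V.starProjection, ?_, ?_⟩
  · have h2 : LinearMap.rank (A.comp V.starProjection).toLinearMap ≤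
        Module.rank ℂ (Submodule.span ℂ
          ((Finset.univ.image fun j => A (v j) : Finset G) : Set G)) := by
      refine Submodule.rank_mono ?_
      rintro _ ⟨x, rfl⟩
      have hx : V.starProjection x ∈ V := Submodule.starProjection_apply_mem V x
      have hx2 : A (V.starProjection x) ∈ V.map A.toLinearMap := ⟨_, hx, rfl⟩
      have hmap : V.map A.toLinearMap = Submodule.span ℂ
          ((Finset.univ.image fun j => A (v j) : Finset G) : Set G) := by
        rw [hV, Submodule.map_span, ← Set.range_comp]
        simp [Function.comp_def]
      rw [hmap] at hx2
      exact hx2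
    refine h2.trans ((rank_span_finset_le _).trans ?_)
    have h3 : (Finset.univ.image fun j => A (v j) : Finset G).card ≤ m := by
      simpa using Finset.card_image_le (s := (Finset.univ : Finset (Fin m))) (f := fun j => A (v j))
    exact_mod_cast h3.trans (hPle m ⟨v, hv, hva⟩)
  · refine ContinuousLinearMap.opNorm_le_bound _ (Real.sqrt_nonneg _) fun x => ?_
    set w := x - V.starProjection x with hw
    have hwV : w ∈ Vᗮ := Submodule.sub_starProjection_mem_orthogonal x
    have hwx : ‖w‖ ≤ ‖x‖ := by
      have := V.norm_sq_eq_add_norm_sq_starProjection x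
      have hh : Vᗮ.starProjection x = w := by
        rw [Submodule.starProjection_orthogonal]; rfl
      rw [hh] at this
      nlinarith [norm_nonneg w, norm_nonneg x, sq_nonneg ‖V.starProjection x‖]
    have hAw : (A - A.comp V.starProjection) x = A w := by
      simp [hw]
    rw [hAw]
    refine le_trans ?_ (mul_le_mul_of_nonneg_left hwx (Real.sqrt_nonneg _))
    by_contra! hlt
    have hw0 : w ≠ 0 := by
      rintro h0; rw [h0] at hlt; simp at hlt
    have hwn : 0 < ‖w‖ := norm_pos_iff.mpr hw0
    apply hmax
    set e : H := ((‖w‖⁻¹ : ℝ) : ℂ) • w with he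
    have hen : ‖e‖ = 1 := by
      rw [he, norm_smul, Complex.norm_real, norm_inv, norm_norm]; field_simp
    have heV : ∀ j, inner ℂ (v j) e = 0 := fun j => by
      rw [he, inner_smul_right, (Submodule.mem_orthogonal V w).1 hwV (v j)
        (Submodule.subset_span ⟨j, rfl⟩), mul_zero]
    refine ⟨Fin.snoc v e, ?_, ?_⟩
    · refine ⟨fun i => ?_, fun i j hij => ?_⟩
      · refine Fin.lastCases ?_ (fun i => ?_) i
        · simpa using hen
        · simpa using hv.1 i
      · revert hij
        refine Fin.lastCases ?_ (fun i => ?_) i <;> refine Fin.lastCases ?_ (fun j => ?_) j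
        · intro h; exact absurd rfl h
        · intro _; simp only [Fin.snoc_last, Fin.snoc_castSucc]
          rw [← inner_conj_symm, heV j, map_zero]
        · intro _; simp only [Fin.snoc_last, Fin.snoc_castSucc]; exact heV i
        · intro h; simp only [Fin.snoc_castSucc]
          exact hv.2 (fun h' => h (by rw [h']))
    · intro j
      refine Fin.lastCases ?_ (fun i => ?_) j
      · simp only [Fin.snoc_last]
        rw [he, map_smul, norm_smul, Complex.norm_real, norm_inv, norm_norm]
        rw [lt_inv_mul_iff₀ hwn, mul_comm]; exact hlt
      · simpa using hva i

end AbstractAux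

/-- construct a bounded operator from a pointwise formula -/
lemma exists_clm {n : ℕ} {K : Type*} [NormedAddCommGroup K] [InnerProductSpace ℂ K]
    (R : K → Bdy n → ℂ) (hm : ∀ u, AEStronglyMeasurable (R u) (volume : Measure (Bdy n)))
    (hadd : ∀ u v, R (u + v) =ᵐ[volume] fun x => R u x + R v x)
    (hsmul : ∀ (c : ℂ) u, R (c • u) =ᵐ[volume] fun x => c * R u x)
    (C : ℝ) (hC : 0 ≤ C)
    (hb : ∀ u, ∫⁻ x, ‖R u x‖ₑ ^ 2 ≤ ENNReal.ofReal ((C * ‖u‖) ^ 2)) :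
    ∃ A : K →L[ℂ] Hbd n, (∀ u, ⇑(A u) =ᵐ[volume] R u) ∧ ‖A‖ ≤ C := by
  have hen : ∀ u, eLpNorm (R u) 2 (volume : Measure (Bdy n)) ≤ ENNReal.ofReal (C * ‖u‖) := by
    intro u
    have h1 := eLpNorm_nnreal_pow_eq_lintegral (f := R u) (μ := (volume : Measure (Bdy n)))
      (p := 2) two_ne_zero
    simp only [ENNReal.coe_ofNat, NNReal.coe_ofNat, ENNReal.rpow_ofNat] at h1
    have h2 := hb u
    rw [← h1, ENNReal.ofReal_pow (by positivity)] at h2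
    exact (ENNReal.pow_le_pow_left_iff two_ne_zero).1 h2
  have hL : ∀ u, MemLp (R u) 2 (volume : Measure (Bdy n)) := fun u =>
    ⟨hm u, (hen u).trans_lt ENNReal.ofReal_lt_top⟩
  let L : K →ₗ[ℂ] Hbd n :=
    { toFun := fun u => (hL u).toLp _
      map_add' := fun u v => by
        rw [← MemLp.toLp_add]
        exact MemLp.toLp_congr _ _ (hadd u v)
      map_smul' := fun c u => by
        rw [RingHom.id_apply, ← MemLp.toLp_const_smul]
        exact MemLp.toLp_congr _ _ (hsmul c u) }
  refine ⟨L.mkContinuous C fun u => ?_, fun u => MemLp.coeFn_toLp (hL u),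
    LinearMap.mkContinuous_norm_le _ hC _⟩
  change ‖(hL u).toLp _‖ ≤ _
  rw [Lp.norm_toLp]
  exact ENNReal.toReal_le_of_le_ofReal (by positivity) (hen u)

lemma Hbd_norm_sq {n : ℕ} (f : Hbd n) (g : Bdy n → ℂ) (h : ⇑f =ᵐ[volume] g) :
    ∫⁻ x, ‖g x‖ₑ ^ 2 = ENNReal.ofReal (‖f‖ ^ 2) := by
  have h1 := eLpNorm_nnreal_pow_eq_lintegral (f := f) (μ := (volume : Measure (Bdy n)))
      (p := 2) two_ne_zero
  simp only [ENNReal.coe_ofNat, NNReal.coe_ofNat, ENNReal.rpow_ofNat] at h1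
  rw [ENNReal.ofReal_pow (norm_nonneg _), Lp.norm_def, ENNReal.ofReal_toReal (Lp.eLpNorm_ne_top f),
    h1]
  refine lintegral_congr_ae ?_
  filter_upwards [h] with x hx
  rw [hx]

lemma memLp_two_of {X : Type*} [MeasurableSpace X] {μ : Measure X} {f : X → ℂ}
    (hm : AEStronglyMeasurable f μ) (h : ∫⁻ x, ‖f x‖ₑ ^ 2 ∂μ < ⊤) : MemLp f 2 μ := by
  refine ⟨hm, ?_⟩
  have h1 := eLpNorm_nnreal_pow_eq_lintegral (f := f) (μ := μ) (p := 2) two_ne_zero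
  simp only [ENNReal.coe_ofNat, NNReal.coe_ofNat, ENNReal.rpow_ofNat] at h1
  rw [← h1] at h
  by_contra hcon
  rw [not_lt, top_le_iff] at hcon
  rw [hcon] at h
  simp at h

lemma lintegral_of_memLp {X : Type*} [MeasurableSpace X] {μ : Measure X} {f : X → ℂ}
    (h : MemLp f 2 μ) : ∫⁻ x, ‖f x‖ₑ ^ 2 ∂μ < ⊤ := by
  have h1 := eLpNorm_nnreal_pow_eq_lintegral (f := f) (μ := μ) (p := 2) two_ne_zero
  simp only [ENNReal.coe_ofNat, NNReal.coe_ofNat, ENNReal.rpow_ofNat] at h1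
  rw [← h1]
  exact ENNReal.pow_lt_top h.2

/-- Cauchy--Schwarz -/
lemma sq_lintegral_le_aux {X : Type*} [MeasurableSpace X] (μ : Measure X) (f : X → ENNReal)
    (hf : AEMeasurable f μ) : (∫⁻ x, f x ∂μ) ^ 2 ≤ μ Set.univ * ∫⁻ x, f x ^ 2 ∂μ := by
  have h := ENNReal.lintegral_mul_le_Lp_mul_Lq μ Real.HolderConjugate.two_two
    (f := fun _ => 1) (g := f) aemeasurable_const hf
  simp only [Pi.mul_apply, one_mul, one_pow, lintegral_const, ENNReal.rpow_ofNat] at h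
  calc (∫⁻ x, f x ∂μ) ^ 2 ≤ (μ Set.univ ^ (1 / (2:ℝ)) * (∫⁻ x, f x ^ 2 ∂μ) ^ (1 / (2:ℝ))) ^ 2 := by
        gcongr
    _ = _ := by
        rw [mul_pow, ← ENNReal.rpow_natCast, ← ENNReal.rpow_natCast, ← ENNReal.rpow_mul,
          ← ENNReal.rpow_mul]
        norm_num

end RobinHS

namespace RobinHS
section Cubes
variable {n : ℕ}

def idx (k : ℕ) (x : Bdy n) : Fin n → ℤ := fun i => ⌊(2:ℝ) ^ k * x i⌋

def Qc (k : ℕ) (m : Fin n → ℤ) : Set (Bdy n) := {x | idx k x = m}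

def eb (k : ℕ) (b : Option (Fin n)) (x : Bdy n) : ℝ :=
  match b with
  | none => 1
  | some i => Real.sqrt 12 * (Int.fract ((2:ℝ) ^ k * x i) - 1 / 2)

def Pk (k : ℕ) (φ : Bdy n → ℂ) (x : Bdy n) : ℂ :=
  (2:ℂ) ^ (k * n) * ∑ b : Option (Fin n), (eb k b x : ℂ) *
    ∫ y in Qc k (idx k x), (eb k b y : ℂ) * φ y

lemma measurable_idx (k : ℕ) : Measurable (idx k : Bdy n → Fin n → ℤ) := by
  unfold idx
  refine measurable_pi_lambda _ fun i => Int.measurable_floor.comp ?_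
  fun_prop

lemma measurableSet_Qc (k : ℕ) (m : Fin n → ℤ) : MeasurableSet (Qc k m) :=
  measurable_idx k (measurableSet_singleton m)

lemma mem_Qc {k : ℕ} {m : Fin n → ℤ} {x : Bdy n} : x ∈ Qc k m ↔ idx k x = m := Iff.rfl

lemma mem_Qc_iff {k : ℕ} {m : Fin n → ℤ} {x : Bdy n} :
    x ∈ Qc k m ↔ ∀ i, x i ∈ Set.Ico ((m i : ℝ) / 2 ^ k) (((m i : ℝ) + 1) / 2 ^ k) := by
  rw [mem_Qc, funext_iff]
  refine forall_congr' fun i => ?_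
  rw [idx, Int.floor_eq_iff, Set.mem_Ico, div_le_iff₀ (by positivity), lt_div_iff₀ (by positivity),
    mul_comm]

lemma volume_Qc (k : ℕ) (m : Fin n → ℤ) :
    volume (Qc k m) = ENNReal.ofReal (((2:ℝ) ^ (k * n))⁻¹) := by
  have h : Qc k m = WithLp.ofLp ⁻¹' (Set.pi Set.univ fun i : Fin n =>
      Set.Ico ((m i : ℝ) / 2 ^ k) (((m i : ℝ) + 1) / 2 ^ k)) := by
    ext x
    rw [mem_Qc_iff]; simp
  rw [h, (PiLp.volume_preserving_ofLp (Fin n)).measure_preimage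
    (MeasurableSet.univ_pi fun i => measurableSet_Ico).nullMeasurableSet, Real.volume_pi_Ico]
  have : ∀ i : Fin n, ((m i : ℝ) + 1) / 2 ^ k - (m i : ℝ) / 2 ^ k = (2 ^ k)⁻¹ := fun i => by ring
  simp only [this, Finset.prod_const, Finset.card_univ, Fintype.card_fin]
  rw [← ENNReal.ofReal_pow (by positivity), inv_pow, pow_mul]

lemma measurable_eb (k : ℕ) (b : Option (Fin n)) : Measurable (eb k b) := by
  cases b with
  | none => exact measurable_const
  | some i =>
    unfold eb
    have : Measurable fun x : Bdy n => (2:ℝ) ^ k * x i := by fun_prop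
    exact (this.fract.sub_const _).const_mul _

lemma abs_eb_le (k : ℕ) (b : Option (Fin n)) (x : Bdy n) : |eb k b x| ≤ 2 := by
  cases b with
  | none => simp [eb]
  | some i =>
    unfold eb
    simp only
    rw [abs_mul, abs_of_nonneg (Real.sqrt_nonneg _)]
    have h1 : Real.sqrt 12 ≤ 4 := by
      rw [Real.sqrt_le_left (by norm_num)]; norm_num
    have h2 : |Int.fract ((2:ℝ) ^ k * x i) - 1 / 2| ≤ 1 / 2 := by
      rw [abs_le]; constructor <;>
      linarith [Int.fract_nonneg ((2:ℝ) ^ k * x i), Int.fract_lt_one ((2:ℝ) ^ k * x i)]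
    calc _ ≤ (4:ℝ) * (1/2) := by gcongr
      _ = 2 := by norm_num

/-- one-dimensional factors -/
def wl (k : ℕ) (μ : ℤ) (p : Prop) [Decidable p] (t : ℝ) : ℝ :=
  if p then Real.sqrt 12 * (2 ^ k * t - μ - 1 / 2) else 1

lemma wl_int (k : ℕ) (μ : ℤ) (p q : Prop) [Decidable p] [Decidable q] :
    (2:ℝ) ^ k * ∫ t in Set.Ico ((μ : ℝ) / 2 ^ k) (((μ : ℝ) + 1) / 2 ^ k),
      wl k μ p t * wl k μ q t = if (p ↔ q) then 1 else 0 := by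
  have hk : (2:ℝ) ^ k ≠ 0 := by positivity
  rw [integral_Ico_eq_integral_Ioc, ← intervalIntegral.integral_of_le (by gcongr; linarith)]
  have key : ∀ F : ℝ → ℝ, (2:ℝ) ^ k * ∫ t in ((μ : ℝ) / 2 ^ k)..(((μ : ℝ) + 1) / 2 ^ k),
      F (2 ^ k * t - μ) = ∫ s in (0:ℝ)..1, F s := by
    intro F
    rw [intervalIntegral.integral_comp_mul_sub (f := F) hk]
    rw [smul_eq_mul, ← mul_assoc, mul_inv_cancel₀ hk, one_mul]
    congr 1 <;> field_simp <;> ring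
  have h12 : Real.sqrt 12 * Real.sqrt 12 = 12 := Real.mul_self_sqrt (by norm_num)
  by_cases hp : p <;> by_cases hq : q <;> simp only [wl, hp, hq, if_true, if_false, iff_true,
    iff_false, not_true]
  · rw [key (fun s => Real.sqrt 12 * (s - 1/2) * (Real.sqrt 12 * (s - 1 / 2)))]
    have : ∀ s : ℝ, Real.sqrt 12 * (s - 1/2) * (Real.sqrt 12 * (s - 1 / 2)) =
        12 * (s ^ 2 - s + 1/4) := fun s => by
      rw [show Real.sqrt 12 * (s - 1/2) * (Real.sqrt 12 * (s - 1 / 2)) =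
        (Real.sqrt 12 * Real.sqrt 12) * (s - 1/2)^2 by ring, h12]; ring
    simp only [this]
    rw [intervalIntegral.integral_const_mul, intervalIntegral.integral_add, 
      intervalIntegral.integral_sub]
    · simp; norm_num
    all_goals exact Continuous.intervalIntegrable (by fun_prop) _ _
  · rw [key (fun s => Real.sqrt 12 * (s - 1/2) * 1)]
    simp [intervalIntegral.integral_sub]
  · rw [key (fun s => 1 * (Real.sqrt 12 * (s - 1/2)))]
    simp [intervalIntegral.integral_sub]
  · rw [key (fun s => 1 * 1)]; simp

lemma eb_eq_prod (k : ℕ) (b : Option (Fin n)) (m : Fin n → ℤ) (x : Bdy n) (hx : x ∈ Qc k m) :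
    eb k b x = ∏ l, wl k (m l) (b = some l) (x l) := by
  classical
  cases b with
  | none => simp [eb, wl]
  | some i =>
    rw [Finset.prod_eq_single i]
    · have : ⌊(2:ℝ) ^ k * x i⌋ = m i := congrFun (mem_Qc.1 hx) i
      simp only [eb, wl, if_true, Int.fract, this]
    · intro j _ hj
      have : ¬ (some i = some j) := fun h => hj (Option.some.inj h).symm
      simp [wl, this]
    · simp

lemma eb_orth (k : ℕ) (m : Fin n → ℤ) (b c : Option (Fin n)) :
    (2:ℝ) ^ (k * n) * ∫ y in Qc k m, eb k b y * eb k c y = if b = c then 1 else 0 := by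
  classical
  let f : Fin n → ℝ → ℝ := fun l => (Set.Ico ((m l : ℝ) / 2 ^ k) (((m l : ℝ) + 1) / 2 ^ k)).indicator
    fun t => wl k (m l) (b = some l) t * wl k (m l) (c = some l) t
  have h1 : ∀ y : Bdy n, (Qc k m).indicator (fun y => eb k b y * eb k c y) y = ∏ l, f l (y l) := by
    intro y
    by_cases hy : y ∈ Qc k m
    · rw [Set.indicator_of_mem hy, eb_eq_prod k b m y hy, eb_eq_prod k c m y hy,
        ← Finset.prod_mul_distrib]
      refine Finset.prod_congr rfl fun l _ => ?_
      simp only [f]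
      rw [Set.indicator_of_mem (mem_Qc_iff.1 hy l)]
    · rw [Set.indicator_of_notMem hy]
      rw [mem_Qc_iff, not_forall] at hy
      obtain ⟨l, hl⟩ := hy
      exact (Finset.prod_eq_zero (Finset.mem_univ l) (Set.indicator_of_notMem hl _)).symm
  rw [← integral_indicator (measurableSet_Qc k m)]
  simp only [h1]
  have h2 : ∫ y : Bdy n, ∏ l, f l (y l) = ∫ y : Fin n → ℝ, ∏ l, f l (y l) :=
    (PiLp.volume_preserving_ofLp (Fin n)).integral_comp
      (MeasurableEquiv.toLp 2 (Fin n → ℝ)).symm.measurableEmbedding (fun y => ∏ l, f l (y l))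
  rw [h2, integral_fintype_prod_volume_eq_prod]
  have h3 : (2:ℝ) ^ (k * n) = ∏ _l : Fin n, (2:ℝ) ^ k := by simp [pow_mul]
  rw [h3, ← Finset.prod_mul_distrib]
  have h4 : ∀ l, (2:ℝ) ^ k * ∫ t, f l t = if (b = some l ↔ c = some l) then 1 else 0 := by
    intro l
    rw [← wl_int k (m l), ← integral_indicator measurableSet_Ico]
  simp only [h4]
  by_cases hbc : b = c
  · simp [hbc]
  · rw [if_neg hbc]
    have : ∃ l, ¬ (b = some l ↔ c = some l) := by
      by_contra! hcon
      apply hbc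
      cases b with
      | none =>
        cases c with
        | none => rfl
        | some j => exact absurd ((hcon j).2 rfl) (by simp)
      | some i => exact ((hcon i).1 rfl).symm
    obtain ⟨l, hl⟩ := this
    exact Finset.prod_eq_zero (Finset.mem_univ l) (if_neg hl)

end Cubes
end RobinHS

namespace RobinHS
section Cubes2
variable {n : ℕ}

lemma intOn_eb_mul {k : ℕ} {b : Option (Fin n)} {s : Set (Bdy n)} {φ : Bdy n → ℂ}
    (h : IntegrableOn φ s) : IntegrableOn (fun y => (eb k b y : ℂ) * φ y) s := by
  refine Integrable.bdd_mul (c := 2) h ?_ ?_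
  · exact (Complex.measurable_ofReal.comp (measurable_eb k b)).aestronglyMeasurable
  · exact Eventually.of_forall fun x => by
      rw [Complex.norm_real]; exact abs_eb_le k b x

lemma Pk_congr {k : ℕ} {φ ψ : Bdy n → ℂ} (h : φ =ᵐ[volume] ψ) (x : Bdy n) :
    Pk k φ x = Pk k ψ x := by
  unfold Pk
  congr 1
  refine Finset.sum_congr rfl fun b _ => ?_
  congr 1
  refine integral_congr_ae (ae_restrict_of_ae ?_)
  filter_upwards [h] with y hy
  rw [hy]

lemma Pk_add {k : ℕ} {φ ψ : Bdy n → ℂ} (x : Bdy n) (hφ : IntegrableOn φ (Qc k (idx k x)))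
    (hψ : IntegrableOn ψ (Qc k (idx k x))) :
    Pk k (fun y => φ y + ψ y) x = Pk k φ x + Pk k ψ x := by
  unfold Pk
  rw [← mul_add, ← Finset.sum_add_distrib]
  congr 1
  refine Finset.sum_congr rfl fun b _ => ?_
  rw [← mul_add, ← integral_add (intOn_eb_mul hφ) (intOn_eb_mul hψ)]
  simp only [mul_add]

lemma Pk_smul {k : ℕ} {φ : Bdy n → ℂ} (c : ℂ) (x : Bdy n) :
    Pk k (fun y => c * φ y) x = c * Pk k φ x := by
  unfold Pk
  simp only [Finset.mul_sum]
  refine Finset.sum_congr rfl fun b _ => ?_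
  have : ∫ y in Qc k (idx k x), (eb k b y : ℂ) * (c * φ y) =
      c * ∫ y in Qc k (idx k x), (eb k b y : ℂ) * φ y := by
    rw [← integral_const_mul]
    congr 1
    funext y
    ring
  rw [this]; ring

lemma Pk_sub {k : ℕ} {φ ψ : Bdy n → ℂ} (x : Bdy n) (hφ : IntegrableOn φ (Qc k (idx k x)))
    (hψ : IntegrableOn ψ (Qc k (idx k x))) :
    Pk k (fun y => φ y - ψ y) x = Pk k φ x - Pk k ψ x := by
  have h := Pk_add (k := k) (φ := φ) (ψ := fun y => (-1) * ψ y) x hφ (hψ.const_mul _)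
  rw [Pk_smul] at h
  simpa [sub_eq_add_neg] using h

lemma Pk_repr {k : ℕ} {ψ : Bdy n → ℂ} {m : Fin n → ℤ} (c : Option (Fin n) → ℂ)
    (hc : ∀ y ∈ Qc k m, ψ y = ∑ b, c b * (eb k b y : ℂ)) (x : Bdy n) (hx : x ∈ Qc k m) :
    Pk k ψ x = ψ x := by
  classical
  have hfin : volume (Qc k m) ≠ ⊤ := by rw [volume_Qc]; exact ENNReal.ofReal_ne_top
  have hie : ∀ b, IntegrableOn (fun y => (eb k b y : ℂ)) (Qc k m) := fun b => by
    have := intOn_eb_mul (k := k) (b := b) (integrableOn_const (C := (1:ℂ)) hfin)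
    simpa using this
  have h1 : ∀ b, (2:ℂ) ^ (k * n) * ∫ y in Qc k m, (eb k b y : ℂ) * ψ y = c b := by
    intro b
    have e1 : ∫ y in Qc k m, (eb k b y : ℂ) * ψ y =
        ∫ y in Qc k m, ∑ b', c b' * ((eb k b y * eb k b' y : ℝ) : ℂ) := by
      refine setIntegral_congr_fun (measurableSet_Qc k m) fun y hy => ?_
      simp only [hc y hy, Finset.mul_sum]
      refine Finset.sum_congr rfl fun b' _ => ?_
      push_cast; ring
    rw [e1, integral_finsetSum]
    · simp_rw [integral_const_mul, integral_complex_ofReal]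
      rw [Finset.mul_sum]
      have : ∀ b', (2:ℂ) ^ (k * n) * (c b' * ((∫ y in Qc k m, eb k b y * eb k b' y : ℝ) : ℂ)) =
          if b = b' then c b' else 0 := by
        intro b'
        have h := eb_orth k m b b'
        have h' : (2:ℂ) ^ (k * n) * ((∫ y in Qc k m, eb k b y * eb k b' y : ℝ) : ℂ) =
          if b = b' then 1 else 0 := by
          have h2 := congrArg (fun r : ℝ => (r : ℂ)) h
          simp only [Complex.ofReal_mul, Complex.ofReal_pow, Complex.ofReal_ofNat] at h2
          rw [h2]; split_ifs <;> simp
        rw [mul_left_comm, h']; split_ifs <;> simp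
      simp [this]
    · intro b' _
      refine Integrable.const_mul ?_ _
      have := intOn_eb_mul (k := k) (b := b) (hie b')
      simp only [Complex.ofReal_mul]
      exact this
  have hidx : idx k x = m := hx
  unfold Pk
  rw [hidx, hc x hx, Finset.mul_sum]
  refine Finset.sum_congr rfl fun b _ => ?_
  rw [← h1 b]; ring

/-- affine functions are combinations of the basis on each cube -/
lemma aff_repr (k : ℕ) (m : Fin n → ℤ) (a : ℂ) (v : Fin n → ℂ) :
    ∃ c : Option (Fin n) → ℂ, ∀ y ∈ Qc k m, a + ∑ i, v i * (y i : ℂ) = ∑ b, c b * (eb k b y : ℂ) := by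
  refine ⟨fun b => match b with
    | none => a + ∑ i, v i * (((m i : ℝ) + 1/2) / 2 ^ k : ℝ)
    | some i => v i * (((2:ℝ) ^ k * Real.sqrt 12)⁻¹ : ℝ), fun y hy => ?_⟩
  rw [Fintype.sum_option]
  have h12 : Real.sqrt 12 ≠ 0 := by positivity
  have hk : (2:ℝ) ^ k ≠ 0 := by positivity
  simp only [eb, Complex.ofReal_one, mul_one]
  rw [add_assoc, ← Finset.sum_add_distrib]
  congr 1
  refine Finset.sum_congr rfl fun i _ => ?_
  rw [mul_assoc, ← mul_add]
  congr 1
  have : ⌊(2:ℝ) ^ k * y i⌋ = m i := congrFun (mem_Qc.1 hy) i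
  rw [← Complex.ofReal_mul, ← Complex.ofReal_add]
  congr 1
  rw [Int.fract, this]
  field_simp
  ring

/-- `Pk` produces affine functions on each cube -/
lemma Pk_aff (k : ℕ) (φ : Bdy n → ℂ) (m : Fin n → ℤ) :
    ∃ (a : ℂ) (v : Fin n → ℂ), ∀ y ∈ Qc k m, Pk k φ y = a + ∑ i, v i * (y i : ℂ) := by
  obtain ⟨c, hcd⟩ : ∃ c : Option (Fin n) → ℂ, c = fun b => (2:ℂ) ^ (k * n) *
    ∫ y in Qc k m, (eb k b y : ℂ) * φ y := ⟨_, rfl⟩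
  refine ⟨c none - ∑ i, c (some i) * (Real.sqrt 12 * ((m i : ℝ) + 1/2) : ℝ),
    fun i => c (some i) * (Real.sqrt 12 * 2 ^ k : ℝ), fun y hy => ?_⟩
  have h0 : Pk k φ y = ∑ b, c b * (eb k b y : ℂ) := by
    have hidx : idx k y = m := hy
    unfold Pk
    rw [hidx, Finset.mul_sum]
    refine Finset.sum_congr rfl fun b _ => ?_
    simp only [hcd]; ring
  rw [h0, Fintype.sum_option, sub_add_eq_add_sub, add_sub_assoc, ← Finset.sum_sub_distrib]
  simp only [eb, Complex.ofReal_one, mul_one]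
  congr 1
  refine Finset.sum_congr rfl fun i _ => ?_
  have : ⌊(2:ℝ) ^ k * y i⌋ = m i := congrFun (mem_Qc.1 hy) i
  rw [mul_assoc, ← mul_sub, ← Complex.ofReal_mul, ← Complex.ofReal_sub]
  congr 2
  rw [Int.fract, this]
  ring

lemma idx_succ (k : ℕ) (x y : Bdy n) (h : idx (k+1) x = idx (k+1) y) : idx k x = idx k y := by
  have key : ∀ z : Bdy n, idx k z = fun i => idx (k+1) z i / 2 := by
    intro z
    funext i
    have := Int.floor_div_natCast ((2:ℝ) ^ (k+1) * z i) 2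
    simp only [idx]
    rw [show (2:ℝ) ^ k * z i = (2:ℝ) ^ (k+1) * z i / ((2:ℕ):ℝ) by push_cast; ring, this]
    rfl
  rw [key x, key y, h]

def Cn (n : ℕ) : ENNReal := 16 * ((n:ENNReal) + 1) ^ 2

lemma two_pow_mul_vol (k : ℕ) (m : Fin n → ℤ) :
    (2:ENNReal) ^ (k * n) * volume (Qc k m) = 1 := by
  rw [volume_Qc, show (2:ENNReal) = ENNReal.ofReal 2 by simp,
    ← ENNReal.ofReal_pow (by norm_num), ← ENNReal.ofReal_mul (by positivity),
    mul_inv_cancel₀ (by positivity), ENNReal.ofReal_one]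

lemma Pk_pointwise (k : ℕ) (φ : Bdy n → ℂ) (hφ : AEStronglyMeasurable φ volume) (x : Bdy n) :
    ‖Pk k φ x‖ₑ ^ 2 ≤ Cn n * 2 ^ (k * n) * ∫⁻ y in Qc k (idx k x), ‖φ y‖ₑ ^ 2 := by
  set I := ∫⁻ y in Qc k (idx k x), ‖φ y‖ₑ with hI
  have heb : ∀ b y, ‖((eb k b y : ℝ) : ℂ)‖ₑ ≤ 2 := fun b (y : Bdy n) => by
    rw [← ofReal_norm, Complex.norm_real]
    refine (ENNReal.ofReal_le_ofReal (abs_eb_le k b y)).trans (by simp)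
  have h1 : ‖Pk k φ x‖ₑ ≤ 4 * (n + 1) * 2 ^ (k * n) * I := by
    unfold Pk
    rw [enorm_mul]
    have e1 : ‖(2:ℂ) ^ (k * n)‖ₑ = 2 ^ (k * n) := by
      rw [enorm_pow]; congr 1
      rw [← ofReal_norm]; simp
    rw [e1]
    have e2 : ‖∑ b, (eb k b x : ℂ) * ∫ y in Qc k (idx k x), (eb k b y : ℂ) * φ y‖ₑ ≤
        ∑ b : Option (Fin n), 2 * (2 * I) := by
      refine (enorm_sum_le _ _).trans (Finset.sum_le_sum fun b _ => ?_)
      rw [enorm_mul]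
      gcongr
      · exact heb b x
      · refine (enorm_integral_le_lintegral_enorm _).trans ?_
        rw [hI, ← lintegral_const_mul' _ _ (by simp)]
        refine lintegral_mono fun y => ?_
        rw [enorm_mul]
        gcongr
        exact heb b y
    calc _ ≤ (2:ENNReal) ^ (k * n) * ∑ b : Option (Fin n), 2 * (2 * I) := by gcongr
      _ = _ := by
        simp only [Finset.sum_const, Finset.card_univ, Fintype.card_option, Fintype.card_fin,
          nsmul_eq_mul]
        push_cast; ring
  have h2 : I ^ 2 ≤ volume (Qc k (idx k x)) * ∫⁻ y in Qc k (idx k x), ‖φ y‖ₑ ^ 2 := by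
    have := sq_lintegral_le_aux (volume.restrict (Qc k (idx k x))) (fun y => ‖φ y‖ₑ)
      hφ.restrict.enorm
    simpa using this
  calc ‖Pk k φ x‖ₑ ^ 2 ≤ (4 * (n + 1) * 2 ^ (k * n) * I) ^ 2 := by gcongr
    _ = Cn n * 2 ^ (k * n) * (2 ^ (k * n) * I ^ 2) := by unfold Cn; ring
    _ ≤ Cn n * 2 ^ (k * n) * (2 ^ (k * n) * (volume (Qc k (idx k x)) *
          ∫⁻ y in Qc k (idx k x), ‖φ y‖ₑ ^ 2)) := by gcongr
    _ = _ := by rw [← mul_assoc (2 ^ (k * n)) (volume _), two_pow_mul_vol, one_mul]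

lemma Pk_measurable (k : ℕ) (φ : Bdy n → ℂ) : Measurable (Pk k φ) := by
  unfold Pk
  refine Measurable.const_mul (Finset.measurable_sum _ fun b _ => ?_) _
  refine (Complex.measurable_ofReal.comp (measurable_eb k b)).mul ?_
  exact (measurable_of_countable (fun m : Fin n → ℤ =>
    ∫ y in Qc k m, (eb k b y : ℂ) * φ y)).comp (measurable_idx k)

lemma sum_Qc (k : ℕ) (F : Bdy n → ENNReal) :
    ∫⁻ x, F x = ∑' m, ∫⁻ x in Qc k m, F x := by
  rw [← lintegral_iUnion (fun m => measurableSet_Qc k m)]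
  · have : (⋃ m, Qc k m) = (Set.univ : Set (Bdy n)) := by
      ext x; simp [mem_Qc]
    rw [this, Measure.restrict_univ]
  · intro a b hab
    rw [Function.onFun, Set.disjoint_left]
    intro x hx hx'
    exact hab (hx.symm.trans hx')

lemma enorm_sub_sq_le (a b : ℂ) : ‖a - b‖ₑ ^ 2 ≤ 2 * ‖a‖ₑ ^ 2 + 2 * ‖b‖ₑ ^ 2 := by
  simp only [← ofReal_norm]
  rw [← ENNReal.ofReal_pow (norm_nonneg _), ← ENNReal.ofReal_pow (norm_nonneg _),
    ← ENNReal.ofReal_pow (norm_nonneg _), show (2:ENNReal) = ENNReal.ofReal 2 by simp,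
    ← ENNReal.ofReal_mul (by norm_num), ← ENNReal.ofReal_mul (by norm_num),
    ← ENNReal.ofReal_add (by positivity) (by positivity)]
  refine ENNReal.ofReal_le_ofReal ?_
  have := norm_sub_le a b
  nlinarith [sq_nonneg (‖a‖ - ‖b‖), norm_nonneg (a - b), norm_nonneg a, norm_nonneg b]

lemma Pk_local (k : ℕ) (m : Fin n → ℤ) (f : Bdy n → ℂ) (hf : AEStronglyMeasurable f volume)
    (hfi : IntegrableOn f (Qc k m)) (a : ℂ) (v : Fin n → ℂ) :
    ∫⁻ x in Qc k m, ‖f x - Pk k f x‖ₑ ^ 2 ≤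
      2 * (1 + Cn n) * ∫⁻ x in Qc k m, ‖f x - (a + ∑ i, v i * (x i : ℂ))‖ₑ ^ 2 := by
  obtain ⟨c, hc⟩ := aff_repr k m a v
  set ψ : Bdy n → ℂ := fun y => a + ∑ i, v i * (y i : ℂ) with hψ
  have hfin : volume (Qc k m) ≠ ⊤ := by rw [volume_Qc]; exact ENNReal.ofReal_ne_top
  have hψm : Continuous ψ := by
    simp only [hψ]
    refine continuous_const.add (continuous_finsetSum _ fun i _ => continuous_const.mul ?_)
    exact Complex.continuous_ofReal.comp (by fun_prop)
  have hψi : IntegrableOn ψ (Qc k m) := by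
    have h1 : IntegrableOn (fun y => ∑ b, c b * (eb k b y : ℂ)) (Qc k m) := by
      refine integrable_finsetSum _ fun b _ => Integrable.const_mul ?_ _
      have := intOn_eb_mul (k := k) (b := b) (integrableOn_const (C := (1:ℂ)) hfin)
      simp only [mul_one] at this
      exact this
    exact h1.congr_fun (fun y hy => (hc y hy).symm) (measurableSet_Qc k m)
  set N := ∫⁻ x in Qc k m, ‖f x - ψ x‖ₑ ^ 2 with hN
  have hpt : ∀ x ∈ Qc k m, ‖f x - Pk k f x‖ₑ ^ 2 ≤
      2 * ‖f x - ψ x‖ₑ ^ 2 + 2 * (Cn n * 2 ^ (k * n) * N) := by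
    intro x hx
    have hidx : idx k x = m := hx
    have h1 : Pk k (fun y => f y - ψ y) x = Pk k f x - ψ x := by
      rw [Pk_sub x (by rw [hidx]; exact hfi) (by rw [hidx]; exact hψi), Pk_repr c hc x hx]
    have h2 : f x - Pk k f x = (f x - ψ x) - Pk k (fun y => f y - ψ y) x := by
      rw [h1]; ring
    rw [h2]
    refine (enorm_sub_sq_le _ _).trans ?_
    gcongr
    have := Pk_pointwise k (fun y => f y - ψ y) (hf.sub hψm.aestronglyMeasurable) x
    rw [hidx] at this
    exact this
  calc ∫⁻ x in Qc k m, ‖f x - Pk k f x‖ₑ ^ 2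
      ≤ ∫⁻ x in Qc k m, (2 * ‖f x - ψ x‖ₑ ^ 2 + 2 * (Cn n * 2 ^ (k * n) * N)) :=
        setLIntegral_mono' (measurableSet_Qc k m) hpt
    _ = 2 * N + 2 * (Cn n * 2 ^ (k * n) * N) * volume (Qc k m) := by
        rw [lintegral_add_right _ measurable_const, lintegral_const_mul' _ _ (by simp)]
        simp [hN]
    _ = 2 * N + 2 * Cn n * N * (2 ^ (k * n) * volume (Qc k m)) := by ring
    _ = _ := by rw [two_pow_mul_vol]; ring

lemma intOn_Qc (k : ℕ) (m : Fin n → ℤ) {f : Bdy n → ℂ} (hf : MemLp f 2 volume) :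
    IntegrableOn f (Qc k m) := by
  have hfin : IsFiniteMeasure (volume.restrict (Qc k m)) :=
    ⟨by rw [Measure.restrict_apply_univ, volume_Qc]; exact ENNReal.ofReal_lt_top⟩
  exact (hf.restrict _).integrable one_le_two

lemma Pk_L2 (k : ℕ) (f : Bdy n → ℂ) (hf : MemLp f 2 volume) :
    ∫⁻ x, ‖f x - Pk k f x‖ₑ ^ 2 ≤ 2 * (1 + Cn n) * ∫⁻ x, ‖f x‖ₑ ^ 2 := by
  rw [sum_Qc k, sum_Qc k (fun x => ‖f x‖ₑ ^ 2), ← ENNReal.tsum_mul_left]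
  refine ENNReal.tsum_le_tsum fun m => ?_
  have := Pk_local k m f hf.1 (intOn_Qc k m hf) 0 0
  simpa using this

lemma Pk_global (k : ℕ) (f : Bdy n → ℂ) (hf : MemLp f 2 volume) (g : Fin n → Bdy n → ℂ) :
    ∫⁻ x, ‖f x - Pk k f x‖ₑ ^ 2 ≤ 2 * (1 + Cn n) * 2 ^ (k * n) *
      ∫⁻ y, ∫⁻ x in Qc k (idx k y), ‖f x - f y - ∑ i, g i y * ((x i - y i : ℝ) : ℂ)‖ₑ ^ 2 := by
  rw [sum_Qc k, sum_Qc k (fun y => ∫⁻ x in Qc k (idx k y), _), ← ENNReal.tsum_mul_left]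
  refine ENNReal.tsum_le_tsum fun m => ?_
  have h1 : ∫⁻ y in Qc k m, ∫⁻ x in Qc k m, ‖f x - Pk k f x‖ₑ ^ 2 ≤
      ∫⁻ y in Qc k m, 2 * (1 + Cn n) * ∫⁻ x in Qc k (idx k y),
        ‖f x - f y - ∑ i, g i y * ((x i - y i : ℝ) : ℂ)‖ₑ ^ 2 := by
    refine setLIntegral_mono' (measurableSet_Qc k m) fun y hy => ?_
    have hidx : idx k y = m := hy
    rw [hidx]
    refine (Pk_local k m f hf.1 (intOn_Qc k m hf) (f y - ∑ i, g i y * (y i : ℂ))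
      (fun i => g i y)).trans (le_of_eq ?_)
    congr 1
    refine lintegral_congr fun x => ?_
    congr 2
    have : ∑ i, g i y * ((x i - y i : ℝ) : ℂ) = ∑ i, g i y * (x i : ℂ) - ∑ i, g i y * (y i : ℂ) := by
      rw [← Finset.sum_sub_distrib]
      refine Finset.sum_congr rfl fun i _ => ?_
      push_cast; ring
    rw [this]; ring
  have hCn : (2 * (1 + Cn n)) ≠ ⊤ := by unfold Cn; finiteness
  rw [lintegral_const_mul' _ _ hCn, setLIntegral_const] at h1
  calc ∫⁻ x in Qc k m, ‖f x - Pk k f x‖ₑ ^ 2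
      = 2 ^ (k * n) * ((∫⁻ x in Qc k m, ‖f x - Pk k f x‖ₑ ^ 2) * volume (Qc k m)) := by
        rw [mul_left_comm, two_pow_mul_vol, mul_one]
    _ ≤ 2 ^ (k * n) * (2 * (1 + Cn n) * ∫⁻ y in Qc k m, ∫⁻ x in Qc k (idx k y),
        ‖f x - f y - ∑ i, g i y * ((x i - y i : ℝ) : ℂ)‖ₑ ^ 2) := by gcongr
    _ = _ := by ring

end Cubes2
end RobinHS

namespace RobinHS
section WeakD
variable {n : ℕ}

/-- Lebesgue measure on the unit interval -/
def nuI : Measure ℝ := volume.restrict (Set.Ioc 0 1)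

instance : IsProbabilityMeasure nuI := ⟨by simp [nuI]⟩

lemma lint_shift (h : Bdy n → ENNReal) (w : Bdy n) : ∫⁻ y, h (y + w) = ∫⁻ y, h y :=
  lintegral_add_right_eq_self h w

lemma memLp_shift {h : Bdy n → ℂ} (hm : Measurable h) (h2 : MemLp h 2 volume) (a : ℝ)
    (v : Bdy n) : MemLp (fun p : Bdy n × ℝ => h (p.1 + (a * p.2) • v)) 2
      ((volume : Measure (Bdy n)).prod nuI) := by
  have hmeas : Measurable (fun p : Bdy n × ℝ => h (p.1 + (a * p.2) • v)) :=
    hm.comp (by fun_prop)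
  refine memLp_two_of hmeas.aestronglyMeasurable ?_
  rw [lintegral_prod_symm _ (hmeas.enorm.pow_const 2).aemeasurable]
  simp only
  have : ∀ t : ℝ, ∫⁻ y, ‖h (y + (a * t) • v)‖ₑ ^ 2 = ∫⁻ y, ‖h y‖ₑ ^ 2 := fun t =>
    lint_shift (fun y => ‖h y‖ₑ ^ 2) _
  simp only [this, lintegral_const, measure_univ, mul_one]
  exact lintegral_of_memLp h2

lemma memLp_cc {ψ : Bdy n → ℝ} (hc : Continuous ψ) (hs : HasCompactSupport ψ) :
    MemLp (fun y => (ψ y : ℂ)) 2 (volume : Measure (Bdy n)) := by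
  have h1 : Continuous fun y => (ψ y : ℂ) := Complex.continuous_ofReal.comp hc
  have h2 : HasCompactSupport fun y => (ψ y : ℂ) := hs.comp_left (g := fun r : ℝ => (r:ℂ)) (by simp)
  exact h1.memLp_of_hasCompactSupport h2

lemma weakD_dir {f : Bdy n → ℂ} {g : Fin n → Bdy n → ℂ} (hf : MemLp f 2 volume)
    (hg : ∀ i, MemLp (g i) 2 volume) (hw : ∀ i, IsWeakDerivB n (bdirs n i) f (g i)) (v : Bdy n) :
    IsWeakDerivB n v f (fun y => ∑ i, (v i : ℂ) * g i y) := by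
  intro φ hφ
  have hd : ∀ w : Bdy n, Continuous fun y => fderiv ℝ φ y w := fun w =>
    (hφ.1.continuous_fderiv (by simp)).clm_apply continuous_const
  have hs : ∀ w : Bdy n, HasCompactSupport fun y => fderiv ℝ φ y w := fun w =>
    (hφ.2.fderiv (𝕜 := ℝ)).comp_left (g := fun L : Bdy n →L[ℝ] ℝ => L w) (by simp)
  have hv : v = ∑ i, v i • bdirs n i := by
    ext j
    simp [bdirs, Pi.single_apply]
  have e1 : ∀ y, f y * ((fderiv ℝ φ y v : ℝ) : ℂ) =
      ∑ i, (v i : ℂ) * (f y * ((fderiv ℝ φ y (bdirs n i) : ℝ) : ℂ)) := by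
    intro y
    conv_lhs => rw [hv]
    rw [map_sum, Complex.ofReal_sum, Finset.mul_sum]
    refine Finset.sum_congr rfl fun i _ => ?_
    rw [map_smul, smul_eq_mul]; push_cast; ring
  simp only [e1, Finset.sum_mul]
  rw [integral_finsetSum, integral_finsetSum, ← Finset.sum_neg_distrib]
  · refine Finset.sum_congr rfl fun i _ => ?_
    rw [integral_const_mul, hw i φ hφ, mul_neg, ← integral_const_mul]
    simp only [mul_assoc]
  · intro i _
    simp only [mul_assoc]
    exact ((hg i).integrable_mul (memLp_cc hφ.1.continuous hφ.2)).const_mul _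
  · intro i _
    exact (hf.integrable_mul (memLp_cc (hd _) (hs _))).const_mul _

lemma weak_taylor {f G : Bdy n → ℂ} (hfm : Measurable f) (hGm : Measurable G)
    (hf : MemLp f 2 volume) (hG : MemLp G 2 volume) (v : Bdy n) (hw : IsWeakDerivB n v f G) :
    ∀ᵐ y, f (y + v) - f y - ∫ t, G (y + t • v) ∂nuI = 0 := by
  have hGs : MemLp (fun p : Bdy n × ℝ => G (p.1 + p.2 • v)) 2
      ((volume : Measure (Bdy n)).prod nuI) := by simpa using memLp_shift hGm hG 1 v
  have hGsm : Measurable (fun p : Bdy n × ℝ => G (p.1 + p.2 • v)) := hGm.comp (by fun_prop)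
  have hF : MemLp (fun y => ∫ t, G (y + t • v) ∂nuI) 2 volume := by
    have hFm : StronglyMeasurable (fun y => ∫ t, G (y + t • v) ∂nuI) :=
      hGsm.stronglyMeasurable.integral_prod_right
    refine memLp_two_of hFm.aestronglyMeasurable ?_
    have h3 := lintegral_of_memLp hGs
    rw [lintegral_prod _ (hGsm.enorm.pow_const 2).aemeasurable] at h3
    refine lt_of_le_of_lt (lintegral_mono fun y => ?_) h3
    have h4 := sq_lintegral_le_aux nuI (fun t => ‖G (y + t • v)‖ₑ)
      (hGsm.comp measurable_prodMk_left).enorm.aemeasurable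
    rw [measure_univ, one_mul] at h4
    refine le_trans ?_ h4
    gcongr
    exact enorm_integral_le_lintegral_enorm _
  have hfv : MemLp (fun y => f (y + v)) 2 volume :=
    hf.comp_measurePreserving (measurePreserving_add_right volume v)
  refine ae_eq_zero_of_integral_contDiff_smul_eq_zero ?_ ?_
  · exact ((hfv.sub hf).sub hF).locallyIntegrable one_le_two
  intro φ hφ hφs
  have hφ1 : ContDiff ℝ (⊤ : ℕ∞) φ := hφ
  have hd : Continuous fun y => fderiv ℝ φ y v :=
    (hφ1.continuous_fderiv (by simp)).clm_apply continuous_const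
  have hs : HasCompactSupport fun y => fderiv ℝ φ y v :=
    (hφs.fderiv (𝕜 := ℝ)).comp_left (g := fun L : Bdy n →L[ℝ] ℝ => L v) (by simp)
  have hφc := memLp_cc hφ1.continuous hφs
  have hφm : Measurable fun y => (φ y : ℂ) := (Complex.continuous_ofReal.comp hφ1.continuous).measurable
  have hψm : Measurable fun y => ((fderiv ℝ φ y v : ℝ) : ℂ) :=
    (Complex.continuous_ofReal.comp hd).measurable
  have hψc := memLp_cc hd hs
  -- step 1
  have s1 : ∫ y, f (y + v) * (φ y : ℂ) = ∫ y, f y * (φ (y - v) : ℂ) := by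
    rw [← integral_add_right_eq_self (fun y => f y * (φ (y - v) : ℂ)) v]
    simp
  have i1 : Integrable (fun y => f y * (φ (y - v) : ℂ)) := by
    refine hf.integrable_mul (q := 2) ?_
    exact hφc.comp_measurePreserving (measurePreserving_sub_right volume v)
  have i2 : Integrable (fun y => f y * (φ y : ℂ)) := hf.integrable_mul hφc
  -- step 2 : fundamental theorem of calculus
  have s2 : ∀ y, f y * (φ (y - v) : ℂ) - f y * (φ y : ℂ) =
      - ∫ t, f y * ((fderiv ℝ φ (y - t • v) v : ℝ) : ℂ) ∂nuI := by
    intro y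
    have hder : ∀ t : ℝ, HasDerivAt (fun t : ℝ => φ (y - t • v)) (- fderiv ℝ φ (y - t • v) v) t := by
      intro t
      have h1 : HasDerivAt (fun t : ℝ => y - t • v) (-v) t := by
        simpa using ((hasDerivAt_id t).smul_const v).const_sub y
      have h2 : HasFDerivAt φ (fderiv ℝ φ (y - t • v)) (y - t • v) :=
        (hφ1.differentiable (by simp) _).hasFDerivAt
      have := h2.comp_hasDerivAt t h1
      rw [map_neg] at this
      exact this
    have hcont : Continuous fun t : ℝ => fderiv ℝ φ (y - t • v) v :=
      hd.comp (f := fun t : ℝ => y - t • v) (by fun_prop)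
    have h3 := intervalIntegral.integral_eq_sub_of_hasDerivAt (a := 0) (b := 1)
      (fun t _ => hder t) (hcont.neg.intervalIntegrable _ _)
    rw [intervalIntegral.integral_of_le zero_le_one, integral_neg] at h3
    simp only [one_smul, zero_smul, sub_zero] at h3
    rw [integral_const_mul, integral_complex_ofReal, ← mul_sub, ← Complex.ofReal_sub, ← h3]
    simp [nuI]
  have iA : Integrable (fun p : Bdy n × ℝ => f p.1 * ((fderiv ℝ φ (p.1 - p.2 • v) v : ℝ) : ℂ))
      ((volume : Measure (Bdy n)).prod nuI) := by
    have h1 := memLp_shift hfm hf 0 v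
    have h2 := memLp_shift hψm hψc (-1) v
    have := h1.integrable_mul h2
    refine this.congr (Eventually.of_forall fun p => ?_)
    simp [sub_eq_add_neg]
  have iB : Integrable (fun p : Bdy n × ℝ => G (p.1 + p.2 • v) * (φ p.1 : ℂ))
      ((volume : Measure (Bdy n)).prod nuI) := by
    have h1 := memLp_shift hφm hφc 0 v
    have := hGs.integrable_mul h1
    refine this.congr (Eventually.of_forall fun p => ?_)
    simp
  have s3 : ∫ y, (f y * (φ (y - v) : ℂ) - f y * (φ y : ℂ)) =
      ∫ y, ∫ t, G (y + t • v) * (φ y : ℂ) ∂nuI := by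
    simp only [s2]
    rw [integral_neg, integral_integral_swap (f := fun y t => f y * ((fderiv ℝ φ (y - t • v) v : ℝ) : ℂ)) iA,
      integral_integral_swap (f := fun y t => G (y + t • v) * (φ y : ℂ)) iB, ← integral_neg]
    congr 1
    funext t
    have hφt : IsTestB n (fun y => φ (y - t • v)) := by
      refine ⟨hφ1.comp (contDiff_id.sub contDiff_const), ?_⟩
      have := hφs.comp_homeomorph (Homeomorph.addRight (-(t • v)))
      simpa [Function.comp_def, sub_eq_add_neg] using this
    have h1 := hw _ hφt
    have h2 : ∀ y, fderiv ℝ (fun y => φ (y - t • v)) y = fderiv ℝ φ (y - t • v) := fun y =>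
      fderiv_comp_sub (f := φ) (t • v)
    simp only [h2] at h1
    rw [h1, neg_neg, ← integral_add_right_eq_self (fun y => G y * (φ (y - t • v) : ℂ)) (t • v)]
    simp
  have e : ∀ y, φ y • (f (y + v) - f y - ∫ t, G (y + t • v) ∂nuI) =
      f (y + v) * (φ y : ℂ) - f y * (φ y : ℂ) - ∫ t, G (y + t • v) * (φ y : ℂ) ∂nuI := by
    intro y
    rw [integral_mul_const, Complex.real_smul]
    ring
  simp only [e]
  have i3 : Integrable (fun y => f (y + v) * (φ y : ℂ)) := hfv.integrable_mul hφc
  have i4 : Integrable (fun y => ∫ t, G (y + t • v) * (φ y : ℂ) ∂nuI) := iB.integral_prod_left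
  rw [integral_sub (f := fun y => f (y + v) * (φ y : ℂ) - f y * (φ y : ℂ)) (i3.sub i2) i4, integral_sub i3 i2, s1, ← integral_sub i1 i2, s3,
    sub_self]

lemma sq_sum_le_aux (a : Fin n → ENNReal) : (∑ i, a i) ^ 2 ≤ n * ∑ i, a i ^ 2 := by
  have := sq_lintegral_le_aux (Measure.count : Measure (Fin n)) a
    (measurable_of_countable _).aemeasurable
  simpa [lintegral_count] using this

lemma taylor_bound {f : Bdy n → ℂ} {g : Fin n → Bdy n → ℂ} (hfm : Measurable f)
    (hgm : ∀ i, Measurable (g i)) (hf : MemLp f 2 volume)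
    (hg : ∀ i, MemLp (g i) 2 volume) (hw : ∀ i, IsWeakDerivB n (bdirs n i) f (g i)) (v : Bdy n) :
    ∫⁻ y, ‖f (y + v) - f y - ∑ i, g i y * (v i : ℂ)‖ₑ ^ 2 ≤
      n * ‖v‖ₑ ^ 2 * ∑ i, ∫⁻ t, (∫⁻ y, ‖g i (y + t • v) - g i y‖ₑ ^ 2) ∂nuI := by
  set G : Bdy n → ℂ := fun y => ∑ i, (v i : ℂ) * g i y with hGd
  have hGm : Measurable G := Finset.measurable_sum _ fun i _ => (hgm i).const_mul _
  have hG : MemLp G 2 volume := memLp_finsetSum _ fun i _ => (hg i).const_mul _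
  have hGs : MemLp (fun p : Bdy n × ℝ => G (p.1 + p.2 • v)) 2
      ((volume : Measure (Bdy n)).prod nuI) := by simpa using memLp_shift hGm hG 1 v
  have hGsm : Measurable (fun p : Bdy n × ℝ => G (p.1 + p.2 • v)) := hGm.comp (by fun_prop)
  have hdm : Measurable (fun p : Bdy n × ℝ => ‖G (p.1 + p.2 • v) - G p.1‖ₑ) :=
    (hGsm.sub (hGm.comp measurable_fst)).enorm
  have hdmi : ∀ i, Measurable (fun p : Bdy n × ℝ => ‖g i (p.1 + p.2 • v) - g i p.1‖ₑ ^ 2) :=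
    fun i => ((((hgm i).comp (by fun_prop : Measurable fun p : Bdy n × ℝ => p.1 + p.2 • v))).sub
      ((hgm i).comp measurable_fst)).enorm.pow_const 2
  have hfin : ∀ᵐ y : Bdy n, ∫⁻ t, ‖G (y + t • v)‖ₑ ^ 2 ∂nuI < ⊤ := by
    have h3 := lintegral_of_memLp hGs
    rw [lintegral_prod _ (hGsm.enorm.pow_const 2).aemeasurable] at h3
    exact ae_lt_top (hGsm.enorm.pow_const 2).lintegral_prod_right' h3.ne
  have hstep : ∀ᵐ y, ‖f (y + v) - f y - ∑ i, g i y * (v i : ℂ)‖ₑ ^ 2 ≤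
      ∫⁻ t, ‖G (y + t • v) - G y‖ₑ ^ 2 ∂nuI := by
    filter_upwards [hfin, weak_taylor hfm hGm hf hG v (weakD_dir hf hg hw v)] with y hy1 hy2
    have hint : Integrable (fun t => G (y + t • v)) nuI :=
      (memLp_two_of (hGsm.comp measurable_prodMk_left).aestronglyMeasurable hy1).integrable
        one_le_two
    have e1 : f (y + v) - f y - ∑ i, g i y * (v i : ℂ) = ∫ t, (G (y + t • v) - G y) ∂nuI := by
      rw [integral_sub hint (integrable_const _), ← sub_eq_zero.1 hy2, integral_const]
      simp [hGd, mul_comm]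
    rw [e1]
    have h4 := sq_lintegral_le_aux nuI (fun t => ‖G (y + t • v) - G y‖ₑ)
      (hdm.comp measurable_prodMk_left).aemeasurable
    rw [measure_univ, one_mul] at h4
    refine le_trans ?_ h4
    gcongr
    exact enorm_integral_le_lintegral_enorm _
  have hpt : ∀ (y : Bdy n) (t : ℝ), ‖G (y + t • v) - G y‖ₑ ^ 2 ≤
      n * ‖v‖ₑ ^ 2 * ∑ i, ‖g i (y + t • v) - g i y‖ₑ ^ 2 := by
    intro y t
    have e1 : G (y + t • v) - G y = ∑ i, (v i : ℂ) * (g i (y + t • v) - g i y) := by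
      simp only [hGd, ← Finset.sum_sub_distrib, mul_sub]
    calc ‖G (y + t • v) - G y‖ₑ ^ 2 ≤ (∑ i, ‖v‖ₑ * ‖g i (y + t • v) - g i y‖ₑ) ^ 2 := by
          rw [e1]
          gcongr
          refine (enorm_sum_le _ _).trans (Finset.sum_le_sum fun i _ => ?_)
          rw [enorm_mul]
          gcongr
          rw [← ofReal_norm, ← ofReal_norm, Complex.norm_real]
          exact ENNReal.ofReal_le_ofReal (PiLp.norm_apply_le v i)
      _ ≤ n * ∑ i, (‖v‖ₑ * ‖g i (y + t • v) - g i y‖ₑ) ^ 2 := sq_sum_le_aux _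
      _ = _ := by
          simp only [mul_pow, ← Finset.mul_sum]; ring
  calc ∫⁻ y, ‖f (y + v) - f y - ∑ i, g i y * (v i : ℂ)‖ₑ ^ 2
      ≤ ∫⁻ y, ∫⁻ t, ‖G (y + t • v) - G y‖ₑ ^ 2 ∂nuI := lintegral_mono_ae hstep
    _ ≤ ∫⁻ y, ∫⁻ t, n * ‖v‖ₑ ^ 2 * ∑ i, ‖g i (y + t • v) - g i y‖ₑ ^ 2 ∂nuI :=
        lintegral_mono fun y => lintegral_mono fun t => hpt y t
    _ = ∫⁻ t, (∫⁻ y, n * ‖v‖ₑ ^ 2 * ∑ i, ‖g i (y + t • v) - g i y‖ₑ ^ 2) ∂nuI := by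
        refine lintegral_lintegral_swap ?_
        exact ((Finset.measurable_sum _ fun i _ => hdmi i).const_mul _).aemeasurable
    _ = _ := by
        have hne : (n * ‖v‖ₑ ^ 2 : ENNReal) ≠ ⊤ := by finiteness
        have : ∀ t : ℝ, ∫⁻ y, n * ‖v‖ₑ ^ 2 * ∑ i, ‖g i (y + t • v) - g i y‖ₑ ^ 2 =
            n * ‖v‖ₑ ^ 2 * ∑ i, ∫⁻ y, ‖g i (y + t • v) - g i y‖ₑ ^ 2 := by
          intro t
          rw [lintegral_const_mul' _ _ hne, lintegral_finsetSum]
          intro i _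
          have hmt : Measurable fun y : Bdy n => (y, t) := by fun_prop
          have hcc := (hdmi i).comp hmt
          exact hcc
        simp only [this]
        rw [lintegral_const_mul' _ _ hne, lintegral_finsetSum]
        exact fun i _ => (hdmi i).lintegral_prod_left'

end WeakD
end RobinHS

namespace RobinHS
section Kern
variable {n : ℕ}

lemma geo_le (a : ENNReal) (ha : 2 ≤ a) (N : ℕ) : ∑ k ∈ Finset.range (N+1), a ^ k ≤ 2 * a ^ N := by
  induction N with
  | zero => simp
  | succ N ih =>
    rw [Finset.sum_range_succ]
    calc _ ≤ 2 * a ^ N + a ^ (N+1) := by gcongr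
      _ ≤ a * a ^ N + a ^ (N+1) := by gcongr
      _ = _ := by ring

lemma geo_ind (m : ℕ) (hm : 1 ≤ m) (Z : ENNReal) :
    ∑' k : ℕ, (if (2:ENNReal) ^ k ≤ Z then ((2:ENNReal) ^ m) ^ k else 0) ≤ 2 * Z ^ m := by
  refine ENNReal.tsum_le_of_sum_range_le fun N => ?_
  induction N with
  | zero => simp
  | succ N ih =>
    by_cases h : (2:ENNReal) ^ N ≤ Z
    · calc _ ≤ ∑ k ∈ Finset.range (N+1), ((2:ENNReal) ^ m) ^ k :=
            Finset.sum_le_sum fun k _ => by split_ifs <;> simp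
        _ ≤ 2 * ((2:ENNReal) ^ m) ^ N := geo_le _ (le_self_pow₀ (by norm_num) (by omega)) N
        _ = 2 * ((2:ENNReal) ^ N) ^ m := by rw [← pow_mul, ← pow_mul, mul_comm m]
        _ ≤ _ := by gcongr
    · rw [Finset.sum_range_succ, if_neg h, add_zero]; exact ih

def Wk (v : Bdy n) : ENNReal := (‖v‖ₑ ^ (n+1))⁻¹

lemma measurable_Wk : Measurable (Wk : Bdy n → ENNReal) :=
  (measurable_id.enorm.pow_const _).inv

lemma kern_le (v : Bdy n) :
    (∑' k : ℕ, (if (2:ENNReal) ^ k * ‖v‖ₑ ≤ n then ((2:ENNReal) ^ (n+3)) ^ k else 0)) * ‖v‖ₑ ^ 2 ≤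
      2 * (n:ENNReal) ^ (n+3) * Wk v := by
  rcases eq_or_ne v 0 with rfl | hv
  · simp
  have h0 : ‖v‖ₑ ≠ 0 := by simpa using hv
  have ht : ‖v‖ₑ ≠ ⊤ := enorm_ne_top
  have h1 : ∀ k : ℕ, ((2:ENNReal) ^ k * ‖v‖ₑ ≤ n ↔ (2:ENNReal) ^ k ≤ n / ‖v‖ₑ) := fun k =>
    (ENNReal.le_div_iff_mul_le (Or.inl h0) (Or.inl ht)).symm
  simp only [h1]
  calc _ ≤ 2 * ((n:ENNReal) / ‖v‖ₑ) ^ (n+3) * ‖v‖ₑ ^ 2 := by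
        gcongr; exact geo_ind (n+3) (by omega) _
    _ = 2 * (n:ENNReal) ^ (n+3) * (‖v‖ₑ⁻¹) ^ (n+1) * (‖v‖ₑ⁻¹ * ‖v‖ₑ) ^ 2 := by
        rw [div_eq_mul_inv, mul_pow, pow_add (‖v‖ₑ⁻¹) (n+1) 2]
        ring
    _ = _ := by rw [ENNReal.inv_mul_cancel h0 ht, one_pow, mul_one, Wk, ENNReal.inv_pow]

lemma cube_diam {k : ℕ} {x y : Bdy n} (h : idx k x = idx k y) :
    (2:ENNReal) ^ k * ‖x - y‖ₑ ≤ n := by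
  have h1 : ∀ i, |(x - y) i| ≤ (2 ^ k)⁻¹ := by
    intro i
    have hi := congrFun h i
    have hx := (mem_Qc_iff (k := k) (m := idx k x) (x := x)).1 rfl i
    have hy := (mem_Qc_iff (k := k) (m := idx k y) (x := y)).1 rfl i
    rw [← h] at hy
    rw [Set.mem_Ico, add_div, one_div] at hx hy
    rw [PiLp.sub_apply, abs_le]
    constructor <;> linarith [hx.1, hx.2, hy.1, hy.2]
  have h2 : ‖x - y‖ ≤ n * (2 ^ k)⁻¹ := by
    rw [EuclideanSpace.norm_eq]
    refine Real.sqrt_le_iff.2 ⟨by positivity, ?_⟩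
    calc ∑ i, ‖(x - y) i‖ ^ 2 ≤ ∑ i : Fin n, ((2:ℝ) ^ k)⁻¹ ^ 2 := by
          refine Finset.sum_le_sum fun i _ => ?_
          rw [Real.norm_eq_abs]
          gcongr
          exact h1 i
      _ = n * ((2:ℝ) ^ k)⁻¹ ^ 2 := by simp
      _ ≤ (n * ((2:ℝ) ^ k)⁻¹) ^ 2 := by
          rw [mul_pow]
          gcongr
          rcases Nat.eq_zero_or_pos n with h | h
          · simp [h]
          · exact le_self_pow₀ (by exact_mod_cast h) (by norm_num)
  have h3 : (2:ℝ) ^ k * ‖x - y‖ ≤ n := by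
    calc (2:ℝ) ^ k * ‖x - y‖ ≤ 2 ^ k * (n * (2 ^ k)⁻¹) := by gcongr
      _ = n := by field_simp
  calc (2:ENNReal) ^ k * ‖x - y‖ₑ = ENNReal.ofReal ((2:ℝ) ^ k * ‖x - y‖) := by
        rw [ENNReal.ofReal_mul (by positivity), ENNReal.ofReal_pow (by norm_num), ofReal_norm]
        simp
    _ ≤ ENNReal.ofReal n := ENNReal.ofReal_le_ofReal h3
    _ = n := by simp

/-- the modulus of continuity -/
def om (g : Bdy n → ℂ) (v : Bdy n) : ENNReal := ∫⁻ y, ‖g (y + v) - g y‖ₑ ^ 2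

lemma measurable_om_aux {g : Bdy n → ℂ} (hg : Measurable g) :
    Measurable fun p : Bdy n × Bdy n => ‖g (p.2 + p.1) - g p.2‖ₑ ^ 2 := by
  have h1 : Measurable fun p : Bdy n × Bdy n => g (p.2 + p.1) := hg.comp (by fun_prop)
  have h2 : Measurable fun p : Bdy n × Bdy n => g p.2 := hg.comp (by fun_prop)
  exact (h1.sub h2).enorm.pow_const 2

lemma measurable_om {g : Bdy n → ℂ} (hg : Measurable g) : Measurable (om g) :=
  (measurable_om_aux hg).lintegral_prod_right'

lemma E_bound {f : Bdy n → ℂ} {g : Fin n → Bdy n → ℂ} (hfm : Measurable f)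
    (hgm : ∀ i, Measurable (g i)) (hf : MemLp f 2 volume)
    (hg : ∀ i, MemLp (g i) 2 volume) (hw : ∀ i, IsWeakDerivB n (bdirs n i) f (g i)) (k : ℕ) :
    ∫⁻ x, ‖f x - Pk k f x‖ₑ ^ 2 ≤ 2 * (1 + Cn n) * 2 ^ (k * n) *
      ∫⁻ v : Bdy n, (if (2:ENNReal) ^ k * ‖v‖ₑ ≤ n then 1 else 0) *
        (n * ‖v‖ₑ ^ 2 * ∑ i, ∫⁻ t, om (g i) (t • v) ∂nuI) := by
  refine (Pk_global k f hf g).trans (mul_le_mul' le_rfl ?_)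
  have hHm : Measurable fun p : Bdy n × Bdy n =>
      ‖f (p.1 + p.2) - f p.1 - ∑ i, g i p.1 * (p.2 i : ℂ)‖ₑ ^ 2 := by
    have h1 : Measurable fun p : Bdy n × Bdy n => f (p.1 + p.2) := hfm.comp (by fun_prop)
    have h2 : Measurable fun p : Bdy n × Bdy n => f p.1 := hfm.comp (by fun_prop)
    have h3 : ∀ i, Measurable fun p : Bdy n × Bdy n => g i p.1 * (p.2 i : ℂ) := fun i =>
      ((hgm i).comp measurable_fst).mul (Complex.measurable_ofReal.comp (by fun_prop))
    exact ((h1.sub h2).sub (Finset.measurable_sum _ fun i _ => h3 i)).enorm.pow_const 2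
  have hIm : Measurable fun v : Bdy n => (if (2:ENNReal) ^ k * ‖v‖ₑ ≤ n then (1:ENNReal) else 0) := by
    refine Measurable.ite ?_ measurable_const measurable_const
    exact measurableSet_le (measurable_id.enorm.const_mul _) measurable_const
  calc ∫⁻ y, ∫⁻ x in Qc k (idx k y), ‖f x - f y - ∑ i, g i y * ((x i - y i : ℝ) : ℂ)‖ₑ ^ 2
      ≤ ∫⁻ y, ∫⁻ x, (if (2:ENNReal) ^ k * ‖x - y‖ₑ ≤ n then 1 else 0) *
          ‖f x - f y - ∑ i, g i y * ((x i - y i : ℝ) : ℂ)‖ₑ ^ 2 := by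
        refine lintegral_mono fun y => ?_
        rw [← lintegral_indicator (measurableSet_Qc _ _)]
        refine lintegral_mono fun x => ?_
        by_cases hx : x ∈ Qc k (idx k y)
        · rw [Set.indicator_of_mem hx, if_pos (cube_diam hx), one_mul]
        · rw [Set.indicator_of_notMem hx]; exact zero_le
    _ = ∫⁻ y, ∫⁻ v : Bdy n, (if (2:ENNReal) ^ k * ‖v‖ₑ ≤ n then 1 else 0) *
          ‖f (y + v) - f y - ∑ i, g i y * (v i : ℂ)‖ₑ ^ 2 := by
        refine lintegral_congr fun y => ?_
        rw [← lintegral_add_left_eq_self (fun x : Bdy n => (if (2:ENNReal) ^ k * ‖x - y‖ₑ ≤ n then 1 else 0) *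
          ‖f x - f y - ∑ i, g i y * ((x i - y i : ℝ) : ℂ)‖ₑ ^ 2) y]
        simp
    _ = ∫⁻ v : Bdy n, ∫⁻ y, (if (2:ENNReal) ^ k * ‖v‖ₑ ≤ n then 1 else 0) *
          ‖f (y + v) - f y - ∑ i, g i y * (v i : ℂ)‖ₑ ^ 2 := by
        refine lintegral_lintegral_swap ?_
        exact ((hIm.comp measurable_snd).mul hHm).aemeasurable
    _ ≤ _ := by
        refine lintegral_mono fun v => ?_
        simp only
        rw [lintegral_const_mul' _ _ (by split_ifs <;> simp)]
        gcongr
        exact taylor_bound hfm hgm hf hg hw v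

lemma om_scale {g : Bdy n → ℂ} (t : ℝ) (ht : t ∈ Set.Ioc (0:ℝ) 1) :
    ∫⁻ v : Bdy n, Wk v * om g (t • v) ≤ ∫⁻ v, Wk v * om g v := by
  have ht0 : t ≠ 0 := ht.1.ne'
  have h1 : ∀ v : Bdy n, Wk v * om g (t • v) =
      ENNReal.ofReal (t ^ (n+1)) * (Wk (t • v) * om g (t • v)) := by
    intro v
    rw [← mul_assoc]
    congr 1
    unfold Wk
    rw [enorm_smul, mul_pow, ENNReal.mul_inv (Or.inl (by simp [ht0])) (Or.inl (by finiteness)),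
      ← mul_assoc, ENNReal.ofReal_pow ht.1.le, Real.enorm_of_nonneg ht.1.le,
      ENNReal.mul_inv_cancel (by simpa using ht.1) (by simp), one_mul]
  have h2 : ∫⁻ v : Bdy n, Wk (t • v) * om g (t • v) =
      ENNReal.ofReal |(t ^ n)⁻¹| * ∫⁻ v : Bdy n, Wk v * om g v := by
    have he : MeasurableEmbedding fun v : Bdy n => t • v :=
      (Homeomorph.smulOfNeZero t ht0).measurableEmbedding
    rw [← he.lintegral_map (fun v => Wk v * om g v) , Measure.map_addHaar_smul volume ht0,
      lintegral_smul_measure]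
    simp
  simp only [h1]
  rw [lintegral_const_mul' _ _ (by simp), h2, ← mul_assoc, ← ENNReal.ofReal_mul (by have := ht.1; positivity)]
  have : t ^ (n+1) * |(t ^ n)⁻¹| ≤ 1 := by
    rw [abs_of_pos (by have := ht.1; positivity), pow_succ, mul_assoc, mul_comm t, ← mul_assoc,
      mul_inv_cancel₀ (pow_ne_zero _ ht0), one_mul]
    exact ht.2
  calc _ ≤ ENNReal.ofReal 1 * ∫⁻ v : Bdy n, Wk v * om g v := by gcongr
    _ = _ := by simp

lemma gag_fin {g : Bdy n → ℂ} (hgm : Measurable g) (hG : GagB n g) :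
    ∫⁻ v, Wk v * om g v < ⊤ := by
  have h1 : ∫⁻ v, Wk v * om g v = ∫⁻ y : Bdy n, ∫⁻ x, Wk (x - y) * ‖g x - g y‖ₑ ^ 2 := by
    calc _ = ∫⁻ v : Bdy n, ∫⁻ y, Wk v * ‖g (y + v) - g y‖ₑ ^ 2 := by
          refine lintegral_congr fun v => ?_
          rw [om, lintegral_const_mul]
          have hc := (measurable_om_aux hgm).comp (measurable_prodMk_left (x := v))
          exact hc
      _ = ∫⁻ y : Bdy n, ∫⁻ v, Wk v * ‖g (y + v) - g y‖ₑ ^ 2 := by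
          refine lintegral_lintegral_swap ?_
          exact ((measurable_Wk.comp measurable_fst).mul (measurable_om_aux hgm)).aemeasurable
      _ = _ := by
          refine lintegral_congr fun y => ?_
          rw [← lintegral_add_left_eq_self (fun x : Bdy n => Wk (x - y) * ‖g x - g y‖ₑ ^ 2) y]
          simp
  rw [h1]
  have h2 := hG.2
  unfold HasFiniteIntegral at h2
  have h3 : ∀ p : Bdy n × Bdy n, ‖‖g p.1 - g p.2‖ ^ 2 / ‖p.1 - p.2‖ ^ ((n : ℝ) + 1)‖ₑ =
      Wk (p.1 - p.2) * ‖g p.1 - g p.2‖ₑ ^ 2 := by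
    intro p
    have e : ‖p.1 - p.2‖ ^ ((n : ℝ) + 1) = ‖p.1 - p.2‖ ^ (n+1) := by
      rw [← Real.rpow_natCast]; push_cast; rfl
    rw [e]
    rcases eq_or_ne p.1 p.2 with h | h
    · simp [h]
    have hpos : 0 < ‖p.1 - p.2‖ := norm_pos_iff.2 (sub_ne_zero.2 h)
    rw [Real.enorm_of_nonneg (by positivity), div_eq_inv_mul, ENNReal.ofReal_mul (by positivity),
      ENNReal.ofReal_inv_of_pos (by positivity), ENNReal.ofReal_pow (by positivity),
      ENNReal.ofReal_pow (by positivity), ofReal_norm, ofReal_norm, Wk]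
  simp only [h3] at h2
  rw [lintegral_prod_symm] at h2
  · exact h2
  · have a1 : Measurable fun p : Bdy n × Bdy n => Wk (p.1 - p.2) := measurable_Wk.comp (by fun_prop)
    have a2 : Measurable fun p : Bdy n × Bdy n => g p.1 - g p.2 :=
      (hgm.comp measurable_fst).sub (hgm.comp measurable_snd)
    exact (a1.mul (a2.enorm.pow_const 2)).aemeasurable

lemma sum_fin_meas {f : Bdy n → ℂ} {g : Fin n → Bdy n → ℂ} (hfm : Measurable f)
    (hgm : ∀ i, Measurable (g i)) (hf : MemLp f 2 volume)
    (hg : ∀ i, MemLp (g i) 2 volume) (hw : ∀ i, IsWeakDerivB n (bdirs n i) f (g i))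
    (hG : ∀ i, GagB n (g i)) :
    ∑' k : ℕ, (2:ENNReal) ^ (3 * k) * ∫⁻ x, ‖f x - Pk k f x‖ₑ ^ 2 < ⊤ := by
  set Om : Bdy n → ENNReal := fun v => ∑ i, ∫⁻ t, om (g i) (t • v) ∂nuI with hOm
  have hom2 : ∀ i, Measurable fun p : Bdy n × ℝ => om (g i) (p.2 • p.1) := fun i =>
    (measurable_om (hgm i)).comp (by fun_prop)
  have hOmm : Measurable Om := Finset.measurable_sum _ fun i _ => (hom2 i).lintegral_prod_right'
  have hIm : ∀ k : ℕ, Measurable fun v : Bdy n =>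
      (if (2:ENNReal) ^ k * ‖v‖ₑ ≤ n then (1:ENNReal) else 0) := by
    intro k
    refine Measurable.ite ?_ measurable_const measurable_const
    exact measurableSet_le (measurable_id.enorm.const_mul _) measurable_const
  have hCn : (2 * (1 + Cn n)) ≠ ⊤ := by unfold Cn; finiteness
  have key : ∀ i, ∫⁻ v : Bdy n, Wk v * ∫⁻ t, om (g i) (t • v) ∂nuI < ⊤ := by
    intro i
    calc _ = ∫⁻ v : Bdy n, ∫⁻ t, Wk v * om (g i) (t • v) ∂nuI := by
          refine lintegral_congr fun v => ?_
          rw [lintegral_const_mul]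
          have hc := (hom2 i).comp (measurable_prodMk_left (x := v))
          exact hc
      _ = ∫⁻ t, (∫⁻ v : Bdy n, Wk v * om (g i) (t • v)) ∂nuI := by
          refine lintegral_lintegral_swap ?_
          exact ((measurable_Wk.comp measurable_fst).mul (hom2 i)).aemeasurable
      _ ≤ ∫⁻ t, (∫⁻ v, Wk v * om (g i) v) ∂nuI := by
          refine setLIntegral_mono' measurableSet_Ioc fun t ht => om_scale t ht
      _ = ∫⁻ v, Wk v * om (g i) v := by simp
      _ < ⊤ := gag_fin (hgm i) (hG i)
  calc _ ≤ ∑' k : ℕ, (2:ENNReal) ^ (3 * k) * (2 * (1 + Cn n) * 2 ^ (k * n) *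
      ∫⁻ v : Bdy n, (if (2:ENNReal) ^ k * ‖v‖ₑ ≤ n then 1 else 0) * (n * ‖v‖ₑ ^ 2 * Om v)) := by
        refine ENNReal.tsum_le_tsum fun k => ?_
        gcongr
        exact E_bound hfm hgm hf hg hw k
    _ = 2 * (1 + Cn n) * n * ∫⁻ v : Bdy n, ((∑' k : ℕ, (if (2:ENNReal) ^ k * ‖v‖ₑ ≤ n then
          ((2:ENNReal) ^ (n+3)) ^ k else 0)) * ‖v‖ₑ ^ 2) * Om v := by
        have e1 : ∀ k : ℕ, (2:ENNReal) ^ (3 * k) * (2 * (1 + Cn n) * 2 ^ (k * n) *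
          ∫⁻ v : Bdy n, (if (2:ENNReal) ^ k * ‖v‖ₑ ≤ n then 1 else 0) * (n * ‖v‖ₑ ^ 2 * Om v)) =
          2 * (1 + Cn n) * n * ∫⁻ v : Bdy n, (if (2:ENNReal) ^ k * ‖v‖ₑ ≤ n then
            ((2:ENNReal) ^ (n+3)) ^ k else 0) * (‖v‖ₑ ^ 2 * Om v) := by
          intro k
          have e2 : ∀ v : Bdy n, (if (2:ENNReal) ^ k * ‖v‖ₑ ≤ n then (1:ENNReal) else 0) *
              (n * ‖v‖ₑ ^ 2 * Om v) = n * ((if (2:ENNReal) ^ k * ‖v‖ₑ ≤ n then (1:ENNReal) else 0) *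
                (‖v‖ₑ ^ 2 * Om v)) := fun v => by ring
          have e3 : ∀ v : Bdy n, (if (2:ENNReal) ^ k * ‖v‖ₑ ≤ n then
            ((2:ENNReal) ^ (n+3)) ^ k else 0) * (‖v‖ₑ ^ 2 * Om v) = ((2:ENNReal) ^ (n+3)) ^ k *
             ((if (2:ENNReal) ^ k * ‖v‖ₑ ≤ n then (1:ENNReal) else 0) * (‖v‖ₑ ^ 2 * Om v)) := fun v => by
            split_ifs <;> simp
          simp only [e2, e3]
          rw [lintegral_const_mul' _ _ (by simp), lintegral_const_mul' _ _ (by finiteness), ← pow_mul,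
            show (n+3) * k = 3 * k + k * n by ring, pow_add]
          ring
        simp only [e1]
        rw [ENNReal.tsum_mul_left, ← lintegral_tsum]
        · congr 1
          refine lintegral_congr fun v => ?_
          rw [ENNReal.tsum_mul_right, mul_assoc]
        · intro k
          refine Measurable.aemeasurable ?_
          refine Measurable.mul (Measurable.ite ?_ measurable_const measurable_const)
            ((measurable_id.enorm.pow_const 2).mul hOmm)
          exact measurableSet_le (measurable_id.enorm.const_mul _) measurable_const
    _ ≤ 2 * (1 + Cn n) * n * ∫⁻ v : Bdy n, (2 * (n:ENNReal) ^ (n+3) * Wk v) * Om v := by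
        exact mul_le_mul' le_rfl (lintegral_mono fun v => mul_le_mul' (kern_le v) le_rfl)
    _ = 2 * (1 + Cn n) * n * (2 * (n:ENNReal) ^ (n+3) * ∑ i, ∫⁻ v : Bdy n, Wk v * ∫⁻ t, om (g i) (t • v) ∂nuI) := by
        simp only [mul_assoc (2 * (n:ENNReal) ^ (n+3))]
        rw [lintegral_const_mul' _ _ (by finiteness), ← lintegral_finsetSum]
        · simp only [hOm, Finset.mul_sum]
        · exact fun i _ => measurable_Wk.mul (hom2 i).lintegral_prod_right'
    _ < ⊤ := by
        have : ∑ i, ∫⁻ v : Bdy n, Wk v * ∫⁻ t, om (g i) (t • v) ∂nuI < ⊤ :=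
          ENNReal.sum_lt_top.2 fun i _ => key i
        have hC : Cn n ≠ ⊤ := by unfold Cn; finiteness
        finiteness

lemma sum_fin {f : Bdy n → ℂ} (h : MemH32B n f) :
    ∑' k : ℕ, (2:ENNReal) ^ (3 * k) * ∫⁻ x, ‖f x - Pk k f x‖ₑ ^ 2 < ⊤ := by
  obtain ⟨hf, h2⟩ := h
  choose g hw hg hG using h2
  set f' := hf.1.mk f with hf'
  set g' : Fin n → Bdy n → ℂ := fun i => (hg i).1.mk (g i) with hg'
  have ef : f =ᵐ[volume] f' := hf.1.ae_eq_mk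
  have eg : ∀ i, g i =ᵐ[volume] g' i := fun i => (hg i).1.ae_eq_mk
  have := sum_fin_meas (f := f') (g := g') hf.1.stronglyMeasurable_mk.measurable
    (fun i => (hg i).1.stronglyMeasurable_mk.measurable) (hf.ae_eq ef) (fun i => (hg i).ae_eq (eg i))
    (fun i φ hφ => by
      have h1 := hw i φ hφ
      have a1 : ∫ y, f y * ((fderiv ℝ φ y (bdirs n i) : ℝ) : ℂ) =
          ∫ y, f' y * ((fderiv ℝ φ y (bdirs n i) : ℝ) : ℂ) :=
        integral_congr_ae (by filter_upwards [ef] with y hy; rw [hy])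
      have a2 : ∫ y, g i y * (φ y : ℂ) = ∫ y, g' i y * (φ y : ℂ) :=
        integral_congr_ae (by filter_upwards [eg i] with y hy; rw [hy])
      rw [← a1, ← a2, h1])
    (fun i => by
      refine Integrable.congr (hG i) ?_
      have b1 := (Measure.quasiMeasurePreserving_fst (μ := (volume : Measure (Bdy n)))
        (ν := (volume : Measure (Bdy n)))).ae_eq (eg i)
      have b2 := (Measure.quasiMeasurePreserving_snd (μ := (volume : Measure (Bdy n)))
        (ν := (volume : Measure (Bdy n)))).ae_eq (eg i)
      filter_upwards [b1, b2] with p h1 h2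
      simp only [Function.comp_apply] at h1 h2
      rw [h1, h2])
  convert this using 4 with k
  refine lintegral_congr_ae ?_
  filter_upwards [ef] with x hx
  rw [hx, Pk_congr ef]

end Kern
end RobinHS

namespace RobinHS
section Unif
variable {n : ℕ}

lemma uniform_sum {K G : Type*} [NormedAddCommGroup K] [InnerProductSpace ℂ K] [CompleteSpace K]
    [NormedAddCommGroup G] [InnerProductSpace ℂ G] (D : ℕ → K →L[ℂ] G)
    (h : ∀ u, ∃ C, ∀ N, ∑ k ∈ Finset.range N, ‖D k u‖ ^ 2 ≤ C) :
    ∃ C : ℝ, 0 ≤ C ∧ ∀ u N, ∑ k ∈ Finset.range N, ‖D k u‖ ^ 2 ≤ (C * ‖u‖) ^ 2 := by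
  classical
  have h2 : (0:ENNReal) < 2 := by norm_num
  let S : (k : ℕ) → G →L[ℂ] lp (fun _ : ℕ => G) 2 := fun k =>
    LinearMap.mkContinuous (lp.lsingle (𝕜 := ℂ) (E := fun _ : ℕ => G) 2 k) 1 (fun x => by
      rw [one_mul]
      exact (lp.norm_single (E := fun _ : ℕ => G) h2 k x).le)
  let g : ℕ → K →L[ℂ] lp (fun _ : ℕ => G) 2 := fun N => ∑ k ∈ Finset.range N, (S k).comp (D k)
  have hg : ∀ N u, ‖g N u‖ ^ 2 = ∑ k ∈ Finset.range N, ‖D k u‖ ^ 2 := by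
    intro N u
    have e : g N u = ∑ k ∈ Finset.range N, lp.single (E := fun _ : ℕ => G) 2 k (D k u) := by
      simp only [g, _root_.sum_apply]
      rfl
    have := lp.norm_sum_single (E := fun _ : ℕ => G) (p := 2) (by norm_num) (fun k => D k u) (Finset.range N)
    rw [e]
    simpa using this
  have hb := banach_steinhaus (g := g) (fun u => by
    obtain ⟨C, hC⟩ := h u
    refine ⟨Real.sqrt C, fun N => ?_⟩
    refine Real.le_sqrt_of_sq_le ?_
    rw [hg]; exact hC N)
  obtain ⟨C, hC⟩ := hb
  have hC0 : 0 ≤ C := (norm_nonneg _).trans (hC 0)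
  refine ⟨C, hC0, fun u N => ?_⟩
  rw [← hg]
  gcongr
  exact (g N).le_of_opNorm_le (hC N) u

variable {K : Type*} [NormedAddCommGroup K] [InnerProductSpace ℂ K]

lemma K0_add (K₀ : K →L[ℂ] Hbd n) (u v : K) :
    ⇑(K₀ (u + v)) =ᵐ[volume] fun x => K₀ u x + K₀ v x := by
  rw [map_add]; exact Lp.coeFn_add _ _

lemma K0_smul (K₀ : K →L[ℂ] Hbd n) (c : ℂ) (u : K) :
    ⇑(K₀ (c • u)) =ᵐ[volume] fun x => c * K₀ u x := by
  rw [map_smul]; exact Lp.coeFn_smul _ _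

lemma PK_add (K₀ : K →L[ℂ] Hbd n) (k : ℕ) (u v : K) (x : Bdy n) :
    Pk k (K₀ (u + v)) x = Pk k (K₀ u) x + Pk k (K₀ v) x := by
  rw [Pk_congr (K0_add K₀ u v), Pk_add x (intOn_Qc _ _ (Lp.memLp _)) (intOn_Qc _ _ (Lp.memLp _))]

lemma PK_smul (K₀ : K →L[ℂ] Hbd n) (k : ℕ) (c : ℂ) (u : K) (x : Bdy n) :
    Pk k (K₀ (c • u)) x = c * Pk k (K₀ u) x := by
  rw [Pk_congr (K0_smul K₀ c u), Pk_smul]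

lemma K0_meas (K₀ : K →L[ℂ] Hbd n) (u : K) : AEStronglyMeasurable (K₀ u) volume :=
  (Lp.memLp _).1

lemma K0_norm (K₀ : K →L[ℂ] Hbd n) (u : K) :
    ∫⁻ x, ‖K₀ u x‖ₑ ^ 2 ≤ ENNReal.ofReal ((‖K₀‖ * ‖u‖) ^ 2) := by
  rw [Hbd_norm_sq (K₀ u) _ EventuallyEq.rfl]
  refine ENNReal.ofReal_le_ofReal ?_
  gcongr
  exact K₀.le_opNorm u

lemma exists_D (K₀ : K →L[ℂ] Hbd n) (k : ℕ) :
    ∃ D : K →L[ℂ] Hbd n, ∀ u, ⇑(D u) =ᵐ[volume] fun x => K₀ u x - Pk k (K₀ u) x := by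
  have hCn : (2 * (1 + Cn n)) ≠ ⊤ := by unfold Cn; finiteness
  obtain ⟨D, hD, -⟩ := exists_clm (fun u x => K₀ u x - Pk k (K₀ u) x)
    (fun u => (K0_meas K₀ u).sub (Pk_measurable k _).aestronglyMeasurable)
    (fun u v => by
      filter_upwards [K0_add K₀ u v] with x hx
      rw [hx, PK_add]; ring)
    (fun c u => by
      filter_upwards [K0_smul K₀ c u] with x hx
      rw [hx, PK_smul]; ring)
    (Real.sqrt (2 * (1 + Cn n)).toReal * ‖K₀‖) (by positivity)
    (fun u => by
      refine (Pk_L2 k _ (Lp.memLp _)).trans ?_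
      rw [mul_assoc (Real.sqrt _), mul_pow (Real.sqrt _), Real.sq_sqrt (by positivity), ENNReal.ofReal_mul (by positivity),
        ENNReal.ofReal_toReal hCn]
      gcongr
      exact K0_norm K₀ u)
  exact ⟨D, hD⟩

lemma unif [CompleteSpace K] (K₀ : K →L[ℂ] Hbd n)
    (hran : ∀ u : K, ∃ f : Bdy n → ℂ, ⇑(K₀ u) =ᵐ[(volume : Measure (Bdy n))] f ∧ MemH32B n f) :
    ∃ C : ℝ, 0 ≤ C ∧ ∀ u, ∑' k : ℕ, (2:ENNReal) ^ (3 * k) * ∫⁻ x, ‖K₀ u x - Pk k (K₀ u) x‖ₑ ^ 2 ≤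
      ENNReal.ofReal ((C * ‖u‖) ^ 2) := by
  choose D hD using exists_D K₀
  have hfin : ∀ u, ∑' k : ℕ, (2:ENNReal) ^ (3 * k) * ∫⁻ x, ‖K₀ u x - Pk k (K₀ u) x‖ₑ ^ 2 < ⊤ := by
    intro u
    obtain ⟨f, hf, hm⟩ := hran u
    have := sum_fin hm
    convert this using 4 with k
    refine lintegral_congr_ae ?_
    filter_upwards [hf] with x hx
    rw [hx, Pk_congr hf]
  set E : ℕ → K →L[ℂ] Hbd n := fun k => (((Real.sqrt 2) ^ (3 * k) : ℝ) : ℂ) • D k with hE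
  have hterm : ∀ k u, (2:ENNReal) ^ (3 * k) * ∫⁻ x, ‖K₀ u x - Pk k (K₀ u) x‖ₑ ^ 2 =
      ENNReal.ofReal (‖E k u‖ ^ 2) := by
    intro k u
    rw [Hbd_norm_sq (D k u) _ (hD k u), hE]
    simp only [_root_.smul_apply, norm_smul, Complex.norm_real]
    rw [mul_pow, ENNReal.ofReal_mul (by positivity), Real.norm_of_nonneg (by positivity), ← pow_mul,
      mul_comm (3 * k) 2, pow_mul (Real.sqrt 2), Real.sq_sqrt (by norm_num), ENNReal.ofReal_pow (by norm_num)]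
    simp
  have hpart : ∀ u N, ENNReal.ofReal (∑ k ∈ Finset.range N, ‖E k u‖ ^ 2) =
      ∑ k ∈ Finset.range N, (2:ENNReal) ^ (3 * k) * ∫⁻ x, ‖K₀ u x - Pk k (K₀ u) x‖ₑ ^ 2 := by
    intro u N
    rw [ENNReal.ofReal_sum_of_nonneg (fun _ _ => by positivity)]
    simp only [hterm]
  obtain ⟨C, hC0, hC⟩ := uniform_sum E (fun u => by
    refine ⟨(∑' k : ℕ, (2:ENNReal) ^ (3 * k) * ∫⁻ x, ‖K₀ u x - Pk k (K₀ u) x‖ₑ ^ 2).toReal, fun N => ?_⟩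
    rw [← ENNReal.ofReal_le_iff_le_toReal (hfin u).ne, hpart]
    exact ENNReal.sum_le_tsum _)
  refine ⟨C, hC0, fun u => ENNReal.tsum_le_of_sum_range_le fun N => ?_⟩
  rw [← hpart]
  exact ENNReal.ofReal_le_ofReal (hC u N)

end Unif
end RobinHS

namespace RobinHS
section CaseOne
variable {n : ℕ}

lemma dyadic_conclude {K G : Type*} [NormedAddCommGroup K] [InnerProductSpace ℂ K] [CompleteSpace K]
    [NormedAddCommGroup G] [InnerProductSpace ℂ G] [CompleteSpace G] (hn : 1 ≤ n)
    (T : K →L[ℂ] G) (C0 : ℕ) (hC0 : 1 ≤ C0) (M : ℝ) (hM : 0 ≤ M)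
    (h : ∀ k : ℕ, ∃ F : K →L[ℂ] G, LinearMap.rank F.toLinearMap ≤ ((C0 * 2 ^ (n * k) : ℕ) : Cardinal) ∧
      ‖T - F‖ ≤ M * ((Real.sqrt 2) ^ (3 * k))⁻¹) :
    ∃ C : ℝ, ∀ k : ℕ, sNum T k ≤ C * ((k : ℝ) + 1) ^ (-(1 / (2 * (n:ℝ) / 3))) := by
  have hn0 : (0:ℝ) < n := by exact_mod_cast hn
  set s : ℝ := 1 / (2 * (n:ℝ) / 3) with hs
  have hs0 : 0 < s := by positivity
  have hC0' : (1:ℝ) ≤ C0 := by exact_mod_cast hC0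
  refine ⟨(‖T‖ + M * 3) * (C0:ℝ) ^ s, fun N => ?_⟩
  have hN : (0:ℝ) < (N:ℝ) + 1 := by positivity
  rw [Real.rpow_neg hN.le]
  by_cases hNC : N < C0
  · have h1 : sNum T N ≤ ‖T‖ := by
      have := sNum_le_aux T 0 N (by simp)
      simpa using this
    have h2 : ((N:ℝ) + 1) ^ s ≤ (C0:ℝ) ^ s := by
      refine Real.rpow_le_rpow hN.le ?_ hs0.le
      exact_mod_cast hNC
    have h3 : 1 ≤ (C0:ℝ) ^ s * (((N:ℝ) + 1) ^ s)⁻¹ := by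
      rw [← div_eq_mul_inv, le_div_iff₀ (by positivity), one_mul]; exact h2
    calc sNum T N ≤ (‖T‖ + M * 3) * 1 := by nlinarith
      _ ≤ (‖T‖ + M * 3) * ((C0:ℝ) ^ s * (((N:ℝ) + 1) ^ s)⁻¹) := by gcongr
      _ = _ := by ring
  · push Not at hNC
    set k := Nat.log (2 ^ n) (N / C0) with hk
    have hb : 1 < 2 ^ n := Nat.one_lt_two_pow (by omega)
    have hne : N / C0 ≠ 0 := (Nat.div_pos hNC (by omega)).ne'
    have l1 : C0 * 2 ^ (n * k) ≤ N := by
      have := Nat.pow_log_le_self (2 ^ n) hne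
      rw [← hk, ← pow_mul, Nat.le_div_iff_mul_le (by omega)] at this
      rw [mul_comm]; exact this
    have l2 : N + 1 ≤ C0 * 2 ^ (n * (k+1)) := by
      have := Nat.lt_pow_succ_log_self hb (N / C0)
      rw [← hk, ← pow_mul, Nat.div_lt_iff_lt_mul (by omega)] at this
      rw [mul_comm]; exact this
    obtain ⟨F, hF1, hF2⟩ := h k
    have h1 := sNum_le_aux T F N (hF1.trans (by exact_mod_cast l1))
    have l3 : ((N:ℝ) + 1) ^ s ≤ (C0:ℝ) ^ s * (3 * (Real.sqrt 2) ^ (3 * k)) := by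
      have a1 : (N:ℝ) + 1 ≤ C0 * (2:ℝ) ^ (n * (k+1)) := by exact_mod_cast l2
      have a2 : ((2:ℝ) ^ (n * (k+1))) ^ s = (Real.sqrt 2) ^ (3 * (k+1)) := by
        rw [Real.sqrt_eq_rpow, ← Real.rpow_natCast, ← Real.rpow_natCast, ← Real.rpow_mul (by norm_num),
          ← Real.rpow_mul (by norm_num)]
        congr 1
        rw [hs]
        push_cast
        field_simp
      have a3 : (Real.sqrt 2) ^ 3 ≤ 3 := by
        have b1 : (Real.sqrt 2) ^ 2 = 2 := Real.sq_sqrt (by norm_num)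
        have b2 : Real.sqrt 2 ≤ 3 / 2 := by
          rw [Real.sqrt_le_left (by norm_num)]; norm_num
        rw [pow_succ, b1]; linarith
      calc ((N:ℝ) + 1) ^ s ≤ (C0 * (2:ℝ) ^ (n * (k+1))) ^ s := Real.rpow_le_rpow hN.le a1 hs0.le
        _ = (C0:ℝ) ^ s * (Real.sqrt 2) ^ (3 * (k+1)) := by
          rw [Real.mul_rpow (by positivity) (by positivity), a2]
        _ = (C0:ℝ) ^ s * ((Real.sqrt 2) ^ 3 * (Real.sqrt 2) ^ (3 * k)) := by ring
        _ ≤ _ := by gcongr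
    have l4 : ((Real.sqrt 2) ^ (3 * k))⁻¹ ≤ 3 * (C0:ℝ) ^ s * (((N:ℝ) + 1) ^ s)⁻¹ := by
      rw [← div_eq_mul_inv, le_div_iff₀ (by positivity), inv_mul_le_iff₀ (by positivity)]
      linarith
    calc sNum T N ≤ M * ((Real.sqrt 2) ^ (3 * k))⁻¹ := h1.trans hF2
      _ ≤ M * (3 * (C0:ℝ) ^ s * (((N:ℝ) + 1) ^ s)⁻¹) := by gcongr
      _ ≤ ‖T‖ * (C0:ℝ) ^ s * (((N:ℝ) + 1) ^ s)⁻¹ + M * (3 * (C0:ℝ) ^ s * (((N:ℝ) + 1) ^ s)⁻¹) :=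
        le_add_of_nonneg_left (by positivity)
      _ = _ := by ring

variable {K : Type*} [NormedAddCommGroup K] [InnerProductSpace ℂ K]

lemma one_term {f : Bdy n → ℂ} {C : ℝ} {N : ℝ} (k : ℕ)
    (h : ∑' k : ℕ, (2:ENNReal) ^ (3 * k) * ∫⁻ x, ‖f x - Pk k f x‖ₑ ^ 2 ≤ ENNReal.ofReal ((C * N) ^ 2)) :
    ∫⁻ x, ‖f x - Pk k f x‖ₑ ^ 2 ≤ ENNReal.ofReal ((C * ((Real.sqrt 2) ^ (3 * k))⁻¹ * N) ^ 2) := by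
  have h1 := (ENNReal.le_tsum k).trans h
  have e : (C * ((Real.sqrt 2) ^ (3 * k))⁻¹ * N) ^ 2 = ((2:ℝ) ^ (3 * k))⁻¹ * (C * N) ^ 2 := by
    have : ((Real.sqrt 2) ^ (3 * k)) ^ 2 = 2 ^ (3 * k) := by
      rw [← pow_mul, mul_comm, pow_mul, Real.sq_sqrt (by norm_num)]
    rw [← this]; ring
  rw [e, ENNReal.ofReal_mul (by positivity), ENNReal.ofReal_inv_of_pos (by positivity),
    ENNReal.ofReal_pow (by norm_num)]
  simp only [ENNReal.ofReal_ofNat]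
  rw [mul_comm, ← div_eq_mul_inv, ENNReal.le_div_iff_mul_le (Or.inl (by simp)) (Or.inl (by simp)), mul_comm]
  exact h1

lemma rank_aux (k r : ℕ) (α : Bdy n → ℂ) (hα2 : MemLp α ⊤ volume)
    (hr : ∀ x, α x ≠ 0 → ∀ i, |x i| ≤ r) (F : K →L[ℂ] Hbd n) (K₀ : K →L[ℂ] Hbd n)
    (hF : ∀ u, ⇑(F u) =ᵐ[volume] fun x => α x * Pk k (K₀ u) x) :
    LinearMap.rank F.toLinearMap ≤ ((((n+1) * (2 * r + 2) ^ n) * 2 ^ (n * k) : ℕ) : Cardinal) := by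
  classical
  set box : Finset (Fin n → ℤ) := Fintype.piFinset fun _ => Finset.Icc (-(r * 2 ^ k : ℤ) - 1) (r * 2 ^ k) with hbox
  set I := box ×ˢ (Finset.univ : Finset (Option (Fin n))) with hI
  have hmem : ∀ m b, MemLp (fun x => (Qc k m).indicator (fun x => (eb k b x : ℂ)) x * α x) 2 (volume : Measure (Bdy n)) := by
    intro m b
    have h1 : MemLp ((Qc k m).indicator (fun x => (eb k b x : ℂ))) 2 (volume : Measure (Bdy n)) := by
      rw [memLp_indicator_iff_restrict (measurableSet_Qc k m)]
      have hfin : IsFiniteMeasure (volume.restrict (Qc k m)) :=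
        ⟨by rw [Measure.restrict_apply_univ, volume_Qc]; exact ENNReal.ofReal_lt_top⟩
      refine MemLp.of_bound (Complex.measurable_ofReal.comp (measurable_eb k b)).aestronglyMeasurable 2 ?_
      exact Eventually.of_forall fun x => by
        rw [Complex.norm_real]; exact abs_eb_le k b x
    exact hα2.mul h1
  set e : (Fin n → ℤ) × Option (Fin n) → Hbd n := fun p => (hmem p.1 p.2).toLp with he
  have hsub : LinearMap.range F.toLinearMap ≤ Submodule.span ℂ ((I.image e : Finset (Hbd n)) : Set (Hbd n)) := by
    rintro _ ⟨u, rfl⟩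
    set c : (Fin n → ℤ) × Option (Fin n) → ℂ := fun p =>
      (2:ℂ) ^ (k * n) * ∫ y in Qc k p.1, (eb k p.2 y : ℂ) * K₀ u y with hc
    have hsum : F u = ∑ p ∈ I, c p • e p := by
      refine Lp.ext ?_
      have a1 : ⇑(∑ p ∈ I, c p • e p) =ᵐ[volume] fun x => ∑ p ∈ I, c p *
          ((Qc k p.1).indicator (fun x => (eb k p.2 x : ℂ)) x * α x) := by
        have b1 : ⇑(∑ p ∈ I, c p • e p) =ᵐ[volume] ∑ p ∈ I, ⇑(c p • e p) := Lp.coeFn_finsetSum _ _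
        have b2 : ∀ᵐ x, ∀ p ∈ I, (c p • e p : Hbd n) x = c p *
          ((Qc k p.1).indicator (fun x => (eb k p.2 x : ℂ)) x * α x) := by
          refine (Filter.eventually_all_finset I).2 ?_
          intro p _
          filter_upwards [Lp.coeFn_smul (c p) (e p), (hmem p.1 p.2).coeFn_toLp] with x h1 h2
          rw [h1, Pi.smul_apply, he, h2, smul_eq_mul]
        filter_upwards [b1, b2] with x h1 h2
        rw [h1, Finset.sum_apply]
        exact Finset.sum_congr rfl fun p hp => h2 p hp
      filter_upwards [a1, hF u] with x h1 h2
      rw [h1, h2]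
      by_cases hx : α x = 0
      · simp [hx]
      have hb : idx k x ∈ box := by
        rw [hbox, Fintype.mem_piFinset]
        intro i
        have h3 := abs_le.1 (hr x hx i)
        have hp : (0:ℝ) < 2 ^ k := by positivity
        rw [Finset.mem_Icc]
        constructor
        · refine (sub_le_self _ zero_le_one).trans (Int.le_floor.2 ?_)
          push_cast
          nlinarith [h3.1]
        · have : (idx k x i : ℝ) ≤ r * 2 ^ k := (Int.floor_le _).trans (by nlinarith [h3.2])
          exact_mod_cast this
      rw [hI, Finset.sum_product, Finset.sum_eq_single (idx k x)]
      · unfold Pk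
        rw [Finset.mul_sum, Finset.mul_sum]
        refine Finset.sum_congr rfl fun b _ => ?_
        rw [Set.indicator_of_mem (by exact rfl), hc]
        ring
      · intro m _ hm
        refine Finset.sum_eq_zero fun b _ => ?_
        rw [Set.indicator_of_notMem (fun h => hm (mem_Qc.1 h).symm)]
        simp
      · intro h; exact absurd hb h
    change F u ∈ _
    rw [hsum]
    refine Submodule.sum_mem _ fun p hp => Submodule.smul_mem _ _ (Submodule.subset_span ?_)
    exact Finset.mem_coe.2 (Finset.mem_image_of_mem e hp)
  have hcard : (I.image e).card ≤ ((n+1) * (2 * r + 2) ^ n) * 2 ^ (n * k) := by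
    refine Finset.card_image_le.trans ?_
    rw [hI, Finset.card_product, hbox, Fintype.card_piFinset]
    simp only [Int.card_Icc, Finset.prod_const, Finset.card_univ, Fintype.card_fin, Fintype.card_option]
    have h1 : ((r * 2 ^ k : ℤ) + 1 - (-(r * 2 ^ k : ℤ) - 1)).toNat = 2 * r * 2 ^ k + 2 := by
      have : ((r * 2 ^ k : ℤ) + 1 - (-(r * 2 ^ k : ℤ) - 1)) = ((2 * r * 2 ^ k + 2 : ℕ) : ℤ) := by
        push_cast; ring
      rw [this, Int.toNat_natCast]
    rw [h1]
    have h2 : 2 * r * 2 ^ k + 2 ≤ (2 * r + 2) * 2 ^ k := by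
      have := Nat.one_le_two_pow (n := k)
      nlinarith
    calc (2 * r * 2 ^ k + 2) ^ n * (n+1) ≤ ((2 * r + 2) * 2 ^ k) ^ n * (n+1) := by gcongr
      _ = _ := by rw [mul_pow, ← pow_mul, mul_comm k n]; ring
  calc LinearMap.rank F.toLinearMap ≤ Module.rank ℂ (Submodule.span ℂ ((I.image e : Finset (Hbd n)) : Set (Hbd n))) :=
        Submodule.rank_mono hsub
    _ ≤ ((I.image e).card : Cardinal) := rank_span_finset_le _
    _ ≤ _ := by exact_mod_cast hcard

lemma linf_bound {α : Bdy n → ℂ} (hα : MemLp α ⊤ volume) :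
    ∃ A : ℝ, 0 ≤ A ∧ ∀ᵐ x, ‖α x‖ ≤ A := by
  refine ⟨(eLpNorm α ⊤ volume).toReal, ENNReal.toReal_nonneg, ?_⟩
  have h := ae_le_eLpNormEssSup (f := α) (μ := (volume : Measure (Bdy n)))
  filter_upwards [h] with x hx
  rw [← eLpNorm_exponent_top] at hx
  rw [← ofReal_norm] at hx
  exact (ENNReal.ofReal_le_iff_le_toReal hα.2.ne).1 hx

lemma case_one [CompleteSpace K] (hn : 1 ≤ n) (K₀ : K →L[ℂ] Hbd n)
    (hran : ∀ u : K, ∃ f : Bdy n → ℂ, ⇑(K₀ u) =ᵐ[(volume : Measure (Bdy n))] f ∧ MemH32B n f)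
    (α : Bdy n → ℂ) (hα : MemLp α ⊤ (volume : Measure (Bdy n))) (hs : HasCompactSupport α)
    (T : K →L[ℂ] Hbd n)
    (hT : ∀ u : K, ⇑(T u) =ᵐ[(volume : Measure (Bdy n))] fun y => α y * (K₀ u) y) :
    ∃ C : ℝ, ∀ k : ℕ, sNum T k ≤ C * ((k : ℝ) + 1) ^ (-(1 / (2 * (n:ℝ) / 3))) := by
  obtain ⟨C, hC0, hC⟩ := unif K₀ hran
  obtain ⟨A, hA0, hA⟩ := linf_bound hα
  obtain ⟨r0, hr0⟩ := hs.isCompact.isBounded.subset_closedBall (0 : Bdy n)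
  obtain ⟨r, hr1⟩ := exists_nat_ge r0
  have hr : ∀ x, α x ≠ 0 → ∀ i, |x i| ≤ r := by
    intro x hx i
    have h1 := hr0 (subset_tsupport α hx)
    rw [mem_closedBall_zero_iff] at h1
    exact ((PiLp.norm_apply_le x i).trans h1).trans hr1
  refine dyadic_conclude hn T ((n+1) * (2 * r + 2) ^ n) (Nat.one_le_iff_ne_zero.2 (by positivity)) (A * C) (by positivity)
    fun k => ?_
  obtain ⟨B, hB1, hB2⟩ := exists_clm (fun u x => α x * (K₀ u x - Pk k (K₀ u) x))
    (fun u => hα.1.mul ((K0_meas K₀ u).sub (Pk_measurable k _).aestronglyMeasurable))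
    (fun u v => by
      filter_upwards [K0_add K₀ u v] with x hx
      rw [hx, PK_add]; ring)
    (fun c u => by
      filter_upwards [K0_smul K₀ c u] with x hx
      rw [hx, PK_smul]; ring)
    (A * C * ((Real.sqrt 2) ^ (3 * k))⁻¹) (by positivity)
    (fun u => by
      calc ∫⁻ x, ‖α x * (K₀ u x - Pk k (K₀ u) x)‖ₑ ^ 2
          ≤ ∫⁻ x, ENNReal.ofReal (A ^ 2) * ‖K₀ u x - Pk k (K₀ u) x‖ₑ ^ 2 := by
            refine lintegral_mono_ae ?_
            filter_upwards [hA] with x hx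
            rw [enorm_mul, mul_pow, ENNReal.ofReal_pow hA0]
            gcongr
            rw [← ofReal_norm]
            exact ENNReal.ofReal_le_ofReal hx
        _ = ENNReal.ofReal (A ^ 2) * ∫⁻ x, ‖K₀ u x - Pk k (K₀ u) x‖ₑ ^ 2 :=
            lintegral_const_mul' _ _ (by simp)
        _ ≤ ENNReal.ofReal (A ^ 2) * ENNReal.ofReal ((C * ((Real.sqrt 2) ^ (3 * k))⁻¹ * ‖u‖) ^ 2) := by
            gcongr
            exact one_term k (hC u)
        _ = _ := by
            rw [← ENNReal.ofReal_mul (by positivity)]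
            congr 1; ring)
  refine ⟨T - B, ?_, by simpa using hB2⟩
  refine rank_aux k r α hα hr (T - B) K₀ fun u => ?_
  have h1 : ⇑((T - B) u) =ᵐ[volume] ⇑(T u) - ⇑(B u) := Lp.coeFn_sub _ _
  filter_upwards [h1, hT u, hB1 u] with x a1 a2 a3
  rw [a1, Pi.sub_apply, a2, a3]; ring

end CaseOne
end RobinHS

namespace RobinHS
section CaseTwo
variable {n : ℕ}

lemma Pk_pt (k : ℕ) (φ : Bdy n → ℂ) (hφ : AEStronglyMeasurable φ volume) (B : ℝ) (hB : 0 ≤ B)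
    (h : ∫⁻ y, ‖φ y‖ₑ ^ 2 ≤ ENNReal.ofReal (B ^ 2)) (x : Bdy n) :
    ‖Pk k φ x‖ ≤ 4 * ((n:ℝ) + 1) * (Real.sqrt 2) ^ (k * n) * B := by
  have h1 := Pk_pointwise k φ hφ x
  have h2 : ‖Pk k φ x‖ₑ ^ 2 ≤ ENNReal.ofReal ((4 * ((n:ℝ) + 1) * (Real.sqrt 2) ^ (k * n) * B) ^ 2) := by
    have e : (4 * ((n:ℝ) + 1) * (Real.sqrt 2) ^ (k * n) * B) ^ 2 = (16 * ((n:ℝ) + 1) ^ 2) * 2 ^ (k * n) * B ^ 2 := by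
      have : ((Real.sqrt 2) ^ (k * n)) ^ 2 = 2 ^ (k * n) := by
        rw [← pow_mul, mul_comm, pow_mul, Real.sq_sqrt (by norm_num)]
      rw [← this]; ring
    rw [e, ENNReal.ofReal_mul (by positivity), ENNReal.ofReal_mul (by positivity),
      ENNReal.ofReal_mul (by positivity), ENNReal.ofReal_pow (by positivity),
      ENNReal.ofReal_pow (by positivity), ENNReal.ofReal_add (by positivity) (by positivity)]
    simp only [ENNReal.ofReal_ofNat, ENNReal.ofReal_natCast, ENNReal.ofReal_one]
    refine h1.trans (mul_le_mul' le_rfl ?_)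
    exact (setLIntegral_le_lintegral _ _).trans h
  rw [← ofReal_norm, ← ENNReal.ofReal_pow (norm_nonneg _), ENNReal.ofReal_le_ofReal_iff (by positivity)] at h2
  exact (sq_le_sq₀ (norm_nonneg _) (by positivity)).1 h2

lemma Pk_memLp (k : ℕ) (f : Bdy n → ℂ) (hf : MemLp f 2 volume) :
    MemLp (fun x => f x - Pk k f x) 2 volume := by
  refine memLp_two_of (hf.1.sub (Pk_measurable k f).aestronglyMeasurable) ?_
  refine (Pk_L2 k f hf).trans_lt ?_
  have hCn : (2 * (1 + Cn n)) ≠ ⊤ := by unfold Cn; finiteness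
  exact ENNReal.mul_lt_top hCn.lt_top (lintegral_of_memLp hf)

lemma Pk_step (k : ℕ) (f : Bdy n → ℂ) (hf : MemLp f 2 volume) (x : Bdy n) :
    Pk (k+1) f x = Pk k f x + Pk (k+1) (fun y => f y - Pk k f y) x := by
  have h1 : MemLp (Pk k f) 2 volume := by
    have := hf.sub (Pk_memLp k f hf)
    refine this.ae_eq (Eventually.of_forall fun y => ?_)
    simp
  rw [Pk_sub x (intOn_Qc _ _ hf) (intOn_Qc _ _ h1)]
  obtain ⟨a, v, hav⟩ := Pk_aff k f (idx k x)
  obtain ⟨c, hc⟩ := aff_repr (k+1) (idx (k+1) x) a v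
  rw [Pk_repr (ψ := Pk k f) (m := idx (k+1) x) c (fun y hy => ?_) x rfl]
  · ring
  · rw [← hc y hy]
    exact hav y (idx_succ k y x hy)

lemma Pk_growth (hn : 3 < n) (f : Bdy n → ℂ) (hf : MemLp f 2 volume) (D C N : ℝ) (hD : 0 ≤ D) (hC : 0 ≤ C)
    (hN : 0 ≤ N) (h0 : ∫⁻ y, ‖f y‖ₑ ^ 2 ≤ ENNReal.ofReal ((D * N) ^ 2))
    (h : ∀ k : ℕ, ∫⁻ x, ‖f x - Pk k f x‖ₑ ^ 2 ≤ ENNReal.ofReal ((C * ((Real.sqrt 2) ^ (3 * k))⁻¹ * N) ^ 2))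
    (k : ℕ) (x : Bdy n) :
    ‖Pk k f x‖ ≤ (4 * ((n:ℝ) + 1) * (D + (Real.sqrt 2) ^ n * C / ((Real.sqrt 2) ^ (n - 3) - 1))) *
      ((Real.sqrt 2) ^ (n - 3)) ^ k * N := by
  have hs1 : 1 < Real.sqrt 2 := by rw [Real.lt_sqrt (by norm_num)]; norm_num
  have hs0 : 0 < Real.sqrt 2 := by positivity
  set q := (Real.sqrt 2) ^ (n - 3) with hq
  have hq1 : 1 < q := one_lt_pow₀ hs1 (by omega)
  have hq2 : 0 < q - 1 := by linarith
  set c : ℝ := 4 * ((n:ℝ) + 1) with hc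
  have hc0 : 0 ≤ c := by positivity
  set E : ℝ := (Real.sqrt 2) ^ n * C / (q - 1) with hE
  have hE0 : 0 ≤ E := by positivity
  have hEq : E * (q - 1) = (Real.sqrt 2) ^ n * C := by rw [hE]; field_simp
  induction k with
  | zero =>
    have := Pk_pt 0 f hf.1 (D * N) (by positivity) h0 x
    simp only [zero_mul, pow_zero, mul_one] at this ⊢
    refine this.trans ?_
    have : 0 ≤ c * E * N := by positivity
    nlinarith
  | succ k ih =>
    have h2 := Pk_pt (k+1) _ (Pk_memLp k f hf).1 (C * ((Real.sqrt 2) ^ (3 * k))⁻¹ * N) (by positivity) (h k) x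
    have e : (Real.sqrt 2) ^ ((k+1) * n) * ((Real.sqrt 2) ^ (3 * k))⁻¹ = (Real.sqrt 2) ^ n * q ^ k := by
      rw [mul_inv_eq_iff_eq_mul₀ (by positivity), hq, ← pow_mul, ← pow_add, ← pow_add]
      congr 1
      obtain ⟨m, rfl⟩ := Nat.exists_eq_add_of_lt hn
      rw [show 3 + m + 1 - 3 = m + 1 by omega]
      ring
    rw [Pk_step k f hf x]
    refine (norm_add_le _ _).trans ((add_le_add ih h2).trans ?_)
    rw [show 4 * ((n:ℝ) + 1) * Real.sqrt 2 ^ ((k + 1) * n) * (C * (Real.sqrt 2 ^ (3 * k))⁻¹ * N) =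
      c * (Real.sqrt 2 ^ ((k + 1) * n) * (Real.sqrt 2 ^ (3 * k))⁻¹) * C * N by rw [hc]; ring, e,
      show c * (Real.sqrt 2 ^ n * q ^ k) * C * N = c * q ^ k * N * (Real.sqrt 2 ^ n * C) by ring, ← hEq, pow_succ]
    have : 0 ≤ c * D * q ^ k * N * (q - 1) := by positivity
    nlinarith

variable {K : Type*} [NormedAddCommGroup K] [InnerProductSpace ℂ K]

lemma bessel_fun (l : K → ℂ) (hadd : ∀ u v, l (u + v) = l u + l v) (hsm : ∀ (c : ℂ) u, l (c • u) = c * l u)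
    (M : ℝ) (hb : ∀ u, ‖l u‖ ≤ M * ‖u‖) {m : ℕ} (v : Fin m → K) (hv : Orthonormal ℂ v) :
    ∑ j, ‖l (v j)‖ ^ 2 ≤ M ^ 2 := by
  let L : K →ₗ[ℂ] ℂ := { toFun := l, map_add' := hadd, map_smul' := fun c u => by simp [hsm] }
  set s := ∑ j, ‖l (v j)‖ ^ 2 with hs
  have hs0 : 0 ≤ s := Finset.sum_nonneg fun _ _ => by positivity
  set u : K := ∑ j, (starRingEnd ℂ (l (v j))) • v j with hu
  have h1 : l u = (s : ℂ) := by
    change L u = _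
    rw [hu, map_sum, hs, Complex.ofReal_sum]
    refine Finset.sum_congr rfl fun j _ => ?_
    rw [map_smul, smul_eq_mul]
    change (starRingEnd ℂ (l (v j))) * l (v j) = _
    rw [Complex.conj_mul']
    push_cast; rfl
  have h2 : ‖u‖ ^ 2 = s := by
    have h3 : (inner ℂ u u : ℂ) = (s : ℂ) := by
      rw [hu, hv.inner_sum, hs, Complex.ofReal_sum]
      refine Finset.sum_congr rfl fun j _ => ?_
      rw [Complex.conj_conj, Complex.mul_conj']
      push_cast; rfl
    rw [inner_self_eq_norm_sq_to_K] at h3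
    exact Complex.ofReal_injective (by rw [← h3]; push_cast; rfl)
  have h4 := hb u
  rw [h1, Complex.norm_real, Real.norm_of_nonneg hs0, ← h2] at h4
  rw [← h2]
  by_cases h0 : ‖u‖ = 0
  · rw [h0]; nlinarith [sq_nonneg M]
  have h5 : 0 < ‖u‖ := lt_of_le_of_ne (norm_nonneg _) (Ne.symm h0)
  have h6 : ‖u‖ ≤ M := by
    by_contra hcon
    push Not at hcon
    nlinarith
  gcongr

/-- dyadic level -/
def lev (t a : ℝ) : ℕ := ⌈Real.logb ((Real.sqrt 2) ^ 3) (a / t)⌉₊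

lemma base_gt : 1 < (Real.sqrt 2) ^ 3 := by
  refine one_lt_pow₀ ?_ (by norm_num)
  rw [Real.lt_sqrt (by norm_num)]; norm_num

lemma lev_le {t a : ℝ} (ht : 0 < t) (ha : t < a) : a ≤ t * ((Real.sqrt 2) ^ 3) ^ lev t a := by
  have h : a / t ≤ ((Real.sqrt 2) ^ 3) ^ ((lev t a : ℕ) : ℝ) := by
    rw [← Real.logb_le_iff_le_rpow base_gt (by have := ht.trans ha; positivity)]
    exact Nat.le_ceil _
  rw [Real.rpow_natCast, div_le_iff₀ ht] at h
  linarith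

lemma le_lev {t a : ℝ} (ht : 0 < t) (ha : t < a) :
    ((Real.sqrt 2) ^ 3) ^ lev t a ≤ (Real.sqrt 2) ^ 3 * (a / t) := by
  have hb := base_gt
  have hat : 1 < a / t := by rw [lt_div_iff₀ ht]; linarith
  have h := (Nat.ceil_lt_add_one (Real.logb_nonneg hb hat.le)).le
  rw [← Real.rpow_natCast]
  have h1 : ((Real.sqrt 2) ^ 3) ^ ((lev t a : ℕ) : ℝ) ≤
      ((Real.sqrt 2) ^ 3) ^ (Real.logb ((Real.sqrt 2) ^ 3) (a / t) + 1) :=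
    Real.rpow_le_rpow_of_exponent_le hb.le h
  refine h1.trans (le_of_eq ?_)
  rw [Real.rpow_add (by positivity), Real.rpow_logb (by positivity) hb.ne' (by positivity), Real.rpow_one]
  ring

lemma lev_bound (hn : 3 < n) {t a L : ℝ} (ht : 0 < t) (ha : t < a) :
    (a * (L * ((Real.sqrt 2) ^ (n - 3)) ^ lev t a)) ^ 2 ≤
      L ^ 2 * ((Real.sqrt 2) ^ 3) ^ (2 * (n:ℝ) / 3 - 2) * t ^ (2 - 2 * (n:ℝ) / 3) * a ^ (2 * (n:ℝ) / 3) := by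
  have hs0 : 0 < Real.sqrt 2 := by positivity
  have ha0 := ht.trans ha
  set p : ℝ := 2 * (n:ℝ) / 3 with hp
  have hn' : (3:ℝ) < n := by exact_mod_cast hn
  have hp2 : 0 ≤ p - 2 := by rw [hp]; linarith
  have e1 : (((Real.sqrt 2) ^ (n - 3)) ^ lev t a) ^ 2 = (((Real.sqrt 2) ^ 3) ^ lev t a) ^ (p - 2) := by
    rw [← pow_mul, ← pow_mul, ← pow_mul, ← Real.rpow_natCast, ← Real.rpow_natCast, ← Real.rpow_mul hs0.le]
    congr 1
    push_cast [Nat.cast_sub hn.le]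
    rw [hp]; ring
  have e2 : (((Real.sqrt 2) ^ 3) ^ lev t a) ^ (p - 2) ≤ ((Real.sqrt 2) ^ 3 * (a / t)) ^ (p - 2) :=
    Real.rpow_le_rpow (by positivity) (le_lev ht ha) hp2
  have e3 : a ^ 2 * ((Real.sqrt 2) ^ 3 * (a / t)) ^ (p - 2) =
      ((Real.sqrt 2) ^ 3) ^ (p - 2) * t ^ (2 - p) * a ^ p := by
    rw [Real.mul_rpow (by positivity) (by positivity), Real.div_rpow ha0.le ht.le,
      show (2 - p) = -(p - 2) by ring, Real.rpow_neg ht.le, div_eq_mul_inv,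
      show a ^ p = a ^ (2:ℕ) * a ^ (p - 2) by
        rw [← Real.rpow_natCast, ← Real.rpow_add ha0]; congr 1; push_cast; ring]
    ring
  calc (a * (L * ((Real.sqrt 2) ^ (n - 3)) ^ lev t a)) ^ 2
      = L ^ 2 * (a ^ 2 * (((Real.sqrt 2) ^ (n - 3)) ^ lev t a) ^ 2) := by ring
    _ ≤ L ^ 2 * (a ^ 2 * ((Real.sqrt 2) ^ 3 * (a / t)) ^ (p - 2)) := by
        rw [e1]; gcongr
    _ = _ := by rw [e3]; ring

lemma measurable_lev (t : ℝ) : Measurable (lev t) := by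
  unfold lev Real.logb
  refine Nat.measurable_ceil.comp ?_
  exact (Real.measurable_log.comp (measurable_id.div_const t)).div_const _

/-- the approximating operator, pointwise -/
def Rf (α : Bdy n → ℂ) (t : ℝ) (f : Bdy n → ℂ) (x : Bdy n) : ℂ :=
  if ‖α x‖ ≤ t then 0 else α x * Pk (lev t ‖α x‖) f x

lemma Rf_measurable {α : Bdy n → ℂ} (hα : Measurable α) (t : ℝ) (f : Bdy n → ℂ) : Measurable (Rf α t f) := by
  unfold Rf
  refine Measurable.ite (measurableSet_le hα.norm measurable_const) measurable_const (hα.mul ?_)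
  have h1 : Measurable (fun q : ℕ × Bdy n => Pk q.1 f q.2) :=
    measurable_from_prod_countable_right fun k => Pk_measurable k f
  have hcc := h1.comp (((measurable_lev t).comp hα.norm).prodMk measurable_id)
  exact hcc

end CaseTwo
end RobinHS

namespace RobinHS
section CaseTwoB
variable {n : ℕ}
variable {K : Type*} [NormedAddCommGroup K] [InnerProductSpace ℂ K]

lemma Rf_err (α : Bdy n → ℂ) {t : ℝ} (ht : 0 < t) (f : Bdy n → ℂ) (x : Bdy n) :
    ‖α x * f x - Rf α t f x‖ₑ ^ 2 ≤ ENNReal.ofReal (t ^ 2) *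
      (‖f x‖ₑ ^ 2 + ∑' k : ℕ, (2:ENNReal) ^ (3 * k) * ‖f x - Pk k f x‖ₑ ^ 2) := by
  unfold Rf
  by_cases h : ‖α x‖ ≤ t
  · rw [if_pos h, sub_zero, enorm_mul, mul_pow, ENNReal.ofReal_pow ht.le]
    refine mul_le_mul' ?_ le_self_add
    gcongr
    rw [← ofReal_norm]
    exact ENNReal.ofReal_le_ofReal h
  · rw [if_neg h, ← mul_sub, enorm_mul, mul_pow]
    push Not at h
    have h1 := lev_le ht h
    set k := lev t ‖α x‖ with hk
    refine le_trans ?_ (mul_le_mul' le_rfl ((ENNReal.le_tsum k).trans le_add_self))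
    rw [← mul_assoc]
    refine mul_le_mul' ?_ le_rfl
    have e : t ^ 2 * (2:ℝ) ^ (3 * k) = (t * ((Real.sqrt 2) ^ 3) ^ k) ^ 2 := by
      have : (((Real.sqrt 2) ^ 3) ^ k) ^ 2 = 2 ^ (3 * k) := by
        rw [← pow_mul, ← pow_mul, show 3 * (k * 2) = 2 * (3 * k) by ring, pow_mul, Real.sq_sqrt (by norm_num)]
      rw [← this]; ring
    have e2 : ENNReal.ofReal (t ^ 2) * (2:ENNReal) ^ (3 * k) = ENNReal.ofReal ((t * ((Real.sqrt 2) ^ 3) ^ k) ^ 2) := by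
      rw [← e, ENNReal.ofReal_mul (by positivity), ENNReal.ofReal_pow (p := 2) (by norm_num)]
      simp
    rw [e2, ENNReal.ofReal_pow (by positivity)]
    gcongr
    rw [← ofReal_norm]
    exact ENNReal.ofReal_le_ofReal h1

lemma case_two_core [CompleteSpace K] (hn : 3 < n) (K₀ : K →L[ℂ] Hbd n)
    (hran : ∀ u : K, ∃ f : Bdy n → ℂ, ⇑(K₀ u) =ᵐ[(volume : Measure (Bdy n))] f ∧ MemH32B n f)
    (α : Bdy n → ℂ) (hm : Measurable α) (I : ℝ) (hI0 : 0 ≤ I)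
    (hI : ∫⁻ x, ENNReal.ofReal (‖α x‖ ^ (2 * (n:ℝ) / 3)) ≤ ENNReal.ofReal I)
    (T : K →L[ℂ] Hbd n)
    (hT : ∀ u : K, ⇑(T u) =ᵐ[(volume : Measure (Bdy n))] fun y => α y * (K₀ u) y) :
    ∃ C : ℝ, ∀ k : ℕ, sNum T k ≤ C * ((k : ℝ) + 1) ^ (-(1 / (2 * (n:ℝ) / 3))) := by
  obtain ⟨C, hC0, hC⟩ := unif K₀ hran
  have hn' : (3:ℝ) < n := by exact_mod_cast hn
  set p : ℝ := 2 * (n:ℝ) / 3 with hp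
  have hp0 : 0 < p := by rw [hp]; positivity
  obtain ⟨L, hL⟩ : ∃ L : ℝ, ∀ (k : ℕ) (u : K) (x : Bdy n),
      ‖Pk k (K₀ u) x‖ ≤ L * ((Real.sqrt 2) ^ (n - 3)) ^ k * ‖u‖ :=
    ⟨_, fun k u x => Pk_growth hn (K₀ u) (Lp.memLp _) ‖K₀‖ C ‖u‖ (norm_nonneg _) hC0 (norm_nonneg _)
      (K0_norm K₀ u) (fun k => one_term k (hC u)) k x⟩
  set Q : ℝ := L ^ 2 * ((Real.sqrt 2) ^ 3) ^ (p - 2) * I with hQ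
  have hQ0 : 0 ≤ Q := by positivity
  refine ⟨(‖K₀‖ + C) + Real.sqrt Q, fun k => ?_⟩
  set t : ℝ := ((k : ℝ) + 1) ^ (-(1 / p)) with ht
  have ht0 : 0 < t := by positivity
  have hRadd : ∀ u v x, Rf α t (K₀ (u + v)) x = Rf α t (K₀ u) x + Rf α t (K₀ v) x := by
    intro u v x
    unfold Rf
    split_ifs
    · simp
    · rw [PK_add]; ring
  have hRsm : ∀ (c : ℂ) u x, Rf α t (K₀ (c • u)) x = c * Rf α t (K₀ u) x := by
    intro c u x
    unfold Rf
    split_ifs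
    · simp
    · rw [PK_smul]; ring
  obtain ⟨B, hB1, hB2⟩ := exists_clm (fun u x => α x * K₀ u x - Rf α t (K₀ u) x)
    (fun u => (hm.aestronglyMeasurable.mul (K0_meas K₀ u)).sub (Rf_measurable hm t _).aestronglyMeasurable)
    (fun u v => by
      filter_upwards [K0_add K₀ u v] with x hx
      rw [hx, hRadd]; ring)
    (fun c u => by
      filter_upwards [K0_smul K₀ c u] with x hx
      rw [hx, hRsm]; ring)
    (t * (‖K₀‖ + C)) (by positivity)
    (fun u => by
      have hme : ∀ j, AEMeasurable (fun x => (2:ENNReal) ^ (3 * j) * ‖K₀ u x - Pk j (K₀ u) x‖ₑ ^ 2) volume := fun j =>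
        (((K0_meas K₀ u).sub (Pk_measurable j _).aestronglyMeasurable).enorm.pow_const 2).const_mul _
      calc ∫⁻ x, ‖α x * K₀ u x - Rf α t (K₀ u) x‖ₑ ^ 2
          ≤ ∫⁻ x, ENNReal.ofReal (t ^ 2) * (‖K₀ u x‖ₑ ^ 2 +
              ∑' j : ℕ, (2:ENNReal) ^ (3 * j) * ‖K₀ u x - Pk j (K₀ u) x‖ₑ ^ 2) :=
            lintegral_mono fun x => Rf_err α ht0 _ x
        _ = ENNReal.ofReal (t ^ 2) * ((∫⁻ x, ‖K₀ u x‖ₑ ^ 2) +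
              ∑' j : ℕ, (2:ENNReal) ^ (3 * j) * ∫⁻ x, ‖K₀ u x - Pk j (K₀ u) x‖ₑ ^ 2) := by
            rw [lintegral_const_mul' _ _ (by simp), lintegral_add_left' ((K0_meas K₀ u).enorm.pow_const 2),
              lintegral_tsum hme]
            congr 3
            funext j
            rw [lintegral_const_mul' _ _ (by simp)]
        _ ≤ ENNReal.ofReal (t ^ 2) * (ENNReal.ofReal ((‖K₀‖ * ‖u‖) ^ 2) + ENNReal.ofReal ((C * ‖u‖) ^ 2)) := by
            gcongr
            · exact K0_norm K₀ u
            · exact hC u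
        _ = ENNReal.ofReal (t ^ 2 * ((‖K₀‖ * ‖u‖) ^ 2 + (C * ‖u‖) ^ 2)) := by
            rw [ENNReal.ofReal_mul (by positivity), ENNReal.ofReal_add (by positivity) (by positivity)]
        _ ≤ _ := by
            refine ENNReal.ofReal_le_ofReal ?_
            have : 0 ≤ t ^ 2 * ((‖K₀‖ * ‖u‖) * (C * ‖u‖)) := by positivity
            nlinarith)
  have hA : ∀ u, ⇑((T - B) u) =ᵐ[volume] Rf α t (K₀ u) := by
    intro u
    have h1 : ⇑((T - B) u) =ᵐ[volume] ⇑(T u) - ⇑(B u) := Lp.coeFn_sub _ _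
    filter_upwards [h1, hT u, hB1 u] with x a1 a2 a3
    rw [a1, Pi.sub_apply, a2, a3]; ring
  have hHS : ∀ (m : ℕ) (v : Fin m → K), Orthonormal ℂ v → ∑ j, ‖(T - B) (v j)‖ ^ 2 ≤ Q * t ^ (2 - p) := by
    intro m v hv
    rw [← ENNReal.ofReal_le_ofReal_iff (by positivity), ENNReal.ofReal_sum_of_nonneg (fun _ _ => by positivity)]
    calc ∑ j, ENNReal.ofReal (‖(T - B) (v j)‖ ^ 2)
        = ∑ j, ∫⁻ x, ‖Rf α t (K₀ (v j)) x‖ₑ ^ 2 :=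
          Finset.sum_congr rfl fun j _ => (Hbd_norm_sq _ _ (hA (v j))).symm
      _ = ∫⁻ x, ∑ j, ‖Rf α t (K₀ (v j)) x‖ₑ ^ 2 :=
          (lintegral_finsetSum _ fun j _ => (Rf_measurable hm t _).enorm.pow_const 2).symm
      _ ≤ ∫⁻ x, ENNReal.ofReal (L ^ 2 * ((Real.sqrt 2) ^ 3) ^ (p - 2) * t ^ (2 - p)) *
            ENNReal.ofReal (‖α x‖ ^ p) := by
          refine lintegral_mono fun x => ?_
          have e : ∑ j, ‖Rf α t (K₀ (v j)) x‖ₑ ^ 2 = ENNReal.ofReal (∑ j, ‖Rf α t (K₀ (v j)) x‖ ^ 2) := by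
            rw [ENNReal.ofReal_sum_of_nonneg (fun _ _ => by positivity)]
            refine Finset.sum_congr rfl fun j _ => ?_
            rw [← ofReal_norm, ENNReal.ofReal_pow (norm_nonneg _)]
          simp only [e]
          rw [← ENNReal.ofReal_mul (by positivity)]
          refine ENNReal.ofReal_le_ofReal ?_
          by_cases hx : ‖α x‖ ≤ t
          · have : ∑ j, ‖Rf α t (K₀ (v j)) x‖ ^ 2 = 0 :=
              Finset.sum_eq_zero fun j _ => by unfold Rf; rw [if_pos hx]; simp
            rw [this]; positivity
          · refine le_trans (bessel_fun (fun u => Rf α t (K₀ u) x) (fun u v => hRadd u v x) (fun c u => hRsm c u x)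
              (‖α x‖ * (L * ((Real.sqrt 2) ^ (n - 3)) ^ lev t ‖α x‖)) (fun u => ?_) v hv) ?_
            · unfold Rf
              rw [if_neg hx, norm_mul, mul_assoc]
              gcongr
              exact hL _ u x
            · exact lev_bound hn ht0 (not_le.1 hx)
      _ = ENNReal.ofReal (L ^ 2 * ((Real.sqrt 2) ^ 3) ^ (p - 2) * t ^ (2 - p)) *
            ∫⁻ x, ENNReal.ofReal (‖α x‖ ^ p) := lintegral_const_mul' _ _ (by simp)
      _ ≤ ENNReal.ofReal (L ^ 2 * ((Real.sqrt 2) ^ 3) ^ (p - 2) * t ^ (2 - p)) * ENNReal.ofReal I := by gcongr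
      _ = _ := by
          rw [← ENNReal.ofReal_mul (by positivity), hQ]
          congr 1; ring
  obtain ⟨F, hF1, hF2⟩ := exists_finrank_of_HS (T - B) _ hHS k
  have h1 := sNum_le_aux T F k hF1
  have hk0 : (0:ℝ) < (k:ℝ) + 1 := by positivity
  have htp : t ^ p = ((k:ℝ) + 1)⁻¹ := by
    rw [ht, ← Real.rpow_mul hk0.le, ← Real.rpow_neg_one]
    congr 1; field_simp
  have e1 : Q * t ^ (2 - p) / ((k:ℝ) + 1) = Q * t ^ 2 := by
    rw [div_eq_mul_inv, ← htp, mul_assoc, ← Real.rpow_add ht0, ← Real.rpow_natCast]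
    congr 2; push_cast; ring
  rw [e1, Real.sqrt_mul hQ0, Real.sqrt_sq ht0.le] at hF2
  have h2 : ‖T - F‖ ≤ ‖B‖ + ‖T - B - F‖ := by
    have : T - F = B + (T - B - F) := by abel
    rw [this]; exact norm_add_le _ _
  linarith

lemma case_two [CompleteSpace K] (hn : 3 < n) (K₀ : K →L[ℂ] Hbd n)
    (hran : ∀ u : K, ∃ f : Bdy n → ℂ, ⇑(K₀ u) =ᵐ[(volume : Measure (Bdy n))] f ∧ MemH32B n f)
    (α : Bdy n → ℂ) (hα : MemLp α (ENNReal.ofReal (2 * (n:ℝ) / 3)) (volume : Measure (Bdy n)))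
    (T : K →L[ℂ] Hbd n)
    (hT : ∀ u : K, ⇑(T u) =ᵐ[(volume : Measure (Bdy n))] fun y => α y * (K₀ u) y) :
    ∃ C : ℝ, ∀ k : ℕ, sNum T k ≤ C * ((k : ℝ) + 1) ^ (-(1 / (2 * (n:ℝ) / 3))) := by
  have hn' : (3:ℝ) < n := by exact_mod_cast hn
  have hp0 : 0 < 2 * (n:ℝ) / 3 := by positivity
  set a := hα.1.mk α with ha
  have hae : α =ᵐ[volume] a := hα.1.ae_eq_mk
  have hm : Measurable a := hα.1.stronglyMeasurable_mk.measurable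
  have hI : ∫⁻ x, ENNReal.ofReal (‖a x‖ ^ (2 * (n:ℝ) / 3)) < ⊤ := by
    have h1 := lintegral_rpow_enorm_lt_top_of_eLpNorm_lt_top (by simpa using hp0) ENNReal.ofReal_ne_top hα.2
    rw [ENNReal.toReal_ofReal hp0.le] at h1
    refine lt_of_le_of_lt (le_of_eq ?_) h1
    refine lintegral_congr_ae ?_
    filter_upwards [hae] with x hx
    rw [hx, ← ofReal_norm, ENNReal.ofReal_rpow_of_nonneg (norm_nonneg _) hp0.le]
  refine case_two_core hn K₀ hran a hm _ ENNReal.toReal_nonneg (ENNReal.ofReal_toReal hI.ne).ge T fun u => ?_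
  filter_upwards [hT u, hae] with x h1 h2
  rw [h1, h2]

end CaseTwoB
end RobinHS

namespace RobinHS

theorem statement5 (n : ℕ) (hn : 1 ≤ n) (K : Type) [NormedAddCommGroup K]
    [InnerProductSpace ℂ K] [CompleteSpace K] (K₀ : K →L[ℂ] Hbd n)
    (hran : ∀ u : K, ∃ f : Bdy n → ℂ, ⇑(K₀ u) =ᵐ[(volume : Measure (Bdy n))] f ∧ MemH32B n f)
    (α : Bdy n → ℂ) (hα : MemLp α ⊤ (volume : Measure (Bdy n)))
    (hcase : HasCompactSupport α ∨
      (3 < n ∧ MemLp α (ENNReal.ofReal (2 * (n : ℝ) / 3)) (volume : Measure (Bdy n))))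
    (T : K →L[ℂ] Hbd n)
    (hT : ∀ u : K, ⇑(T u) =ᵐ[(volume : Measure (Bdy n))] fun y => α y * (K₀ u) y) :
    MemWeakSchatten (2 * (n : ℝ) / 3) T := by
  
  have hp : 0 < 2 * (n:ℝ) / 3 := by
    have : (0:ℝ) < n := by exact_mod_cast hn
    positivity
  obtain ⟨C, hC⟩ : ∃ C : ℝ, ∀ k : ℕ, sNum T k ≤ C * ((k : ℝ) + 1) ^ (-(1 / (2 * (n:ℝ) / 3))) := by
    rcases hcase with hs | ⟨h3, hα'⟩
    · exact case_one hn K₀ hran α hα hs T hT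
    · exact case_two h3 K₀ hran α hα' T hT
  exact memWeakSchatten_of_bound T _ hp C hC

end RobinHS
end
end
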